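/- Let φ be a meromorphic Jacobi form of weight k and index m with poles supported on S, all poles of order at most 2. Then: (1) h_{ℓ+2m} = h_ℓ for all ℓ ∈ ℤ, and for all τ ∈ ℍ and all z ∈ ℂ with z ≠ z_s for every s ∈ S one has φ(τ,z) = φ^F(τ,z) + ∑_{s ∈ S/ℤ²} ( D_s(τ)·A^s_m(τ,z) + E_s(τ)·B^s_m(τ,z) ); (2) the completed finite part φ̂^F(τ,z) := ∑_{ℓ=0}^{2m−1} ĥ_ℓ(τ)·θ_{m,ℓ}(τ,z), where ĥ_ℓ := h_ℓ − ∑_{s ∈ S/ℤ²} ( D_s·Θ^{s,*}_{m,ℓ} + m·E_s·ϑ^{s,*}_{m,ℓ} ), satisfies the weight-k index-m modular law for every element of SL(2,ℤ). -/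

import Mathlib

noncomputable section

open Complex Filter Topology MeasureTheory
open scoped Classical

/-- `ee x = e^{2πix}`. -/
def ee (x : ℂ) : ℂ := Complex.exp (2 * (Real.pi : ℂ) * Complex.I * x)

/-- The index-`m` elliptic transformation law on `ℍ × ℂ`. -/
def EllipticLaw (m : ℕ) (φ : ℂ → ℂ → ℂ) : Prop :=
  ∀ τ : ℂ, 0 < τ.im → ∀ z : ℂ, ∀ lam mu : ℤ,
    φ τ (z + (lam : ℂ) * τ + (mu : ℂ)) =
      ee (-(m : ℂ) * ((lam : ℂ) ^ 2 * τ + 2 * (lam : ℂ) * z)) * φ τ z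

/-- The weight-`k` index-`m` modular transformation law on `ℍ × ℂ`. -/
def ModularLaw (k : ℤ) (m : ℕ) (φ : ℂ → ℂ → ℂ) : Prop :=
  ∀ τ : ℂ, 0 < τ.im → ∀ z : ℂ, ∀ a b c d : ℤ, a * d - b * c = 1 →
    φ (((a : ℂ) * τ + (b : ℂ)) / ((c : ℂ) * τ + (d : ℂ))) (z / ((c : ℂ) * τ + (d : ℂ))) =
      ((c : ℂ) * τ + (d : ℂ)) ^ k *
        ee ((m : ℂ) * (c : ℂ) * z ^ 2 / ((c : ℂ) * τ + (d : ℂ))) * φ τ z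

/-- The theta function `θ_{m,ℓ}(τ,z) = ∑_{r ≡ ℓ (mod 2m)} q^{r²/4m} y^r`. -/
def jTheta (m : ℕ) (l : ℤ) (τ z : ℂ) : ℂ :=
  ∑' n : ℤ, ee (((l : ℂ) + 2 * (m : ℂ) * (n : ℂ)) ^ 2 / (4 * (m : ℂ)) * τ +
      ((l : ℂ) + 2 * (m : ℂ) * (n : ℂ)) * z)

/-- The point `z_s = ατ + β` for `s = (α,β) ∈ ℚ²`. -/
def zpt (s : ℚ × ℚ) (τ : ℂ) : ℂ := (s.1 : ℚ) * τ + (s.2 : ℚ)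

/-- A meromorphic Jacobi form of weight `k` and index `m` with poles supported on `S`. -/
structure MeroJacobiForm (k : ℤ) (m : ℕ) (S : Set (ℚ × ℚ)) where
  toFun : ℂ → ℂ → ℂ
  lattice_inv : ∀ s ∈ S, ∀ lam mu : ℤ, (s.1 + (lam : ℚ), s.2 + (mu : ℚ)) ∈ S
  sl_inv : ∀ s ∈ S, ∀ a b c d : ℤ, a * d - b * c = 1 →
      (s.1 * (a : ℚ) + s.2 * (c : ℚ), s.1 * (b : ℚ) + s.2 * (d : ℚ)) ∈ S
  finite_classes : Set.Finite {s : ℚ × ℚ | s ∈ S ∧ 0 ≤ s.1 ∧ s.1 < 1 ∧ 0 ≤ s.2 ∧ s.2 < 1}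
  elliptic : EllipticLaw m toFun
  modular : ModularLaw k m toFun
  holo : ∀ τ : ℂ, 0 < τ.im → ∀ z : ℂ, (∀ s ∈ S, z ≠ zpt s τ) →
      DifferentiableAt ℂ (fun p : ℂ × ℂ => toFun p.1 p.2) (τ, z)
  merom : ∀ τ : ℂ, 0 < τ.im → ∀ s ∈ S, ∃ (g : ℂ → ℂ) (nn : ℕ), AnalyticAt ℂ g (zpt s τ) ∧
      ∀ᶠ z in 𝓝[≠] (zpt s τ), toFun τ z = g z / (z - zpt s τ) ^ nn

/-- All poles of `Φ` have order at most 2. -/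
def HasAtMostDoublePoles {k : ℤ} {m : ℕ} {S : Set (ℚ × ℚ)} (Φ : MeroJacobiForm k m S) : Prop :=
  ∀ τ : ℂ, 0 < τ.im → ∀ s ∈ S, ∃ g : ℂ → ℂ, AnalyticAt ℂ g (zpt s τ) ∧
    ∀ᶠ z in 𝓝[≠] (zpt s τ), Φ.toFun τ z = g z / (z - zpt s τ) ^ 2

/-- `E s` and `D s` are the Laurent data of `φ` at `z_s`, i.e.
`e(mα z_s)·φ(τ, z_s+ε) = E_s(τ)/(2πiε)² + (D_s(τ) - 2mα·E_s(τ))/(2πiε) + O(1)` as `ε → 0`. -/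
def IsLaurentData (m : ℕ) (S : Set (ℚ × ℚ)) (φ : ℂ → ℂ → ℂ) (E D : ℚ × ℚ → ℂ → ℂ) : Prop :=
  ∀ s ∈ S, ∀ τ : ℂ, 0 < τ.im →
    Filter.Tendsto (fun ε : ℂ =>
        (2 * (Real.pi : ℂ) * Complex.I * ε) ^ 2 * ee ((m : ℂ) * (s.1 : ℚ) * zpt s τ) *
          φ τ (zpt s τ + ε))
      (𝓝[≠] (0 : ℂ)) (𝓝 (E s τ)) ∧
    Filter.Tendsto (fun ε : ℂ =>
        2 * (Real.pi : ℂ) * Complex.I * ε *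
          (ee ((m : ℂ) * (s.1 : ℚ) * zpt s τ) * φ τ (zpt s τ + ε) -
            E s τ / (2 * (Real.pi : ℂ) * Complex.I * ε) ^ 2))
      (𝓝[≠] (0 : ℂ)) (𝓝 (D s τ - 2 * (m : ℂ) * (s.1 : ℚ) * E s τ))

/-- All poles of `Φ` are simple (order at most 1). -/
def HasSimplePoles {k : ℤ} {m : ℕ} {S : Set (ℚ × ℚ)} (Φ : MeroJacobiForm k m S) : Prop :=
  ∀ τ : ℂ, 0 < τ.im → ∀ s ∈ S, ∃ g : ℂ → ℂ, AnalyticAt ℂ g (zpt s τ) ∧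
    ∀ᶠ z in 𝓝[≠] (zpt s τ), Φ.toFun τ z = g z / (z - zpt s τ)

/-- `h` is the family of canonical Fourier coefficients of `φ`:
`h_ℓ(τ) = q^{ℓ²/4m}·(1/2)·lim_{ε→0⁺} [∫₀¹ φ(τ, x+iε-ℓτ/2m) e(-ℓ(x+iε)) dx
  + ∫₀¹ φ(τ, x-iε-ℓτ/2m) e(-ℓ(x-iε)) dx]`. -/
def IsCanonCoeff (m : ℕ) (φ : ℂ → ℂ → ℂ) (h : ℤ → ℂ → ℂ) : Prop :=
  ∀ l : ℤ, ∀ τ : ℂ, 0 < τ.im →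
    Filter.Tendsto (fun ε : ℝ =>
        (1 / 2 : ℂ) *
          ((∫ x in (0:ℝ)..1,
              φ τ ((x : ℂ) + (ε : ℂ) * Complex.I - (l : ℂ) * τ / (2 * (m : ℂ))) *
                ee (-(l : ℂ) * ((x : ℂ) + (ε : ℂ) * Complex.I))) +
            ∫ x in (0:ℝ)..1,
              φ τ ((x : ℂ) - (ε : ℂ) * Complex.I - (l : ℂ) * τ / (2 * (m : ℂ))) *
                ee (-(l : ℂ) * ((x : ℂ) - (ε : ℂ) * Complex.I))))
      (𝓝[>] (0 : ℝ)) (𝓝 (ee (-(l : ℂ) ^ 2 * τ / (4 * (m : ℂ))) * h l τ))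

/-- `D s τ = 2πi·e(mα z_s)·Res_{z=z_s} φ(τ,z)`, characterized via the limit defining the
residue at a simple pole. -/
def IsResidueFactor (m : ℕ) (S : Set (ℚ × ℚ)) (φ : ℂ → ℂ → ℂ) (D : ℚ × ℚ → ℂ → ℂ) : Prop :=
  ∀ s ∈ S, ∀ τ : ℂ, 0 < τ.im →
    Filter.Tendsto (fun z : ℂ =>
        2 * (Real.pi : ℂ) * Complex.I * ee ((m : ℂ) * (s.1 : ℚ) * zpt s τ) *
          ((z - zpt s τ) * φ τ z))
      (𝓝[≠] (zpt s τ)) (𝓝 (D s τ))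

/-- The rational function `R_c`. -/
def Rc (c : ℝ) (y : ℂ) : ℂ :=
  if (⌈c⌉ : ℝ) = c then 1 / 2 * y ^ ⌈c⌉ * (y + 1) / (y - 1) else y ^ ⌈c⌉ / (y - 1)

/-- The index-`m` averaging operator `Av^{(m)}[F](τ,z) = ∑_{λ∈ℤ} q^{mλ²} y^{2mλ} F(q^λ y)`. -/
def Av (m : ℕ) (F : ℂ → ℂ) (τ z : ℂ) : ℂ :=
  ∑' lam : ℤ, ee ((m : ℂ) * (lam : ℂ) ^ 2 * τ + 2 * (m : ℂ) * (lam : ℂ) * z) *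
      F (ee ((lam : ℂ) * τ + z))

/-- The Appell–Lerch sum `A^s_m(τ,z) = e(-mα z_s)·Av^{(m)}[R_{-2mα}(y/y_s)]`. -/
def AppellA (m : ℕ) (s : ℚ × ℚ) (τ z : ℂ) : ℂ :=
  ee (-(m : ℂ) * (s.1 : ℚ) * zpt s τ) *
    Av m (fun w => Rc ((-(2 * (m : ℚ) * s.1) : ℚ) : ℝ) (w / ee (zpt s τ))) τ z

/-- The rational function `R_c^{(2)}(y) = y^{⌊c⌋+1}·(1/(y-1)² + (c-⌊c⌋)/(y-1))`. -/
def Rc2 (c : ℝ) (y : ℂ) : ℂ :=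
  y ^ (⌊c⌋ + 1) * (1 / (y - 1) ^ 2 + ((c : ℂ) - (⌊c⌋ : ℂ)) / (y - 1))

/-- The second Appell–Lerch sum `B^s_m(τ,z) = e(-mα z_s)·Av^{(m)}[R^{(2)}_{-2mα}(y/y_s)]`. -/
def AppellB (m : ℕ) (s : ℚ × ℚ) (τ z : ℂ) : ℂ :=
  ee (-(m : ℂ) * (s.1 : ℚ) * zpt s τ) *
    Av m (fun w => Rc2 ((-(2 * (m : ℚ) * s.1) : ℚ) : ℝ) (w / ee (zpt s τ))) τ z

/-- The finite part `φ^F(τ,z) = ∑_{ℓ=0}^{2m-1} h_ℓ(τ)·θ_{m,ℓ}(τ,z)`. -/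
def finitePart (m : ℕ) (h : ℤ → ℂ → ℂ) (τ z : ℂ) : ℂ :=
  ∑ l ∈ Finset.range (2 * m), h (l : ℤ) τ * jTheta m (l : ℤ) τ z

/-- `T` is a set of representatives for `S/ℤ²`. -/
def IsRepSet (S : Set (ℚ × ℚ)) (T : Finset (ℚ × ℚ)) : Prop :=
  (↑T : Set (ℚ × ℚ)) ⊆ S ∧
    ∀ s ∈ S, ∃! t : ℚ × ℚ, t ∈ T ∧ ∃ lam mu : ℤ, s.1 = t.1 + (lam : ℚ) ∧ s.2 = t.2 + (mu : ℚ)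

/-- The complementary error function. -/
def erfc (x : ℝ) : ℝ := 2 / Real.sqrt Real.pi * ∫ t in Set.Ioi x, Real.exp (-t ^ 2)

/-- The element `λ = n + α + ℓ/2m` of `ℤ + α + ℓ/2m`. -/
def lamVal (m : ℕ) (s : ℚ × ℚ) (l : ℤ) (n : ℤ) : ℝ :=
  (n : ℝ) + (s.1 : ℝ) + (l : ℝ) / (2 * (m : ℝ))

/-- The Eichler integral `Θ^{s,*}_{m,ℓ}(τ)` of the weight-3/2 unary theta series. -/
def ThStar (m : ℕ) (s : ℚ × ℚ) (l : ℤ) (τ : ℂ) : ℂ :=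
  ee ((m : ℂ) * (s.1 : ℚ) * (s.2 : ℚ)) / 2 *
    ∑' n : ℤ, (Real.sign (lamVal m s l n) : ℂ) *
      ee (-(2 * (m : ℂ) * (s.2 : ℚ) * (lamVal m s l n : ℝ))) *
      (erfc (2 * |lamVal m s l n| * Real.sqrt (Real.pi * (m : ℝ) * τ.im)) : ℂ) *
      ee (-(m : ℂ) * (lamVal m s l n : ℝ) ^ 2 * τ)

/-- The weight-1/2 unary theta series `ϑ^s_{m,ℓ}(τ)`. -/
def thS (m : ℕ) (s : ℚ × ℚ) (l : ℤ) (τ : ℂ) : ℂ :=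
  ee (-(m : ℂ) * (s.1 : ℚ) * (s.2 : ℚ)) *
    ∑' n : ℤ, ee (2 * (m : ℂ) * (s.2 : ℚ) * (lamVal m s l n : ℝ)) *
      ee ((m : ℂ) * (lamVal m s l n : ℝ) ^ 2 * τ)

/-- The Eichler integral `ϑ^{s,*}_{m,ℓ}(τ)` of the weight-1/2 unary theta series. -/
def thSstar (m : ℕ) (s : ℚ × ℚ) (l : ℤ) (τ : ℂ) : ℂ :=
  (starRingEnd ℂ) (thS m s l τ) / ((2 * Real.pi * Real.sqrt ((m : ℝ) * τ.im) : ℝ) : ℂ) -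
    ee ((m : ℂ) * (s.1 : ℚ) * (s.2 : ℚ)) *
      ∑' n : ℤ, (|lamVal m s l n| : ℝ) *
        ee (-(2 * (m : ℂ) * (s.2 : ℚ) * (lamVal m s l n : ℝ))) *
        (erfc (2 * |lamVal m s l n| * Real.sqrt (Real.pi * (m : ℝ) * τ.im)) : ℂ) *
        ee (-(m : ℂ) * (lamVal m s l n : ℝ) ^ 2 * τ)

/-!
Subtracting from `φ(τ, ·)` elliptic functions with the same principal parts leaves an elliptic
function with removable singularities, hence a combination of the `θ_{m,ℓ}` whose coefficients are
its canonical Fourier coefficients. This is done for two choices of such functions. For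
Appell–Lerch sums the canonical coefficients vanish, which gives the decomposition. For principal
parts damped by a Gaussian they are the Eichler integrals `Θ^{s,*}` and `ϑ^{s,*}`, so that `φ` minus
the damped sum is the completed finite part. The Gaussian is covariant under lattice translations
and under `SL(2,ℤ)`, so the damped sum runs over all poles of `φ` in a way that is invariant under
both; it therefore satisfies the modular law, and so does the completed finite part, first away from
the poles and then everywhere by continuity.
-/

/-! ### The exponential and Fourier coefficients along horizontal lines -/

lemma ee_add (x y : ℂ) : ee (x + y) = ee x * ee y := by
  simp only [ee, ← Complex.exp_add, mul_add]

lemma ee_zero : ee 0 = 1 := by simp [ee]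

lemma ee_ne_zero (x : ℂ) : ee x ≠ 0 := Complex.exp_ne_zero _

lemma ee_neg (x : ℂ) : ee (-x) = (ee x)⁻¹ := by
  simp only [ee, ← Complex.exp_neg, mul_neg]

lemma ee_sub (x y : ℂ) : ee (x - y) = ee x / ee y := by
  rw [sub_eq_add_neg, ee_add, ee_neg, div_eq_mul_inv]

lemma ee_zpow (x : ℂ) (n : ℤ) : ee x ^ n = ee (n * x) := by
  simp only [ee, ← Complex.exp_int_mul]; congr 1; ring

lemma ee_eq_one_iff (x : ℂ) : ee x = 1 ↔ ∃ n : ℤ, x = n := by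
  simp only [ee, Complex.exp_eq_one_iff, mul_comm _ (2 * (Real.pi : ℂ) * I),
    mul_right_inj' Complex.two_pi_I_ne_zero]

lemma ee_int (n : ℤ) : ee n = 1 := (ee_eq_one_iff _).2 ⟨n, rfl⟩

lemma ee_add_int (x : ℂ) (n : ℤ) : ee (x + n) = ee x := by
  rw [ee_add, ee_int, mul_one]

lemma norm_ee (x : ℂ) : ‖ee x‖ = Real.exp (-(2 * Real.pi * x.im)) := by
  rw [ee, Complex.norm_exp]
  simp

lemma norm_ee_lt_one_iff {x : ℂ} : ‖ee x‖ < 1 ↔ 0 < x.im := by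
  rw [norm_ee, Real.exp_lt_one_iff, neg_lt_zero, mul_pos_iff_of_pos_left Real.two_pi_pos]

lemma one_lt_norm_ee_iff {x : ℂ} : 1 < ‖ee x‖ ↔ x.im < 0 := by
  rw [norm_ee, Real.one_lt_exp_iff, neg_pos,
    ← smul_eq_mul, smul_neg_iff_of_pos_left Real.two_pi_pos]

lemma hasDerivAt_ee (x : ℂ) : HasDerivAt ee (2 * Real.pi * I * ee x) x := by
  have := ((hasDerivAt_id x).const_mul (2 * (Real.pi : ℂ) * I)).cexp
  rwa [mul_one, mul_comm (cexp _)] at this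

lemma differentiable_ee : Differentiable ℂ ee := fun x => (hasDerivAt_ee x).differentiableAt

lemma ee_int_mul_add_one (n : ℤ) (z : ℂ) : ee (n * (z + 1)) = ee (n * z) := by
  rw [mul_add, mul_one, ee_add_int]

/-- The `r`-th Fourier coefficient of a `1`-periodic function, computed along the horizontal
line through `w`. -/
def lineCoeff (F : ℂ → ℂ) (r : ℤ) (w : ℂ) : ℂ :=
  ∫ x in (0 : ℝ)..1, F (x + w) * ee (-r * (x + w))

/-- Integrability of `F` over one period of the horizontal line through `w`. -/
def LineIntegrable (F : ℂ → ℂ) (w : ℂ) : Prop :=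
  IntervalIntegrable (fun x : ℝ => F (x + w)) volume 0 1

lemma LineIntegrable.mul_continuous {F g : ℂ → ℂ} {w : ℂ} (hF : LineIntegrable F w)
    (hg : Continuous g) : IntervalIntegrable (fun x : ℝ => F (x + w) * g (x + w)) volume 0 1 :=
  IntervalIntegrable.mul_continuousOn hF (by fun_prop)

lemma continuous_ee_mul (a : ℂ) : Continuous fun z => ee (a * z) :=
  differentiable_ee.continuous.comp (continuous_const.mul continuous_id)

lemma lineCoeff_add {F G : ℂ → ℂ} {w : ℂ} (hF : LineIntegrable F w) (hG : LineIntegrable G w)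
    (r : ℤ) : lineCoeff (fun z => F z + G z) r w = lineCoeff F r w + lineCoeff G r w := by
  simp only [lineCoeff, add_mul]
  exact intervalIntegral.integral_add (hF.mul_continuous (continuous_ee_mul _))
    (hG.mul_continuous (continuous_ee_mul _))

lemma lineCoeff_const_mul (a : ℂ) (F : ℂ → ℂ) (r : ℤ) (w : ℂ) :
    lineCoeff (fun z => a * F z) r w = a * lineCoeff F r w := by
  simp only [lineCoeff, mul_assoc, intervalIntegral.integral_const_mul]

lemma hasSum_lineCoeff_tsum {ι : Type*} [Countable ι] {F : ι → ℂ → ℂ} {b : ι → ℝ} {w : ℂ}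
    (hF : ∀ i, ∀ x : ℝ, ContinuousAt (F i) (x + w)) (hb : Summable b)
    (hFb : ∀ i, ∀ x ∈ Set.uIoc (0 : ℝ) 1, ‖F i (x + w)‖ ≤ b i) (r : ℤ) :
    HasSum (fun i => lineCoeff (F i) r w) (lineCoeff (fun z => ∑' i, F i z) r w) := by
  have hnorm : ∀ x : ℝ, ‖ee (-r * (x + w))‖ = Real.exp (2 * Real.pi * (r * w.im)) := fun x => by
    rw [norm_ee]
    simp
  refine intervalIntegral.hasSum_integral_of_dominated_convergence
    (fun i _ => b i * Real.exp (2 * Real.pi * (r * w.im))) (fun i => ?_)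
    (fun i => .of_forall fun x hx => ?_) (.of_forall fun _ _ => hb.mul_right _)
    intervalIntegrable_const
    (.of_forall fun x hx => (Summable.of_norm_bounded hb (hFb · x hx)).hasSum.mul_right _)
  · refine Continuous.aestronglyMeasurable (continuous_iff_continuousAt.2 fun x => ?_)
    exact ((hF i x).comp' (f := fun x : ℝ => (x : ℂ) + w) (by fun_prop)).mul
      ((continuous_ee_mul _).continuousAt.comp' (by fun_prop))
  · rw [norm_mul, hnorm]
    exact mul_le_mul_of_nonneg_right (hFb i x hx) (Real.exp_nonneg _)

/-- Moving the base point inside the line is a translation of the period, moving the line is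
Cauchy's theorem on a rectangle whose vertical sides cancel. -/
lemma integral_line_eq_of_periodic {g : ℂ → ℂ} (hg : Differentiable ℂ g)
    (hp : Function.Periodic g 1) (w : ℂ) :
    ∫ x in (0 : ℝ)..1, g (x + w) = ∫ x in (0 : ℝ)..1, g x := by
  have horizontal : ∫ x in (0 : ℝ)..1, g (x + w) = ∫ x in (0 : ℝ)..1, g (x + w.im * I) := by
    have hper : Function.Periodic (fun x : ℝ => g (x + w.im * I)) 1 := fun x => by
      simpa [add_right_comm] using hp (x + w.im * I)
    have hshift : ∀ x : ℝ, g (x + w) = g ((x + w.re : ℝ) + w.im * I) := fun x => by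
      congr 1; conv_lhs => rw [← Complex.re_add_im w]
      push_cast; ring
    simp only [hshift]
    rw [intervalIntegral.integral_comp_add_right (fun x : ℝ => g (x + w.im * I))]
    simpa [add_comm] using hper.intervalIntegral_add_eq (0 + w.re) 0
  have vertical := Complex.integral_boundary_rect_eq_zero_of_differentiableOn g 0
    (1 + w.im * I) hg.differentiableOn
  have hsides : ∀ y : ℝ, g (1 + y * I) = g (y * I) := fun y => by rw [add_comm, hp]
  simp only [zero_re, zero_im, add_re, one_re, mul_re, ofReal_re, I_re, ofReal_im, I_im, mul_zero,
    mul_one, sub_self, add_zero, add_im, one_im, mul_im, zero_add, ofReal_zero, zero_mul,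
    ofReal_one, hsides, add_sub_cancel_right] at vertical
  rw [horizontal, ← sub_eq_zero.1 vertical]

lemma lineCoeff_eq_of_differentiable {g : ℂ → ℂ} (hg : Differentiable ℂ g)
    (hp : Function.Periodic g 1) (r : ℤ) (w₁ w₂ : ℂ) : lineCoeff g r w₁ = lineCoeff g r w₂ := by
  have hd : Differentiable ℂ fun z => g z * ee (-r * z) :=
    hg.mul (differentiable_ee.comp (differentiable_id.const_mul _))
  have hper : Function.Periodic (fun z => g z * ee (-r * z)) 1 := fun z => by
    simp only [hp z]; rw [← Int.cast_neg, ee_int_mul_add_one]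
  exact (integral_line_eq_of_periodic hd hper w₁).trans
    (integral_line_eq_of_periodic hd hper w₂).symm

/-- The Fourier expansion is that of the restriction of `g` to the line through `z`. -/
lemma hasSum_lineCoeff_mul_ee {g : ℂ → ℂ} (hg : Continuous g) (hp : Function.Periodic g 1) (z : ℂ)
    (hs : Summable fun r : ℤ => lineCoeff g r z * ee (r * z)) :
    HasSum (fun r : ℤ => lineCoeff g r z * ee (r * z)) (g z) := by
  have hper : Function.Periodic (fun x : ℝ => g (x + z)) 1 := fun x => by
    simpa [add_right_comm] using hp (x + z)
  have : Fact (0 < (1 : ℝ)) := ⟨one_pos⟩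
  have hcont : Continuous fun x : ℝ => g (x + z) := by fun_prop
  let F : C(AddCircle (1 : ℝ), ℂ) := ⟨hper.lift, continuous_coinduced_dom.mpr hcont⟩
  have hF : ∀ x : ℝ, F (x : AddCircle (1 : ℝ)) = g (x + z) := fun _ => rfl
  have hcoeff : fourierCoeff F = fun r => lineCoeff g r z * ee (r * z) := by
    funext r
    rw [fourierCoeff_eq_intervalIntegral _ _ 0, lineCoeff, ← intervalIntegral.integral_mul_const]
    simp only [one_div_one, one_smul, zero_add]
    refine intervalIntegral.integral_congr fun x _ => ?_
    have hexp : ee (-r * (x + z)) * ee (r * z) = ee (-r * x) := by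
      rw [← ee_add]; congr 1; ring
    simp only [smul_eq_mul, hF, fourier_coe_apply, mul_assoc (g _), hexp]
    rw [mul_comm, ee]
    congr 2; push_cast; ring
  have := has_pointwise_sum_fourier_series_of_summable (f := F) (by rwa [hcoeff]) ((0 : ℝ) :)
  simpa [-QuotientAddGroup.mk_zero, hF, hcoeff] using this

lemma lineCoeff_eq_of_hasSum {f : ℂ → ℂ} {c : ℤ → ℂ} {w : ℂ}
    (hf : ∀ x : ℝ, HasSum (fun k : ℤ => c k * ee (k * (x + w))) (f (x + w))) (r : ℤ) :
    lineCoeff f r w = c r := by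
  have hs : Summable fun k : ℤ => ‖c k * ee (k * w)‖ := by
    simpa only [ofReal_zero, zero_add] using (hf 0).summable.norm
  have hnorm : ∀ (k : ℤ) (x : ℝ), ‖c k * ee (k * (x + w)) * ee (-r * (x + w))‖ =
      ‖c k * ee (k * w)‖ * ‖ee (-r * w)‖ := fun k x => by
    simp only [norm_mul, norm_ee]
    simp
  have hint : ∀ k : ℤ, (∫ x in (0 : ℝ)..1, c k * ee (k * (x + w)) * ee (-r * (x + w))) =
      if k = r then c r else 0 := fun k => by
    have hexp : ∀ x : ℝ, c k * ee (k * (x + w)) * ee (-r * (x + w)) =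
        c k * ee ((k - r) * w) * Complex.exp ((2 * Real.pi * I * (k - r)) * x) := fun x => by
      rw [mul_assoc, ← ee_add, mul_assoc, show cexp ((2 * Real.pi * I * (k - r)) * x) =
        ee ((k - r) * x) by rw [ee, mul_assoc], ← ee_add]
      congr 2; ring
    simp only [hexp, intervalIntegral.integral_const_mul]
    split_ifs with hkr
    · simp [hkr, ee_zero]
    · have hne : (2 * Real.pi * I * (k - r) : ℂ) ≠ 0 :=
        mul_ne_zero two_pi_I_ne_zero (sub_ne_zero.2 (by exact_mod_cast hkr))
      have h1 : cexp (2 * Real.pi * I * (k - r)) = 1 := by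
        simpa [ee] using ee_int (k - r)
      rw [integral_exp_mul_complex hne]
      simp [h1]
  have hsum := intervalIntegral.hasSum_integral_of_dominated_convergence (a := (0 : ℝ)) (b := 1)
    (F := fun (k : ℤ) (x : ℝ) => c k * ee (k * (x + w)) * ee (-r * (x + w)))
    (f := fun x : ℝ => f (x + w) * ee (-r * (x + w))) (μ := volume)
    (fun k _ => ‖c k * ee (k * w)‖ * ‖ee (-r * w)‖)
    (fun k => Continuous.aestronglyMeasurable
      ((continuous_const.mul ((continuous_ee_mul _).comp (by fun_prop))).mul
        ((continuous_ee_mul _).comp (by fun_prop))))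
    (fun k => ae_of_all _ fun x _ => (hnorm k x).le)
    (ae_of_all _ fun _ _ => hs.mul_right _) intervalIntegrable_const
    (ae_of_all _ fun x _ => (hf x).mul_right _)
  simp only [hint] at hsum
  exact hsum.unique (hasSum_ite_eq r (c r))

/-! ### Elliptic functions, canonical coefficients and theta decomposition -/

/-- The index-`m` elliptic law in the variable `z`, for a fixed value of `τ`. -/
def IsElliptic (m : ℕ) (τ : ℂ) (F : ℂ → ℂ) : Prop :=
  ∀ z : ℂ, ∀ lam mu : ℤ, F (z + lam * τ + mu) = ee (-m * (lam ^ 2 * τ + 2 * lam * z)) * F z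

/-- `c` is the family of canonical Fourier coefficients of `F` for a fixed value of `τ`: the average
of the `l`-th Fourier coefficients of `F` just above and just below the line through `-lτ/2m` tends
to `q^{l²/4m} c_l`. -/
def HasCanonCoeff (m : ℕ) (τ : ℂ) (F : ℂ → ℂ) (c : ℤ → ℂ) : Prop :=
  ∀ l : ℤ, (∀ᶠ ε : ℝ in 𝓝[>] 0, LineIntegrable F (-(l * τ / (2 * m)) + ε * I) ∧
      LineIntegrable F (-(l * τ / (2 * m)) - ε * I)) ∧
    Tendsto (fun ε : ℝ => (1 / 2 : ℂ) * (lineCoeff F l (-(l * τ / (2 * m)) + ε * I) +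
      lineCoeff F l (-(l * τ / (2 * m)) - ε * I))) (𝓝[>] 0) (𝓝 (ee (l ^ 2 * τ / (4 * m)) * c l))

section Elliptic

variable {m : ℕ} {τ : ℂ} {F G : ℂ → ℂ} {c d : ℤ → ℂ}

lemma IsElliptic.add (hF : IsElliptic m τ F) (hG : IsElliptic m τ G) :
    IsElliptic m τ (fun z => F z + G z) := fun z lam mu => by
  simp only [hF z lam mu, hG z lam mu, mul_add]

lemma IsElliptic.const_mul (a : ℂ) (hF : IsElliptic m τ F) :
    IsElliptic m τ (fun z => a * F z) := fun z lam mu => by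
  simp only [hF z lam mu, mul_left_comm a]

lemma IsElliptic.sum {ι : Type*} (s : Finset ι) {F : ι → ℂ → ℂ}
    (hF : ∀ i ∈ s, IsElliptic m τ (F i)) : IsElliptic m τ (fun z => ∑ i ∈ s, F i z) :=
  fun z lam mu => by
    simp only [Finset.mul_sum]
    exact Finset.sum_congr rfl fun i hi => hF i hi z lam mu

lemma IsElliptic.periodic (hF : IsElliptic m τ F) : Function.Periodic F 1 := fun z => by
  simpa [ee_zero] using hF z 0 1

lemma IsElliptic.lineCoeff_add_two_mul (hF : IsElliptic m τ F) (l : ℤ) (w : ℂ) :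
    lineCoeff F (l + 2 * m) (w - τ) = ee ((l + m) * τ) * lineCoeff F l w := by
  simp only [lineCoeff, ← intervalIntegral.integral_const_mul]
  refine intervalIntegral.integral_congr fun x _ => ?_
  have hshift : F (x + (w - τ)) = ee (-m * (τ - 2 * (x + w))) * F (x + w) := by
    convert hF (x + w) (-1) 0 using 2 <;> push_cast <;> ring_nf
  have hexp : ee (-m * (τ - 2 * (x + w))) * ee (-(l + 2 * m : ℤ) * (x + (w - τ))) =
      ee ((l + m) * τ) * ee (-l * (x + w)) := by
    rw [← ee_add, ← ee_add]; congr 1; push_cast; ring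
  simp only [hshift]
  linear_combination F (x + w) * hexp

lemma HasCanonCoeff.add (hF : HasCanonCoeff m τ F c) (hG : HasCanonCoeff m τ G d) :
    HasCanonCoeff m τ (fun z => F z + G z) (fun l => c l + d l) := fun l => by
  obtain ⟨hFi, hFl⟩ := hF l
  obtain ⟨hGi, hGl⟩ := hG l
  refine ⟨?_, ?_⟩
  · filter_upwards [hFi, hGi] with ε hF hG using ⟨hF.1.add hG.1, hF.2.add hG.2⟩
  · rw [mul_add]
    refine (hFl.add hGl).congr' ?_
    filter_upwards [hFi, hGi] with ε hF hG
    rw [lineCoeff_add hF.1 hG.1, lineCoeff_add hF.2 hG.2]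
    ring

lemma HasCanonCoeff.const_mul (a : ℂ) (hF : HasCanonCoeff m τ F c) :
    HasCanonCoeff m τ (fun z => a * F z) (fun l => a * c l) := fun l => by
  refine ⟨(hF l).1.mono fun ε h => ⟨h.1.const_mul a, h.2.const_mul a⟩, ?_⟩
  simp only [lineCoeff_const_mul, ← mul_add, mul_left_comm _ a]
  exact (hF l).2.const_mul a

lemma HasCanonCoeff.zero (m : ℕ) (τ : ℂ) : HasCanonCoeff m τ (fun _ => 0) (fun _ => 0) :=
  fun l => by simp [LineIntegrable, lineCoeff]

lemma HasCanonCoeff.sum {ι : Type*} (s : Finset ι) {F : ι → ℂ → ℂ} {c : ι → ℤ → ℂ}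
    (h : ∀ i ∈ s, HasCanonCoeff m τ (F i) (c i)) :
    HasCanonCoeff m τ (fun z => ∑ i ∈ s, F i z) (fun l => ∑ i ∈ s, c i l) := by
  induction s using Finset.induction_on with
  | empty => simpa using HasCanonCoeff.zero m τ
  | insert a s ha ih =>
    simp_rw [Finset.sum_insert ha]
    exact (h a (Finset.mem_insert_self _ _)).add
      (ih fun i hi => h i (Finset.mem_insert_of_mem hi))

lemma HasCanonCoeff.add_two_mul (hm : m ≠ 0) (hF : IsElliptic m τ F)
    (hc : HasCanonCoeff m τ F c) (l : ℤ) : c (l + 2 * m) = c l := by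
  have hm' : (m : ℂ) ≠ 0 := Nat.cast_ne_zero.2 hm
  have hbase : ∀ e : ℂ, -((l + 2 * m : ℤ) * τ / (2 * m)) + e = -(l * τ / (2 * m)) + e - τ :=
    fun e => by push_cast; field_simp; ring
  have hlim := (hc (l + 2 * m)).2
  simp only [sub_eq_add_neg _ (_ * I), hbase, hF.lineCoeff_add_two_mul, ← mul_add,
    mul_left_comm (1 / 2 : ℂ)] at hlim
  have hlim' := ((hc l).2).const_mul (ee ((l + m) * τ))
  simp only [sub_eq_add_neg _ (_ * I)] at hlim'
  have heq := tendsto_nhds_unique hlim hlim'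
  rw [← mul_assoc, ← ee_add, show (l + m) * τ + l ^ 2 * τ / (4 * m) =
    ((l + 2 * m : ℤ) : ℂ) ^ 2 * τ / (4 * m) by push_cast; field_simp; ring] at heq
  exact mul_left_cancel₀ (ee_ne_zero _) heq

end Elliptic

lemma exists_differentiable_eqOn_compl {H : ℂ → ℂ} {Z : Set ℂ}
    (hZ : ∀ z, ∀ᶠ z' in 𝓝[≠] z, z' ∉ Z) (hd : ∀ z ∉ Z, DifferentiableAt ℂ H z)
    (hr : ∀ p ∈ Z, Tendsto (fun z => (z - p) * H z) (𝓝[≠] p) (𝓝 0)) :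
    ∃ G : ℂ → ℂ, Differentiable ℂ G ∧ Set.EqOn G H Zᶜ := by
  have hlim : ∀ z ∉ Z, limUnder (𝓝[≠] z) H = H z := fun z hz =>
    ((hd z hz).continuousAt.continuousWithinAt.tendsto).limUnder_eq
  refine ⟨fun z => limUnder (𝓝[≠] z) H, fun z => ?_, hlim⟩
  obtain ⟨U, hU, hUZ⟩ : ∃ U ∈ 𝓝 z, ∀ z' ∈ U, z' ≠ z → z' ∉ Z :=
    ⟨_, eventually_nhdsWithin_iff.1 (hZ z), fun _ h hne => h hne⟩
  by_cases hz : z ∈ Z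
  · have hdU : DifferentiableOn ℂ H (U \ {z}) := fun z' hz' =>
      (hd z' (hUZ z' hz'.1 hz'.2)).differentiableWithinAt
    have ho : (fun z' => H z' - H z) =o[𝓝[≠] z] fun z' => (z' - z)⁻¹ := by
      have hsub : Tendsto (fun z' => (z' - z) * H z) (𝓝[≠] z) (𝓝 0) :=
        (Continuous.tendsto' (by fun_prop) _ _ (by simp)).mono_left nhdsWithin_le_nhds
      rw [Asymptotics.isLittleO_iff_tendsto']
      · refine (((hr z hz).sub hsub).congr fun z' => ?_).trans_eq (by rw [sub_zero])
        rw [div_inv_eq_mul]; ring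
      · filter_upwards [self_mem_nhdsWithin] with z' hz' h0
        exact absurd h0 (inv_ne_zero (sub_ne_zero.2 hz'))
    have hupdate := Complex.differentiableOn_update_limUnder_of_isLittleO hU hdU ho
    refine ((hupdate z (mem_of_mem_nhds hU)).differentiableAt hU).congr_of_eventuallyEq ?_
    filter_upwards [hU] with z' hz'
    rcases eq_or_ne z' z with rfl | hne
    · simp
    · rw [Function.update_of_ne hne]; exact hlim z' (hUZ z' hz' hne)
  · refine (hd z hz).congr_of_eventuallyEq ?_
    filter_upwards [hU] with z' hz'
    rcases eq_or_ne z' z with rfl | hne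
    exacts [hlim _ hz, hlim z' (hUZ z' hz' hne)]

lemma lineCoeff_congr_of_countable {F G : ℂ → ℂ} {Z : Set ℂ} (hZ : Z.Countable)
    (hFG : Set.EqOn F G Zᶜ) (r : ℤ) (w : ℂ) : lineCoeff F r w = lineCoeff G r w := by
  refine intervalIntegral.integral_congr_ae ?_
  have hinj : Function.Injective fun x : ℝ => (x : ℂ) + w := fun x y hxy => by simpa using hxy
  filter_upwards [(hZ.preimage hinj).ae_notMem volume] with x hx _
  rw [hFG hx]

lemma periodic_of_eqOn_compl {F G : ℂ → ℂ} {Z : Set ℂ} (hZ : Z.Countable) (hG : Continuous G)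
    (hGF : Set.EqOn G F Zᶜ) (hF : Function.Periodic F 1) : Function.Periodic G 1 := by
  have hdense : Dense (Z ∪ (· + 1) ⁻¹' Z)ᶜ :=
    (hZ.union (hZ.preimage (add_left_injective (1 : ℂ)))).dense_compl ℂ
  refine congrFun (Continuous.ext_on (f := fun z => G (z + 1)) hdense (by fun_prop) hG
    fun z hz => ?_)
  obtain ⟨hz, hz'⟩ := not_or.1 hz
  rw [hGF hz, ← hF z]
  exact hGF hz'

section Theta

variable {m : ℕ} {τ : ℂ}

lemma jTheta_term_eq (hm : m ≠ 0) (l n : ℤ) (z : ℂ) :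
    ee ((l + 2 * m * n) ^ 2 / (4 * m) * τ + (l + 2 * m * n) * z) =
      ee (l ^ 2 / (4 * m) * τ + l * z) * jacobiTheta₂_term n (2 * m * z + l * τ) (2 * m * τ) := by
  have hm' : (m : ℂ) ≠ 0 := Nat.cast_ne_zero.2 hm
  rw [jacobiTheta₂_term, ee, ee, ← Complex.exp_add]
  congr 1
  field_simp
  ring

lemma im_two_mul_pos (hm : m ≠ 0) (hτ : 0 < τ.im) : 0 < (2 * m * τ).im := by
  have : (2 * m * τ).im = 2 * m * τ.im := by simp
  rw [this]; positivity

lemma summable_jTheta_term (hm : m ≠ 0) (hτ : 0 < τ.im) (l : ℤ) (z : ℂ) :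
    Summable fun n : ℤ => ee ((l + 2 * m * n) ^ 2 / (4 * m) * τ + (l + 2 * m * n) * z) := by
  simp only [jTheta_term_eq hm]
  exact ((summable_jacobiTheta₂_term_iff _ _).2 (im_two_mul_pos hm hτ)).mul_left _

lemma jTheta_eq_jacobiTheta₂ (hm : m ≠ 0) (l : ℤ) (z : ℂ) :
    jTheta m l τ z =
      ee (l ^ 2 / (4 * m) * τ + l * z) * jacobiTheta₂ (2 * m * z + l * τ) (2 * m * τ) := by
  simp only [jTheta, jTheta_term_eq hm, tsum_mul_left, jacobiTheta₂]

lemma differentiable_jTheta (hm : m ≠ 0) (hτ : 0 < τ.im) (l : ℤ) :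
    Differentiable ℂ (jTheta m l τ) := by
  rw [funext (jTheta_eq_jacobiTheta₂ (τ := τ) hm l)]
  refine (differentiable_ee.comp (by fun_prop)).mul fun z => ?_
  exact (differentiableAt_jacobiTheta₂_fst _ (im_two_mul_pos hm hτ)).comp z (by fun_prop)

lemma hasSum_theta_terms (hm : m ≠ 0) (hτ : 0 < τ.im) {c : ℤ → ℂ}
    (hc : ∀ l, c (l + 2 * m) = c l) (z : ℂ) :
    HasSum (fun r : ℤ => c r * ee (r ^ 2 / (4 * m) * τ + r * z))
      (∑ l ∈ Finset.range (2 * m), c l * jTheta m l τ z) := by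
  have : NeZero (2 * m) := ⟨by positivity⟩
  have hper : ∀ l n : ℤ, c (l + n * (2 * m)) = c l := fun l n =>
    Function.Periodic.int_mul (f := c) hc n l
  rw [← (Int.divModEquiv (2 * m)).symm.hasSum_iff, Finset.sum_range fun l : ℕ =>
    c l * jTheta m l τ z]
  have hterm : ((fun r : ℤ => c r * ee (r ^ 2 / (4 * m) * τ + r * z)) ∘
      (Int.divModEquiv (2 * m)).symm) = fun p : ℤ × Fin (2 * m) => c (p.2 : ℕ) *
        ee (((p.2 : ℕ) + 2 * m * p.1) ^ 2 / (4 * m) * τ + ((p.2 : ℕ) + 2 * m * p.1) * z) := by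
    funext ⟨n, l⟩
    have hr : (Int.divModEquiv (2 * m)).symm (n, l) = (l : ℕ) + n * (2 * m) := by
      simp [Int.divModEquiv, add_comm]
    simp only [Function.comp_apply, hr, hper]
    push_cast
    simp only [mul_comm (n : ℂ)]
  rw [hterm, ← (Equiv.prodComm _ _).hasSum_iff]
  have hfiber : ∀ l : Fin (2 * m), HasSum (fun n : ℤ => c (l : ℕ) *
      ee (((l : ℕ) + 2 * m * n) ^ 2 / (4 * m) * τ + ((l : ℕ) + 2 * m * n) * z))
      (c (l : ℕ) * jTheta m (l : ℕ) τ z) := fun l => by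
    simpa only [jTheta, Int.cast_natCast] using
      (summable_jTheta_term hm hτ (l : ℕ) z).hasSum.mul_left (c (l : ℕ))
  have hsummable : Summable fun p : Fin (2 * m) × ℤ => c (p.1 : ℕ) *
      ee (((p.1 : ℕ) + 2 * m * p.2) ^ 2 / (4 * m) * τ + ((p.1 : ℕ) + 2 * m * p.2) * z) := by
    refine Summable.of_norm ((summable_prod_of_nonneg fun _ => norm_nonneg _).2
      ⟨fun l => (hfiber l).summable.norm, Summable.of_finite⟩)
  rw [(hasSum_fintype _).unique (hsummable.hasSum.prod_fiberwise hfiber)]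
  exact hsummable.hasSum

/-- The entire extension of `F` has a Fourier series with coefficients `q^{r²/4m} c_r`, and
`c_r` depends only on `r` mod `2m`. -/
theorem eq_sum_mul_jTheta (hm : m ≠ 0) (hτ : 0 < τ.im) {F : ℂ → ℂ} {c : ℤ → ℂ} {Z : Set ℂ}
    (hF : IsElliptic m τ F) (hc : HasCanonCoeff m τ F c) (hcount : Z.Countable)
    (hZ : ∀ z, ∀ᶠ z' in 𝓝[≠] z, z' ∉ Z) (hd : ∀ z ∉ Z, DifferentiableAt ℂ F z)
    (hr : ∀ p ∈ Z, Tendsto (fun z => (z - p) * F z) (𝓝[≠] p) (𝓝 0)) {z : ℂ} (hz : z ∉ Z) :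
    F z = ∑ l ∈ Finset.range (2 * m), c l * jTheta m l τ z := by
  obtain ⟨G, hG, hGF⟩ := exists_differentiable_eqOn_compl hZ hd hr
  have hGp := periodic_of_eqOn_compl hcount hG.continuous hGF hF.periodic
  have hcoeff : ∀ (r : ℤ) (w : ℂ), lineCoeff G r w = ee (r ^ 2 * τ / (4 * m)) * c r := by
    intro r w
    refine tendsto_nhds_unique ?_ (hc r).2
    simp only [← lineCoeff_congr_of_countable hcount hGF,
      lineCoeff_eq_of_differentiable hG hGp r _ w, ← two_mul, ← mul_assoc]
    simp
  have hsum := hasSum_theta_terms hm hτ (hc.add_two_mul hm hF) z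
  have hseries : ∀ r : ℤ, lineCoeff G r z * ee (r * z) =
      c r * ee (r ^ 2 / (4 * m) * τ + r * z) := fun r => by
    rw [hcoeff, ee_add, div_mul_eq_mul_div]; ring
  rw [← hGF hz]
  refine (hasSum_lineCoeff_mul_ee hG.continuous hGp z ?_).unique ?_
  · simpa only [hseries] using hsum.summable
  · simpa only [hseries] using hsum

end Theta

/-! ### Double poles and lattices -/

/-- `f` has the polar behaviour `e/(2πi(z-u))² + d/(2πi(z-u)) + o(1/(z-u))` at `u`. -/
def HasPrincipalPart (f : ℂ → ℂ) (u e d : ℂ) : Prop :=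
  Tendsto (fun z => 2 * Real.pi * I * (z - u) * (f z - e / (2 * Real.pi * I * (z - u)) ^ 2))
    (𝓝[≠] u) (𝓝 d)

namespace HasPrincipalPart

variable {f g : ℂ → ℂ} {u e d e' d' : ℂ}

lemma comp_add_right_iff (w : ℂ) :
    HasPrincipalPart (fun z => f (z + w)) u e d ↔ HasPrincipalPart f (u + w) e d := by
  rw [HasPrincipalPart, HasPrincipalPart, ← map_add_right_nhdsNE, tendsto_map'_iff]
  simp only [Function.comp_def, add_sub_add_right_eq_sub]

lemma comp_sub (hf : HasPrincipalPart f 0 e d) (u : ℂ) :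
    HasPrincipalPart (fun z => f (z - u)) u e d := by
  rw [← sub_self u, sub_eq_add_neg u] at hf
  simpa only [sub_eq_add_neg] using (comp_add_right_iff (-u)).2 hf

lemma comp_add_div (hf : HasPrincipalPart f u e d) {v j : ℂ} (hj : j ≠ 0) {w : ℂ}
    (hw : (v + w) / j = u) :
    HasPrincipalPart (fun z => f ((z + w) / j)) v (j ^ 2 * e) (j * d) := by
  have hsub (z : ℂ) : (z + w) / j - u = (z - v) / j := by rw [← hw]; ring
  have hmap : Tendsto (fun z => (z + w) / j) (𝓝[≠] v) (𝓝[≠] u) := by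
    refine tendsto_nhdsWithin_iff.2 ⟨?_, eventually_nhdsWithin_of_forall fun z hz => ?_⟩
    · exact (Continuous.tendsto' (by fun_prop) v u hw).mono_left nhdsWithin_le_nhds
    · exact sub_ne_zero.1 (hsub z ▸ div_ne_zero (sub_ne_zero.2 hz) hj)
  refine ((hf.comp hmap).const_mul j).congr fun z => ?_
  simp only [Function.comp_apply, hsub]
  field_simp

lemma unique (hf : HasPrincipalPart f u e d) (hf' : HasPrincipalPart f u e' d') :
    e = e' ∧ d = d' := by
  suffices he : e = e' from ⟨he, tendsto_nhds_unique hf (he ▸ hf')⟩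
  have hid : Tendsto (fun z => 2 * Real.pi * I * (z - u)) (𝓝[≠] u) (𝓝 0) :=
    (Continuous.tendsto' (by fun_prop) u 0 (by simp)).mono_left nhdsWithin_le_nhds
  have hlim := hid.mul (Tendsto.sub hf' hf)
  rw [zero_mul] at hlim
  refine sub_eq_zero.1 (tendsto_nhds_unique (tendsto_const_nhds.congr' ?_) hlim)
  filter_upwards [self_mem_nhdsWithin] with z (hz : z ≠ u)
  have := two_pi_I_ne_zero
  have := sub_ne_zero.2 hz
  field_simp
  ring

lemma congr' (hf : HasPrincipalPart f u e d) (h : f =ᶠ[𝓝[≠] u] g) : HasPrincipalPart g u e d :=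
  Tendsto.congr' (h.mono fun z hz => by simp only [hz]) hf

lemma add (hf : HasPrincipalPart f u e d) (hg : HasPrincipalPart g u e' d') :
    HasPrincipalPart (fun z => f z + g z) u (e + e') (d + d') :=
  (Tendsto.add hf hg).congr fun z => by ring

lemma const_mul (a : ℂ) (hf : HasPrincipalPart f u e d) :
    HasPrincipalPart (fun z => a * f z) u (a * e) (a * d) :=
  (Tendsto.const_mul a hf).congr fun z => by ring

lemma of_continuousAt (hf : ContinuousAt f u) : HasPrincipalPart f u 0 0 := by
  have hcont : ContinuousAt (fun z => 2 * Real.pi * I * (z - u) * f z) u := by fun_prop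
  simpa [HasPrincipalPart, ContinuousAt] using tendsto_nhdsWithin_of_tendsto_nhds hcont.tendsto

lemma sum {ι : Type*} (s : Finset ι) {f : ι → ℂ → ℂ} {e d : ι → ℂ}
    (h : ∀ i ∈ s, HasPrincipalPart (f i) u (e i) (d i)) :
    HasPrincipalPart (fun z => ∑ i ∈ s, f i z) u (∑ i ∈ s, e i) (∑ i ∈ s, d i) := by
  induction s using Finset.induction_on with
  | empty => simpa using of_continuousAt (u := u) (f := fun _ => 0) continuousAt_const
  | insert a s ha ih =>
    simp_rw [Finset.sum_insert ha]
    exact (h a (Finset.mem_insert_self _ _)).add (ih fun i hi => h i (Finset.mem_insert_of_mem hi))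

lemma mul_hasDerivAt (hf : HasPrincipalPart f u e d) {g' : ℂ} (hg : HasDerivAt g g' u) :
    HasPrincipalPart (fun z => g z * f z) u (g u * e) (g u * d + e * g' / (2 * Real.pi * I)) := by
  have hcont : Tendsto g (𝓝[≠] u) (𝓝 (g u)) := hg.continuousAt.continuousWithinAt
  have hlim := (hcont.mul hf).add ((hg.tendsto_slope.const_mul e).div_const (2 * Real.pi * I))
  refine hlim.congr' ?_
  filter_upwards [self_mem_nhdsWithin] with z (hz : z ≠ u)
  have := two_pi_I_ne_zero
  have := sub_ne_zero.2 hz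
  rw [slope_def_field]
  field_simp
  ring

lemma tendsto_sub_mul (hf : HasPrincipalPart f u 0 0) :
    Tendsto (fun z => (z - u) * f z) (𝓝[≠] u) (𝓝 0) := by
  have hlim := Tendsto.const_mul (2 * Real.pi * I)⁻¹ hf
  rw [mul_zero] at hlim
  refine hlim.congr fun z => ?_
  have := two_pi_I_ne_zero
  field_simp
  ring

lemma tsum {ι : Type*} {F : ι → ℂ → ℂ} {b : ι → ℝ} {U : Set ℂ} (hU : U ∈ 𝓝 u) (i₀ : ι)
    (hF : HasPrincipalPart (F i₀) u e d) (hc : ∀ i ≠ i₀, ContinuousOn (F i) U)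
    (hb : Summable b) (hFb : ∀ i ≠ i₀, ∀ z ∈ U, ‖F i z‖ ≤ b i) :
    HasPrincipalPart (fun z => ∑' i, F i z) u e d := by
  have hrest : ContinuousOn (fun z => ∑' i, if i = i₀ then 0 else F i z) U := by
    refine continuousOn_tsum (fun i => ?_) hb.abs fun i z hz => ?_ <;> by_cases hi : i = i₀
    · simpa [hi] using continuousOn_const
    · simpa [hi] using hc i hi
    · simp [hi]
    · simpa [hi] using (hFb i hi z hz).trans (le_abs_self _)
  have hsplit := hF.add (of_continuousAt (hrest.continuousAt hU))
  rw [add_zero, add_zero] at hsplit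
  refine hsplit.congr' (nhdsWithin_le_nhds ?_)
  filter_upwards [hU] with z hz
  refine (Summable.tsum_eq_add_tsum_ite' (f := fun i => F i z) i₀ ?_).symm
  refine Summable.of_norm_bounded hb.abs fun i => ?_
  by_cases hi : i = i₀
  · simp [hi]
  · simpa [hi] using (hFb i hi z hz).trans (le_abs_self _)

end HasPrincipalPart

lemma IsElliptic.hasPrincipalPart_zero_add {m : ℕ} {τ u : ℂ} {F : ℂ → ℂ} (hF : IsElliptic m τ F)
    (hu : HasPrincipalPart F u 0 0) (lam mu : ℤ) :
    HasPrincipalPart F (u + lam * τ + mu) 0 0 := by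
  have hderiv : DifferentiableAt ℂ (fun z => ee (-m * (lam ^ 2 * τ + 2 * lam * z))) u :=
    differentiable_ee.differentiableAt.comp u (by fun_prop)
  rw [add_assoc, ← HasPrincipalPart.comp_add_right_iff]
  simpa only [← hF _ lam mu, add_assoc, mul_zero, zero_mul, zero_div, add_zero] using
    hu.mul_hasDerivAt hderiv.hasDerivAt

/-- The coset `u + ℤτ + ℤ`. -/
def latticeCoset (τ u : ℂ) : Set ℂ := {z | ∃ lam mu : ℤ, z = u + lam * τ + mu}

section Lattice

variable {τ : ℂ}

lemma countable_latticeCoset (τ u : ℂ) : (latticeCoset τ u).Countable := by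
  refine (Set.countable_range fun n : ℤ × ℤ => u + n.1 * τ + n.2).mono ?_
  rintro _ ⟨lam, mu, rfl⟩
  exact ⟨(lam, mu), rfl⟩

lemma isClosed_of_subset_latticeCoset (hτ : 0 < τ.im) {u : ℂ} {s : Set ℂ}
    (hs : s ⊆ latticeCoset τ u) : IsClosed s := by
  have hind : LinearIndependent ℝ ![1, τ] := by
    rw [LinearIndependent.pair_iff]
    intro a b hab
    have hb : b = 0 := by simpa [hτ.ne'] using congrArg im hab
    exact ⟨by simpa [hb] using congrArg re hab, hb⟩
  let L : PeriodPair := ⟨1, τ, hind⟩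
  have hclosed : IsClosed ((fun z => z + u) ⁻¹' s) := by
    refine L.isClosed_of_subset_lattice fun z hz => ?_
    obtain ⟨lam, mu, h⟩ := hs hz
    exact PeriodPair.mem_lattice.2 ⟨mu, lam, by simp only [L]; linear_combination -h⟩
  simpa [Set.preimage_preimage] using hclosed.preimage (continuous_sub_right u)

lemma exists_forall_le_norm_of_ne_zero (hτ : 0 < τ.im) (w : ℂ) :
    ∃ δ > 0, ∀ lam n : ℤ, lam * τ + w - n ≠ 0 → δ ≤ ‖lam * τ + w - n‖ := by
  have hclosed : IsClosed (latticeCoset τ w \ {0}) :=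
    isClosed_of_subset_latticeCoset hτ Set.sdiff_subset
  obtain ⟨δ, hδ, hball⟩ := Metric.isOpen_iff.1 hclosed.isOpen_compl 0 (by simp)
  refine ⟨δ, hδ, fun lam n hne => not_lt.1 fun hlt => ?_⟩
  exact hball (mem_ball_zero_iff.2 hlt) ⟨⟨lam, -n, by push_cast; ring⟩, hne⟩

lemma eq_of_mul_add_eq (hτ : 0 < τ.im) {w : ℂ} {lam lam' n n' : ℤ}
    (h : lam * τ + w - n = 0) (h' : lam' * τ + w - n' = 0) : lam = lam' := by
  have him := congrArg im (h.trans h'.symm)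
  simpa [hτ.ne'] using him

end Lattice

/-! ### Averages of polar kernels -/

/-- The term of index `lam` of the index-`m` average of a function `f` of period `1`. -/
def ellipticAverageTerm (m : ℕ) (τ : ℂ) (f : ℂ → ℂ) (lam : ℤ) (z : ℂ) : ℂ :=
  ee (m * lam ^ 2 * τ + 2 * m * lam * z) * f (lam * τ + z)

/-- The averaging operator `Av^{(m)}` in the additive variable `z`, for a fixed value of `τ`. -/
def ellipticAverage (m : ℕ) (τ : ℂ) (f : ℂ → ℂ) (z : ℂ) : ℂ :=
  ∑' lam : ℤ, ellipticAverageTerm m τ f lam z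

/-- A function of period `1`, holomorphic off `u + ℤ`, whose growth in the imaginary direction is
mild enough for its index-`m` average to converge, and whose `r`-th Fourier coefficient is `cp r`
above the line through `u` and `cm r` below it. -/
structure IsPolarKernel (m : ℕ) (τ u : ℂ) (f : ℂ → ℂ) (cp cm : ℤ → ℂ) : Prop where
  periodic : Function.Periodic f 1
  differentiableAt : ∀ z, (∀ n : ℤ, z - u ≠ n) → DifferentiableAt ℂ f z
  growth : ∀ δ > 0, ∃ C K : ℝ, ∀ z, (∀ n : ℤ, δ ≤ ‖z - u - n‖) →
    ‖f z‖ ≤ C * Real.exp (Real.pi * m * (z - u).im ^ 2 / τ.im + K * |(z - u).im|)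
  lineCoeff_above : ∀ r w, u.im < w.im → lineCoeff f r w = cp r
  lineCoeff_below : ∀ r w, w.im < u.im → lineCoeff f r w = cm r

/-- The average of the one-sided values `cp` and `cm` seen at signed height `y`. -/
def midCoeff (y : ℝ) (cp cm : ℂ) : ℂ :=
  if 0 < y then cp else if y < 0 then cm else (cp + cm) / 2

lemma midCoeff_mul_right (y : ℝ) (cp cm a : ℂ) :
    midCoeff y (cp * a) (cm * a) = midCoeff y cp cm * a := by
  unfold midCoeff
  split_ifs <;> ring

/-- The contribution of the frequency `r` of a polar kernel to the canonical Fourier coefficients of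
its average. -/
def canonTerm (m : ℕ) (τ u : ℂ) (cp cm : ℤ → ℂ) (r : ℤ) : ℂ :=
  ee (-(r ^ 2 * τ / (4 * m))) * midCoeff ((-(r * τ / (2 * m)) - u).im) (cp r) (cm r)

lemma summable_exp_neg_mul_sq_add_abs {a : ℝ} (ha : 0 < a) (M : ℝ) :
    Summable fun n : ℤ => Real.exp (-a * n ^ 2 + M * |(n : ℝ)|) := by
  have hT : 0 < a / Real.pi := by positivity
  have hsum := summable_pow_mul_jacobiTheta₂_term_bound (M / (2 * Real.pi)) hT 0
  refine hsum.congr fun n => ?_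
  rw [pow_zero, one_mul]
  congr 1
  have := Real.pi_ne_zero
  push_cast
  field_simp
  ring

lemma exists_forall_le_abs_add_int (a : ℝ) :
    ∃ δ > 0, ∀ n : ℤ, a + n ≠ 0 → δ ≤ |a + n| := by
  have hclosed : IsClosed ((fun n : ℤ => (n : ℝ)) '' {n | a + n ≠ 0}) :=
    Int.isClosedEmbedding_coe_real.isClosedMap _ (isClosed_discrete _)
  obtain ⟨δ, hδ, hball⟩ := Metric.isOpen_iff.1 hclosed.isOpen_compl (-a) (by
    rintro ⟨n, hn, h⟩
    exact hn (by simp only at h; linarith))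
  refine ⟨δ, hδ, fun n hn => not_lt.1 fun hlt => hball (a := (n : ℝ)) ?_ ⟨n, hn, rfl⟩⟩
  rwa [Metric.mem_ball, Real.dist_eq, sub_neg_eq_add, add_comm]

lemma exists_forall_le_abs_im {τ : ℂ} (hτ : 0 < τ.im) (w : ℂ) :
    ∃ δ > 0, ∀ lam : ℤ, (lam * τ + w).im ≠ 0 → δ ≤ |(lam * τ + w).im| := by
  obtain ⟨δ, hδ, hgap⟩ := exists_forall_le_abs_add_int (w.im / τ.im)
  have him : ∀ lam : ℤ, (lam * τ + w).im = (w.im / τ.im + lam) * τ.im := fun lam => by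
    simp only [add_im, mul_im, intCast_re, intCast_im]
    field_simp
    ring
  refine ⟨δ * τ.im, mul_pos hδ hτ, fun lam hne => ?_⟩
  rw [him] at hne ⊢
  rw [abs_mul, abs_of_pos hτ]
  gcongr
  exact hgap lam (left_ne_zero_of_mul hne)

section Average

variable {m : ℕ} {τ u w : ℂ} {f : ℂ → ℂ} {cp cm : ℤ → ℂ}

lemma isElliptic_ellipticAverage (hf : Function.Periodic f 1) :
    IsElliptic m τ (ellipticAverage m τ f) := by
  intro z lam mu
  rw [ellipticAverage, ellipticAverage, ← (Equiv.addRight lam).tsum_eq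
    fun n => ellipticAverageTerm m τ f n z, ← tsum_mul_left]
  refine tsum_congr fun n => ?_
  have hshift : f (n * τ + (z + lam * τ + mu)) = f ((n + lam : ℤ) * τ + z) := by
    rw [← hf.int_mul mu ((n + lam : ℤ) * τ + z)]
    push_cast
    ring_nf
  simp only [ellipticAverageTerm, Equiv.coe_addRight, hshift, ← mul_assoc, ← ee_add]
  rw [← ee_add_int (_ + _) (-(2 * m * n * mu))]
  congr 2
  push_cast
  ring

lemma lineCoeff_ellipticAverageTerm (hm : m ≠ 0) (lam l : ℤ) (w : ℂ) :
    lineCoeff (ellipticAverageTerm m τ f lam) l w =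
      ee (l ^ 2 * τ / (4 * m)) * (ee (-((l - 2 * m * lam : ℤ) ^ 2 * τ / (4 * m))) *
        lineCoeff f (l - 2 * m * lam) (lam * τ + w)) := by
  have hm' : (m : ℂ) ≠ 0 := Nat.cast_ne_zero.2 hm
  simp only [lineCoeff, ← intervalIntegral.integral_const_mul]
  refine intervalIntegral.integral_congr fun x _ => ?_
  have hexp : ee (m * lam ^ 2 * τ + 2 * m * lam * (x + w)) * ee (-l * (x + w)) =
      ee (l ^ 2 * τ / (4 * m)) * (ee (-((l - 2 * m * lam : ℤ) ^ 2 * τ / (4 * m))) *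
        ee (-(l - 2 * m * lam : ℤ) * (x + (lam * τ + w)))) := by
    simp only [← ee_add]
    congr 1
    push_cast
    field_simp
    ring
  simp only [ellipticAverageTerm, add_left_comm (lam * τ) (x : ℂ) w]
  linear_combination f (x + (lam * τ + w)) * hexp

/-- The quadratic growth `πm y²/τ₂` allowed in the kernel is half of the decay of the weights
`q^{mλ²}`, so that a Gaussian remains. -/
lemma ellipticAverage_exponent_le {m t v y R s K lam : ℝ} (hm : 0 ≤ m) (ht : 0 < t) (hv : |v| ≤ R)
    (hy : |y| ≤ R) (hsv : 2 * s - v = y) :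
    -(2 * Real.pi * (m * lam ^ 2 * t + 2 * m * lam * s)) +
      (Real.pi * m * (lam * t + v) ^ 2 / t + K * |lam * t + v|) ≤
    (Real.pi * m * R ^ 2 / t + |K| * R) +
      (-(Real.pi * m * t) * lam ^ 2 + (2 * Real.pi * m * R + |K| * t) * |lam|) := by
  have hpm : 0 ≤ Real.pi * m := by positivity
  have hsq : Real.pi * m * v ^ 2 / t ≤ Real.pi * m * R ^ 2 / t :=
    div_le_div_of_nonneg_right (mul_le_mul_of_nonneg_left
      (sq_le_sq.2 (hv.trans (le_abs_self R))) hpm) ht.le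
  have hlin : -(2 * Real.pi * m * (lam * y)) ≤ 2 * Real.pi * m * R * |lam| := by
    have : -(lam * y) ≤ |lam| * R := (neg_le_abs _).trans (by rw [abs_mul]; gcongr)
    nlinarith
  have habs : K * |lam * t + v| ≤ |K| * (|lam| * t + R) := by
    refine mul_le_mul (le_abs_self K) ((abs_add_le _ _).trans ?_) (abs_nonneg _) (abs_nonneg _)
    rw [abs_mul, abs_of_pos ht]
    gcongr
  have hexpand : Real.pi * m * (lam * t + v) ^ 2 / t =
      Real.pi * m * t * lam ^ 2 + 2 * Real.pi * m * (lam * v) + Real.pi * m * v ^ 2 / t := by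
    field_simp
    ring
  rw [hexpand]
  subst hsv
  linarith

lemma IsPolarKernel.exists_summable_bound (hm : m ≠ 0) (hτ : 0 < τ.im)
    (hf : IsPolarKernel m τ u f cp cm) (R : ℝ) {δ : ℝ} (hδ : 0 < δ) :
    ∃ b : ℤ → ℝ, Summable b ∧ ∀ z, |z.im| ≤ R → ∀ lam : ℤ,
      (∀ n : ℤ, δ ≤ ‖lam * τ + z - u - n‖) → ‖ellipticAverageTerm m τ f lam z‖ ≤ b lam := by
  obtain ⟨C, K, hCK⟩ := hf.growth δ hδ
  have hm₀ : (0 : ℝ) < m := Nat.cast_pos.2 (Nat.pos_of_ne_zero hm)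
  have hdecay : 0 < Real.pi * m * τ.im := mul_pos (mul_pos Real.pi_pos hm₀) hτ
  set Y := R + |u.im|
  refine ⟨_, (summable_exp_neg_mul_sq_add_abs hdecay
    (2 * Real.pi * m * Y + |K| * τ.im)).mul_left (|C| * Real.exp
      (Real.pi * m * Y ^ 2 / τ.im + |K| * Y)), fun z hz lam hlam => ?_⟩
  have him : (lam * τ + z - u).im = lam * τ.im + (z.im - u.im) := by
    simp only [sub_im, add_im, mul_im, intCast_re, intCast_im]
    ring
  have hweight : (m * lam ^ 2 * τ + 2 * m * lam * z).im =
      m * lam ^ 2 * τ.im + 2 * m * lam * z.im := by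
    rw [show m * lam ^ 2 * τ + 2 * m * lam * z =
      ((m * lam ^ 2 : ℝ) : ℂ) * τ + ((2 * m * lam : ℝ) : ℂ) * z by push_cast; ring]
    simp only [add_im, im_ofReal_mul]
  have hv : |z.im - u.im| ≤ Y := (abs_sub _ _).trans (add_le_add hz le_rfl)
  have hy : |z.im + u.im| ≤ Y := (abs_add_le _ _).trans (add_le_add hz le_rfl)
  have hbound := hCK _ hlam
  rw [him] at hbound
  rw [ellipticAverageTerm, norm_mul, norm_ee, hweight, mul_assoc |C|, ← Real.exp_add]
  calc _ ≤ Real.exp (-(2 * Real.pi * (m * lam ^ 2 * τ.im + 2 * m * lam * z.im))) *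
        (|C| * Real.exp (Real.pi * m * (lam * τ.im + (z.im - u.im)) ^ 2 / τ.im +
          K * |lam * τ.im + (z.im - u.im)|)) := by
        gcongr
        exact hbound.trans (by gcongr; exact le_abs_self C)
    _ ≤ _ := by
        rw [mul_left_comm, ← Real.exp_add]
        exact mul_le_mul_of_nonneg_left (Real.exp_le_exp.2
          (ellipticAverage_exponent_le hm₀.le hτ hv hy (by ring))) (abs_nonneg C)

lemma IsPolarKernel.differentiableAt_ellipticAverageTerm (hf : IsPolarKernel m τ u f cp cm)
    {lam : ℤ} {z : ℂ} (hz : ∀ n : ℤ, lam * τ + z - u - n ≠ 0) :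
    DifferentiableAt ℂ (ellipticAverageTerm m τ f lam) z := by
  refine (differentiable_ee.differentiableAt.comp z (by fun_prop)).mul ?_
  exact (hf.differentiableAt _ fun n => sub_ne_zero.1 (hz n)).comp z (by fun_prop)

lemma IsPolarKernel.exists_nhds_summable_bound (hm : m ≠ 0) (hτ : 0 < τ.im)
    (hf : IsPolarKernel m τ u f cp cm) (z₀ : ℂ) :
    ∃ ρ > 0, ∃ b : ℤ → ℝ, Summable b ∧
      ∀ lam : ℤ, (∀ n : ℤ, lam * τ + (z₀ - u) - n ≠ 0) → ∀ z ∈ Metric.ball z₀ ρ,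
        DifferentiableAt ℂ (ellipticAverageTerm m τ f lam) z ∧
          ‖ellipticAverageTerm m τ f lam z‖ ≤ b lam := by
  obtain ⟨δ, hδ, hsep⟩ := exists_forall_le_norm_of_ne_zero hτ (z₀ - u)
  obtain ⟨b, hb, hbound⟩ := hf.exists_summable_bound hm hτ (|z₀.im| + δ / 2) (half_pos hδ)
  refine ⟨δ / 2, half_pos hδ, b, hb, fun lam hlam z hz => ?_⟩
  rw [mem_ball_iff_norm] at hz
  have hfar : ∀ n : ℤ, δ / 2 ≤ ‖lam * τ + z - u - n‖ := fun n => by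
    have htri := norm_sub_norm_le (lam * τ + (z₀ - u) - n) (z₀ - z)
    rw [norm_sub_rev z₀ z, show lam * τ + (z₀ - u) - n - (z₀ - z) = lam * τ + z - u - n by ring]
      at htri
    linarith [hsep lam n (hlam n)]
  have him : |z.im| ≤ |z₀.im| + δ / 2 := by
    have := abs_im_le_norm (z - z₀)
    rw [sub_im] at this
    linarith [abs_sub_abs_le_abs_sub z.im z₀.im]
  refine ⟨hf.differentiableAt_ellipticAverageTerm fun n h => ?_, hbound z him lam hfar⟩
  have := hfar n
  rw [h, norm_zero] at this
  linarith

lemma IsPolarKernel.differentiableAt_ellipticAverage (hm : m ≠ 0) (hτ : 0 < τ.im)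
    (hf : IsPolarKernel m τ u f cp cm) {z : ℂ} (hz : z ∉ latticeCoset τ u) :
    DifferentiableAt ℂ (ellipticAverage m τ f) z := by
  obtain ⟨ρ, hρ, b, hb, hterm⟩ := hf.exists_nhds_summable_bound hm hτ z
  have hreg : ∀ lam n : ℤ, lam * τ + (z - u) - n ≠ 0 := fun lam n h =>
    hz ⟨-lam, n, by push_cast; linear_combination h⟩
  exact (differentiableOn_tsum_of_summable_norm hb
    (fun lam z' hz' => (hterm lam (hreg lam) z' hz').1.differentiableWithinAt) Metric.isOpen_ball
    fun lam z' hz' => (hterm lam (hreg lam) z' hz').2).differentiableAt (Metric.ball_mem_nhds z hρ)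

lemma IsPolarKernel.hasPrincipalPart_ellipticAverage (hm : m ≠ 0) (hτ : 0 < τ.im)
    (hf : IsPolarKernel m τ u f cp cm) {e d : ℂ} (hu : HasPrincipalPart f u e d) :
    HasPrincipalPart (ellipticAverage m τ f) u e d := by
  obtain ⟨ρ, hρ, b, hb, hterm⟩ := hf.exists_nhds_summable_bound hm hτ u
  have hreg : ∀ lam : ℤ, lam ≠ 0 → ∀ n : ℤ, lam * τ + (u - u) - n ≠ 0 := fun lam hlam n h =>
    hlam (eq_of_mul_add_eq hτ h (n' := 0) (lam' := 0) (by simp))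
  refine HasPrincipalPart.tsum (Metric.ball_mem_nhds u hρ) 0 ?_ (fun lam hlam z hz =>
    (hterm lam (hreg lam hlam) z hz).1.continuousAt.continuousWithinAt) hb
    fun lam hlam z hz => (hterm lam (hreg lam hlam) z hz).2
  exact hu.congr' (.of_forall fun z => by simp [ellipticAverageTerm, ee_zero])

lemma IsPolarKernel.lineIntegrable_ellipticAverage (hm : m ≠ 0) (hτ : 0 < τ.im)
    (hf : IsPolarKernel m τ u f cp cm) (hw : ∀ lam : ℤ, (lam * τ + w - u).im ≠ 0) :
    LineIntegrable (ellipticAverage m τ f) w := by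
  refine Continuous.intervalIntegrable (continuous_iff_continuousAt.2 fun x => ?_) _ _
  refine ContinuousAt.comp' (f := fun x : ℝ => (x : ℂ) + w)
    (hf.differentiableAt_ellipticAverage hm hτ ?_).continuousAt (by fun_prop)
  rintro ⟨lam, mu, h⟩
  refine hw (-lam) ?_
  rw [show ((-lam : ℤ) * τ + w - u) = ((mu - x : ℝ) : ℂ) by push_cast; linear_combination h,
    ofReal_im]

lemma IsPolarKernel.hasSum_lineCoeff_ellipticAverageTerm (hm : m ≠ 0) (hτ : 0 < τ.im)
    (hf : IsPolarKernel m τ u f cp cm) (hw : ∀ lam : ℤ, (lam * τ + w - u).im ≠ 0) (l : ℤ) :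
    HasSum (fun lam => lineCoeff (ellipticAverageTerm m τ f lam) l w)
      (lineCoeff (ellipticAverage m τ f) l w) := by
  obtain ⟨δ, hδ, hgap⟩ := exists_forall_le_abs_im hτ (w - u)
  have hfar : ∀ (x : ℝ) (lam n : ℤ), δ ≤ ‖lam * τ + (x + w) - u - n‖ := fun x lam n => by
    have him : (lam * τ + (x + w) - u - n).im = (lam * τ + (w - u)).im := by simp; ring
    have hne : (lam * τ + (w - u)).im ≠ 0 := by simpa only [add_sub_assoc] using hw lam
    exact (hgap lam hne).trans (him ▸ abs_im_le_norm _)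
  obtain ⟨b, hb, hbound⟩ := hf.exists_summable_bound hm hτ |w.im| hδ
  have him : ∀ x : ℝ, |((x : ℂ) + w).im| ≤ |w.im| := fun x => by simp
  refine hasSum_lineCoeff_tsum (fun lam x => ?_) hb
    (fun lam x _ => hbound _ (him x) lam (hfar x lam)) l
  refine (hf.differentiableAt_ellipticAverageTerm fun n h => ?_).continuousAt
  have hpos := hfar x lam n
  rw [h, norm_zero] at hpos
  linarith

lemma IsPolarKernel.lineCoeff_add_lineCoeff (hf : IsPolarKernel m τ u f cp cm) (r : ℤ) {ε : ℝ}
    (hε : 0 < ε) (hw : (w - u).im ≠ 0 → ε < |(w - u).im|) :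
    lineCoeff f r (w + ε * I) + lineCoeff f r (w - ε * I) =
      2 * midCoeff (w - u).im (cp r) (cm r) := by
  have hplus : (w + ε * I).im = (w - u).im + u.im + ε := by simp
  have hminus : (w - ε * I).im = (w - u).im + u.im - ε := by simp
  rw [midCoeff]
  split_ifs with hpos hneg
  · have := hw hpos.ne'
    rw [abs_of_pos hpos] at this
    rw [hf.lineCoeff_above _ _ (by linarith), hf.lineCoeff_above _ _ (by linarith)]
    ring
  · have := hw hneg.ne
    rw [abs_of_neg hneg] at this
    rw [hf.lineCoeff_below _ _ (by linarith), hf.lineCoeff_below _ _ (by linarith)]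
    ring
  · rw [hf.lineCoeff_above _ _ (by linarith), hf.lineCoeff_below _ _ (by linarith)]
    ring

lemma IsPolarKernel.lineCoeff_ellipticAverageTerm_add (hm : m ≠ 0)
    (hf : IsPolarKernel m τ u f cp cm) (lam l : ℤ) {ε : ℝ} (hε : 0 < ε)
    (hgap : (lam * τ + (-(l * τ / (2 * m)) - u)).im ≠ 0 →
      ε < |(lam * τ + (-(l * τ / (2 * m)) - u)).im|) :
    lineCoeff (ellipticAverageTerm m τ f lam) l (-(l * τ / (2 * m)) + ε * I) +
        lineCoeff (ellipticAverageTerm m τ f lam) l (-(l * τ / (2 * m)) - ε * I) =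
      2 * ee (l ^ 2 * τ / (4 * m)) * canonTerm m τ u cp cm (l - 2 * m * lam) := by
  have hm' : (m : ℂ) ≠ 0 := Nat.cast_ne_zero.2 hm
  have hpt : (-((l - 2 * m * lam : ℤ) * τ / (2 * m)) - u) =
      lam * τ + (-(l * τ / (2 * m)) - u) := by
    push_cast
    field_simp
    ring
  have hsum := hf.lineCoeff_add_lineCoeff (l - 2 * m * lam) hε
    (w := lam * τ + -(l * τ / (2 * m))) (by rwa [add_sub_assoc])
  rw [lineCoeff_ellipticAverageTerm hm, lineCoeff_ellipticAverageTerm hm, canonTerm, hpt,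
    ← add_sub_assoc (lam * τ), ← add_assoc, ← add_sub_assoc]
  linear_combination ee (l ^ 2 * τ / (4 * m)) *
    ee (-((l - 2 * m * lam : ℤ) ^ 2 * τ / (4 * m))) * hsum

lemma IsPolarKernel.exists_forall_hasSum_canonTerm (hm : m ≠ 0) (hτ : 0 < τ.im)
    (hf : IsPolarKernel m τ u f cp cm) (l : ℤ) :
    ∃ δ > 0, ∀ ε : ℝ, 0 < ε ∧ ε < δ →
      (LineIntegrable (ellipticAverage m τ f) (-(l * τ / (2 * m)) + ε * I) ∧
        LineIntegrable (ellipticAverage m τ f) (-(l * τ / (2 * m)) - ε * I)) ∧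
      HasSum (fun n : ℤ => 2 * ee (l ^ 2 * τ / (4 * m)) * canonTerm m τ u cp cm (l + 2 * m * n))
        (lineCoeff (ellipticAverage m τ f) l (-(l * τ / (2 * m)) + ε * I) +
          lineCoeff (ellipticAverage m τ f) l (-(l * τ / (2 * m)) - ε * I)) := by
  obtain ⟨δ, hδ, hgap⟩ := exists_forall_le_abs_im hτ (-(l * τ / (2 * m)) - u)
  have hoff : ∀ ε : ℝ, ε ≠ 0 → |ε| < δ → ∀ lam : ℤ,
      (lam * τ + (-(l * τ / (2 * m)) + ε * I) - u).im ≠ 0 := fun ε hε hεδ lam h => by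
    have him : (lam * τ + (-(l * τ / (2 * m)) - u)).im = -ε := by
      simp only [add_im, sub_im, im_ofReal_mul, I_im] at h ⊢
      linarith
    have := hgap lam (by rwa [him, neg_ne_zero])
    rw [him, abs_neg] at this
    linarith
  refine ⟨δ, hδ, fun ε hε => ?_⟩
  have hpos := hoff ε hε.1.ne' (by rw [abs_of_pos hε.1]; exact hε.2)
  have hneg : ∀ lam : ℤ, (lam * τ + (-(l * τ / (2 * m)) - ε * I) - u).im ≠ 0 := by
    simpa [sub_eq_add_neg] using
      hoff (-ε) (neg_ne_zero.2 hε.1.ne') (by rw [abs_neg, abs_of_pos hε.1]; exact hε.2)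
  refine ⟨⟨hf.lineIntegrable_ellipticAverage hm hτ hpos,
    hf.lineIntegrable_ellipticAverage hm hτ hneg⟩, ?_⟩
  have hsum := (hf.hasSum_lineCoeff_ellipticAverageTerm hm hτ hpos l).add
    (hf.hasSum_lineCoeff_ellipticAverageTerm hm hτ hneg l)
  simp only [hf.lineCoeff_ellipticAverageTerm_add hm _ l hε.1
    fun hne => hε.2.trans_le (hgap _ hne)] at hsum
  rw [← (Equiv.neg ℤ).hasSum_iff] at hsum
  simpa only [Function.comp_def, Equiv.neg_apply, mul_neg, sub_neg_eq_add] using hsum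

lemma IsPolarKernel.summable_canonTerm (hm : m ≠ 0) (hτ : 0 < τ.im)
    (hf : IsPolarKernel m τ u f cp cm) (l : ℤ) :
    Summable fun n : ℤ => canonTerm m τ u cp cm (l + 2 * m * n) := by
  obtain ⟨δ, hδ, hsum⟩ := hf.exists_forall_hasSum_canonTerm hm hτ l
  exact (summable_mul_left_iff (mul_ne_zero two_ne_zero (ee_ne_zero _))).1
    (hsum (δ / 2) ⟨half_pos hδ, half_lt_self hδ⟩).2.summable

theorem IsPolarKernel.hasCanonCoeff_ellipticAverage (hm : m ≠ 0) (hτ : 0 < τ.im)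
    (hf : IsPolarKernel m τ u f cp cm) :
    HasCanonCoeff m τ (ellipticAverage m τ f)
      (fun l => ∑' n : ℤ, canonTerm m τ u cp cm (l + 2 * m * n)) := by
  intro l
  obtain ⟨δ, hδ, hsum⟩ := hf.exists_forall_hasSum_canonTerm hm hτ l
  have hsmall : ∀ᶠ ε : ℝ in 𝓝[>] 0, 0 < ε ∧ ε < δ := Ioo_mem_nhdsGT hδ
  refine ⟨hsmall.mono fun ε hε => (hsum ε hε).1,
    tendsto_const_nhds.congr' (hsmall.mono fun ε hε => ?_)⟩
  beta_reduce
  rw [← (hsum ε hε).2.tsum_eq, tsum_mul_left]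
  ring

/-- `X` is elliptic, its poles are the points of `u + ℤτ + ℤ` and are at most double, with
coefficients `e` and `d` at `u`, and its canonical Fourier coefficients are `c`. -/
structure IsPolarPart (m : ℕ) (τ u : ℂ) (X : ℂ → ℂ) (e d : ℂ) (c : ℤ → ℂ) : Prop where
  isElliptic : IsElliptic m τ X
  differentiableAt : ∀ z ∉ latticeCoset τ u, DifferentiableAt ℂ X z
  hasPrincipalPart : HasPrincipalPart X u e d
  hasCanonCoeff : HasCanonCoeff m τ X c

lemma IsPolarPart.const_mul {X : ℂ → ℂ} {e d : ℂ} {c : ℤ → ℂ} (hX : IsPolarPart m τ u X e d c)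
    (a : ℂ) : IsPolarPart m τ u (fun z => a * X z) (a * e) (a * d) (fun l => a * c l) where
  isElliptic := hX.isElliptic.const_mul a
  differentiableAt z hz := (hX.differentiableAt z hz).const_mul a
  hasPrincipalPart := hX.hasPrincipalPart.const_mul a
  hasCanonCoeff := hX.hasCanonCoeff.const_mul a

lemma IsPolarPart.add {X Y : ℂ → ℂ} {e d e' d' : ℂ} {c c' : ℤ → ℂ}
    (hX : IsPolarPart m τ u X e d c) (hY : IsPolarPart m τ u Y e' d' c') :
    IsPolarPart m τ u (fun z => X z + Y z) (e + e') (d + d') (fun l => c l + c' l) where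
  isElliptic := hX.isElliptic.add hY.isElliptic
  differentiableAt z hz := (hX.differentiableAt z hz).add (hY.differentiableAt z hz)
  hasPrincipalPart := hX.hasPrincipalPart.add hY.hasPrincipalPart
  hasCanonCoeff := hX.hasCanonCoeff.add hY.hasCanonCoeff

lemma IsPolarKernel.isPolarPart (hm : m ≠ 0) (hτ : 0 < τ.im) (hf : IsPolarKernel m τ u f cp cm)
    {e d : ℂ} (hu : HasPrincipalPart f u e d) :
    IsPolarPart m τ u (ellipticAverage m τ f) e d
      (fun l => ∑' n : ℤ, canonTerm m τ u cp cm (l + 2 * m * n)) where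
  isElliptic := isElliptic_ellipticAverage hf.periodic
  differentiableAt _ hz := hf.differentiableAt_ellipticAverage hm hτ hz
  hasPrincipalPart := hf.hasPrincipalPart_ellipticAverage hm hτ hu
  hasCanonCoeff := hf.hasCanonCoeff_ellipticAverage hm hτ

end Average

/-! ### Rational kernels and Appell–Lerch sums -/

/-- The rational functions `yⁿ(a₀ + a₁/(y-1) + a₂/(y-1)²)`, which comprise the functions `R_c` and
`R_c^{(2)}`. The first two terms share a denominator so that the junk value at `y = 1` is that of
`R_c`. -/
def polarRational (n : ℤ) (a₀ a₁ a₂ y : ℂ) : ℂ :=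
  y ^ n * ((a₀ * (y - 1) + a₁) / (y - 1) + a₂ / (y - 1) ^ 2)

/-- The Laurent coefficients of `polarRational n a₀ a₁ a₂` in the disc `|y| < 1`, that is above the
real line in the variable `z` with `y = e(z)`. -/
def polarRationalAbove (n : ℤ) (a₀ a₁ a₂ : ℂ) (r : ℤ) : ℂ :=
  (if r = n then a₀ else 0) + if n ≤ r then -a₁ + a₂ * (r - n + 1) else 0

/-- The Laurent coefficients of `polarRational n a₀ a₁ a₂` in the region `|y| > 1`. -/
def polarRationalBelow (n : ℤ) (a₀ a₁ a₂ : ℂ) (r : ℤ) : ℂ :=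
  (if r = n then a₀ else 0) + if r < n then a₁ - a₂ * (r - n + 1) else 0

section Rational

variable {n : ℤ} {a₀ a₁ a₂ y : ℂ}

lemma polarRational_of_ne (hy : y - 1 ≠ 0) :
    polarRational n a₀ a₁ a₂ y = y ^ n * (a₀ + a₁ / (y - 1) + a₂ / (y - 1) ^ 2) := by
  rw [polarRational, add_div, mul_div_cancel_right₀ _ hy]

lemma hasSum_ite_eq_mul_zpow (n : ℤ) (a y : ℂ) :
    HasSum (fun r : ℤ => (if r = n then a else 0) * y ^ r) (y ^ n * a) := by
  convert hasSum_single n fun r hr => ?_ using 1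
  · simp [mul_comm]
  · simp [hr]

lemma hasSum_polarRationalAbove (hy₀ : y ≠ 0) (hy : ‖y‖ < 1) :
    HasSum (fun r : ℤ => polarRationalAbove n a₀ a₁ a₂ r * y ^ r)
      (polarRational n a₀ a₁ a₂ y) := by
  have hy₁ : 1 - y ≠ 0 := sub_ne_zero.2 fun h => by simp [← h] at hy
  have hy₁' : y - 1 ≠ 0 := by rwa [← neg_ne_zero, neg_sub]
  have hinj : Function.Injective fun k : ℕ => n + (k : ℤ) :=
    fun i j h => by simpa using h
  have hsum : HasSum (fun r : ℤ => (if n ≤ r then -a₁ + a₂ * (r - n + 1) else 0) * y ^ r)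
      (y ^ n * (a₁ / (y - 1) + a₂ / (y - 1) ^ 2)) := by
    have hseries := (((hasSum_geometric_of_norm_lt_one hy).mul_left (-a₁)).add
      ((hasSum_choose_mul_geometric_of_norm_lt_one 1 hy).mul_left a₂)).mul_left (y ^ n)
    have hvalue : y ^ n * (-a₁ * (1 - y)⁻¹ + a₂ * (1 / (1 - y) ^ (1 + 1))) =
        y ^ n * (a₁ / (y - 1) + a₂ / (y - 1) ^ 2) := by
      rw [← neg_sub y 1]
      field_simp
      ring
    rw [hvalue] at hseries
    rw [← hinj.hasSum_iff fun r hr => ?_]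
    · refine hseries.congr_fun fun k => ?_
      simp [zpow_add₀ hy₀]
      ring
    · rw [if_neg fun h => hr ⟨(r - n).toNat, by simp; lia⟩, zero_mul]
  simpa only [polarRational_of_ne hy₁', polarRationalAbove, add_mul, mul_add, add_assoc] using
    (hasSum_ite_eq_mul_zpow n a₀ y).add hsum

lemma hasSum_polarRationalBelow (hy : 1 < ‖y‖) :
    HasSum (fun r : ℤ => polarRationalBelow n a₀ a₁ a₂ r * y ^ r)
      (polarRational n a₀ a₁ a₂ y) := by
  have hy₀ : y ≠ 0 := norm_pos_iff.1 (one_pos.trans hy)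
  have hy₁ : y - 1 ≠ 0 := sub_ne_zero.2 fun h => by simp [h] at hy
  have hinv : ‖y⁻¹‖ < 1 := by rw [norm_inv]; exact inv_lt_one_of_one_lt₀ hy
  have hinj : Function.Injective fun k : ℕ => n - 1 - (k : ℤ) :=
    fun i j h => by simpa using h
  have hsum : HasSum (fun r : ℤ => (if r < n then a₁ - a₂ * (r - n + 1) else 0) * y ^ r)
      (y ^ n * (a₁ / (y - 1) + a₂ / (y - 1) ^ 2)) := by
    have hseries := (((hasSum_geometric_of_norm_lt_one hinv).mul_left a₁).add
      ((hasSum_coe_mul_geometric_of_norm_lt_one hinv).mul_left a₂)).mul_left (y ^ (n - 1))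
    have hvalue : y ^ (n - 1) * (a₁ * (1 - y⁻¹)⁻¹ + a₂ * (y⁻¹ / (1 - y⁻¹) ^ 2)) =
        y ^ n * (a₁ / (y - 1) + a₂ / (y - 1) ^ 2) := by
      rw [zpow_sub_one₀ hy₀, show 1 - y⁻¹ = (y - 1) / y by field_simp]
      field_simp
    rw [hvalue] at hseries
    rw [← hinj.hasSum_iff fun r hr => ?_]
    · refine hseries.congr_fun fun k => ?_
      have hlt : n - 1 - (k : ℤ) < n := by lia
      simp [zpow_sub₀ hy₀, hlt]
      ring
    · rw [if_neg fun h => hr ⟨(n - 1 - r).toNat, by simp; lia⟩, zero_mul]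
  simpa only [polarRational_of_ne hy₁, polarRationalBelow, add_mul, mul_add, add_assoc] using
    (hasSum_ite_eq_mul_zpow n a₀ y).add hsum

lemma exists_forall_le_norm_ee_sub_one {δ : ℝ} (hδ : 0 < δ) :
    ∃ η > 0, ∀ x : ℂ, (∀ n : ℤ, δ ≤ ‖x - n‖) → η ≤ ‖ee x - 1‖ := by
  obtain ⟨η, hη, hlog⟩ := Metric.continuousAt_iff.1 (continuousAt_clog (x := 1) (by simp))
    (2 * Real.pi * δ) (by positivity)
  refine ⟨η, hη, fun x hx => not_lt.1 fun hlt => ?_⟩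
  obtain ⟨n, hn⟩ := (ee_eq_one_iff (x - log (ee x) / (2 * Real.pi * I))).1 (by
    rw [ee_sub, div_eq_one_iff_eq (ee_ne_zero _), ee.eq_1 (_ / _),
      mul_div_cancel₀ _ two_pi_I_ne_zero, exp_log (ee_ne_zero x)])
  have hclose := hlog (x := ee x) (by rwa [dist_eq_norm])
  have hδx := hx n
  rw [← hn, sub_sub_cancel, norm_div, show ‖2 * (Real.pi : ℂ) * I‖ = 2 * Real.pi by
    simp [abs_of_pos Real.pi_pos], le_div_iff₀ (by positivity)] at hδx
  rw [log_one, dist_zero_right] at hclose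
  linarith

lemma norm_polarRational_le {η : ℝ} (hη : 0 < η) {x : ℂ} (hx : η ≤ ‖ee x - 1‖) :
    ‖polarRational n a₀ a₁ a₂ (ee x)‖ ≤
      (‖a₀‖ + ‖a₁‖ / η + ‖a₂‖ / η ^ 2) * Real.exp (2 * Real.pi * |(n : ℝ)| * |x.im|) := by
  have hpow : ‖ee x ^ n‖ ≤ Real.exp (2 * Real.pi * |(n : ℝ)| * |x.im|) := by
    rw [ee_zpow, norm_ee, Real.exp_le_exp]
    have := neg_le_abs ((n : ℝ) * x.im)
    rw [abs_mul] at this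
    have him : (n * x).im = n * x.im := by simp
    rw [him]
    nlinarith [Real.pi_pos]
  rw [polarRational_of_ne (norm_pos_iff.1 (hη.trans_le hx)), norm_mul, mul_comm]
  refine mul_le_mul ?_ hpow (norm_nonneg _) (by positivity)
  refine (norm_add₃_le).trans ?_
  rw [norm_div, norm_div, norm_pow]
  gcongr

lemma hasPrincipalPart_inv_ee_sub_one : HasPrincipalPart (fun z => 1 / (ee z - 1)) 0 0 1 := by
  have hderiv := hasDerivAt_iff_tendsto_slope.1 (hasDerivAt_ee 0)
  rw [ee_zero, mul_one] at hderiv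
  have hlim := (hderiv.inv₀ two_pi_I_ne_zero).const_mul (2 * Real.pi * I)
  rw [mul_inv_cancel₀ two_pi_I_ne_zero] at hlim
  refine hlim.congr fun z => ?_
  simp only [slope_def_field, ee_zero, inv_div]
  ring

lemma tendsto_exp_sub_one_sub_self_div_sq :
    Tendsto (fun z : ℂ => (exp z - 1 - z) / z ^ 2) (𝓝[≠] 0) (𝓝 (1 / 2)) := by
  have hlim := ((Complex.exp_sub_sum_range_succ_isLittleO_pow 2).mono
    nhdsWithin_le_nhds).tendsto_div_nhds_zero (l := 𝓝[≠] (0 : ℂ))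
  rw [← zero_add (1 / 2 : ℂ)]
  refine (hlim.add_const (1 / 2)).congr' ?_
  filter_upwards [self_mem_nhdsWithin] with z (hz : z ≠ 0)
  simp only [Finset.sum_range_succ, Finset.sum_range_zero, Nat.factorial]
  push_cast
  field_simp
  ring

lemma hasPrincipalPart_inv_ee_sub_one_sq :
    HasPrincipalPart (fun z => 1 / (ee z - 1) ^ 2) 0 1 (-1) := by
  have hscale : Tendsto (fun z : ℂ => 2 * Real.pi * I * z) (𝓝[≠] 0) (𝓝[≠] 0) := by
    refine tendsto_nhdsWithin_iff.2 ⟨?_, ?_⟩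
    · refine tendsto_nhdsWithin_of_tendsto_nhds (Continuous.tendsto' ?_ _ _ (by simp))
      fun_prop
    · filter_upwards [self_mem_nhdsWithin] with z hz using mul_ne_zero two_pi_I_ne_zero hz
  have hquot := hasPrincipalPart_inv_ee_sub_one
  have hsecond := tendsto_exp_sub_one_sub_self_div_sq.comp hscale
  -- With `w = 2πiz` and `y = e^w`, use
  -- `w(1/(y-1)² - 1/w²) = -(y-1-w)/w² · w/(y-1) · (w/(y-1) + 1)`.
  simp only [HasPrincipalPart, sub_zero, zero_div] at hquot ⊢
  have hlim := (hsecond.neg.mul hquot).mul (hquot.add_const 1)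
  rw [show -(1 / 2 : ℂ) * 1 * (1 + 1) = -1 by norm_num] at hlim
  refine hlim.congr' ?_
  have hne : ∀ᶠ z in 𝓝[≠] (0 : ℂ), ee z - 1 ≠ 0 := by
    filter_upwards [hquot.eventually_ne one_ne_zero] with z hz h
    simp [h] at hz
  filter_upwards [self_mem_nhdsWithin, hne] with z (hz : z ≠ 0) hee
  have hexp : exp (2 * Real.pi * I * z) = ee z := rfl
  simp only [Function.comp_apply, hexp]
  field_simp
  ring

lemma hasPrincipalPart_polarRational (u : ℂ) :
    HasPrincipalPart (fun z => polarRational n a₀ a₁ a₂ (ee (z - u))) u a₂ (a₁ + (n - 1) * a₂) := by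
  have hnum : HasDerivAt (fun z => a₀ * (ee z - 1) + a₁) (a₀ * (2 * Real.pi * I * ee 0)) 0 :=
    (((hasDerivAt_ee 0).sub_const 1).const_mul a₀).add_const a₁
  have hsum := (hasPrincipalPart_inv_ee_sub_one.mul_hasDerivAt hnum).add
    (hasPrincipalPart_inv_ee_sub_one_sq.const_mul a₂)
  have hexp : HasDerivAt (fun z => ee (n * z)) (2 * Real.pi * I * n) 0 := by
    simpa [ee_zero, Function.comp_def] using (hasDerivAt_ee (n * 0)).comp 0
      ((hasDerivAt_id (0 : ℂ)).const_mul (n : ℂ))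
  have hprod := hsum.mul_hasDerivAt hexp
  simp only [mul_zero, ee_zero, sub_self, zero_mul, zero_div, zero_add, add_zero, one_mul,
    mul_one] at hprod
  rw [← add_neg_cancel u, ← HasPrincipalPart.comp_add_right_iff] at hprod
  convert hprod using 1
  · ext z
    simp only [polarRational, ee_zpow, sub_eq_add_neg]
    ring
  · field_simp [two_pi_I_ne_zero]
    ring

lemma differentiableAt_polarRational {y : ℂ} (hy : y ≠ 0) (hy' : y ≠ 1) :
    DifferentiableAt ℂ (polarRational n a₀ a₁ a₂) y := by
  have hsub : y - 1 ≠ 0 := sub_ne_zero.2 hy'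
  have hd : DifferentiableAt ℂ (fun y : ℂ => y - 1) y := by fun_prop
  exact (differentiableAt_id.zpow (.inl hy)).mul ((((hd.const_mul a₀).add_const a₁).div hd hsub).add
    ((differentiableAt_const a₂).div (hd.pow 2) (pow_ne_zero 2 hsub)))

lemma isPolarKernel_polarRational (m : ℕ) {τ : ℂ} (hτ : 0 < τ.im) (u : ℂ) :
    IsPolarKernel m τ u (fun z => polarRational n a₀ a₁ a₂ (ee (z - u)))
      (fun r => polarRationalAbove n a₀ a₁ a₂ r * ee (-(r * u)))
      (fun r => polarRationalBelow n a₀ a₁ a₂ r * ee (-(r * u))) where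
  periodic z := by
    have := ee_add_int (z - u) 1
    rw [Int.cast_one, sub_add_eq_add_sub] at this
    simp only [this]
  differentiableAt z hz := by
    have hne : ee (z - u) ≠ 1 := fun h => by
      obtain ⟨n, hn⟩ := (ee_eq_one_iff _).1 h
      exact hz n hn
    exact (differentiableAt_polarRational (ee_ne_zero _) hne).fun_comp' z
      (differentiable_ee.differentiableAt.fun_comp' z (by fun_prop))
  growth δ hδ := by
    obtain ⟨η, hη, hsep⟩ := exists_forall_le_norm_ee_sub_one hδ
    refine ⟨‖a₀‖ + ‖a₁‖ / η + ‖a₂‖ / η ^ 2, 2 * Real.pi * |(n : ℝ)|,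
      fun z hz => (norm_polarRational_le hη (hsep _ hz)).trans ?_⟩
    gcongr
    exact le_add_of_nonneg_left (by positivity)
  lineCoeff_above r w hw := by
    refine lineCoeff_eq_of_hasSum (c := fun r => polarRationalAbove n a₀ a₁ a₂ r * ee (-(r * u)))
      (fun x => ?_) r
    have hlt : ‖ee (x + w - u)‖ < 1 := norm_ee_lt_one_iff.2 (by simpa using hw)
    refine (hasSum_polarRationalAbove (ee_ne_zero _) hlt).congr_fun fun k => ?_
    rw [ee_zpow, mul_assoc, ← ee_add]
    ring_nf
  lineCoeff_below r w hw := by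
    refine lineCoeff_eq_of_hasSum (c := fun r => polarRationalBelow n a₀ a₁ a₂ r * ee (-(r * u)))
      (fun x => ?_) r
    have hlt : 1 < ‖ee (x + w - u)‖ := one_lt_norm_ee_iff.2 (by simpa using hw)
    refine (hasSum_polarRationalBelow hlt).congr_fun fun k => ?_
    rw [ee_zpow, mul_assoc, ← ee_add]
    ring_nf

lemma isPolarPart_polarRational {m : ℕ} (hm : m ≠ 0) {τ : ℂ} (hτ : 0 < τ.im) (u : ℂ)
    (h : ∀ r : ℤ, midCoeff ((-(r * τ / (2 * m)) - u).im) (polarRationalAbove n a₀ a₁ a₂ r)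
      (polarRationalBelow n a₀ a₁ a₂ r) = 0) :
    IsPolarPart m τ u (ellipticAverage m τ fun z => polarRational n a₀ a₁ a₂ (ee (z - u)))
      a₂ (a₁ + (n - 1) * a₂) (fun _ => 0) := by
  convert (isPolarKernel_polarRational m hτ u).isPolarPart hm hτ
    (hasPrincipalPart_polarRational u) using 2 with l
  simp only [canonTerm, midCoeff_mul_right, h, zero_mul, mul_zero, tsum_zero]

lemma Rc_eq_polarRational (c : ℝ) :
    Rc c = polarRational ⌈c⌉ (if (⌈c⌉ : ℝ) = c then 1 / 2 else 0) 1 0 := by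
  ext y
  rw [Rc, polarRational]
  split_ifs <;> ring

lemma Rc2_eq_polarRational (c : ℝ) :
    Rc2 c = polarRational (⌊c⌋ + 1) 0 (c - ⌊c⌋) 1 := by
  ext y
  rw [Rc2, polarRational]
  ring

lemma midCoeff_Rc {t : ℝ} (ht : 0 < t) (c : ℝ) (r : ℤ) :
    midCoeff (t * (c - r)) (polarRationalAbove ⌈c⌉ (if (⌈c⌉ : ℝ) = c then 1 / 2 else 0) 1 0 r)
      (polarRationalBelow ⌈c⌉ (if (⌈c⌉ : ℝ) = c then 1 / 2 else 0) 1 0 r) = 0 := by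
  rw [midCoeff, polarRationalAbove, polarRationalBelow]
  rcases lt_trichotomy (r : ℝ) c with h | h | h
  · have hr : r < ⌈c⌉ := Int.lt_ceil.2 h
    rw [if_pos (mul_pos ht (sub_pos.2 h)), if_neg hr.ne, if_neg hr.not_ge, add_zero]
  · subst h
    norm_num
  · have hr : ⌈c⌉ ≤ r := Int.ceil_le.2 h.le
    have hneg := mul_neg_of_pos_of_neg ht (sub_neg.2 h)
    rw [if_neg hneg.not_gt, if_pos hneg, if_neg hr.not_gt, add_zero]
    rw [ite_eq_right_iff]
    exact fun he => if_neg fun hc => h.ne' (by rw [he, hc])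

lemma midCoeff_Rc2 {t : ℝ} (ht : 0 < t) (c : ℝ) (r : ℤ) :
    midCoeff (t * (c - r)) (polarRationalAbove (⌊c⌋ + 1) 0 (c - ⌊c⌋) 1 r)
      (polarRationalBelow (⌊c⌋ + 1) 0 (c - ⌊c⌋) 1 r) = 0 := by
  rw [midCoeff, polarRationalAbove, polarRationalBelow, ite_self, zero_add, zero_add]
  rcases lt_trichotomy (r : ℝ) c with h | h | h
  · have hr : r < ⌊c⌋ + 1 := Int.lt_add_one_iff.2 (Int.le_floor.2 h.le)
    rw [if_pos (mul_pos ht (sub_pos.2 h)), if_neg hr.not_ge]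
  · subst h
    norm_num
  · have hr : ⌊c⌋ + 1 ≤ r := Int.floor_lt.2 h
    have hneg := mul_neg_of_pos_of_neg ht (sub_neg.2 h)
    rw [if_neg hneg.not_gt, if_pos hneg, if_neg hr.not_gt]

end Rational

section AppellLerch

variable {m : ℕ} {τ : ℂ}

lemma im_neg_div_sub_zpt (hm : m ≠ 0) (s : ℚ × ℚ) (r : ℤ) :
    (-(r * τ / (2 * m)) - zpt s τ).im =
      τ.im / (2 * m) * (((-(2 * (m : ℚ) * s.1) : ℚ) : ℝ) - r) := by
  have him : ((r : ℂ) * τ / (2 * m)).im = r * τ.im / (2 * m) := by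
    rw [show (r : ℂ) * τ / (2 * m) = ((r / (2 * m) : ℝ) : ℂ) * τ by push_cast; ring, im_ofReal_mul]
    ring
  have hz : (zpt s τ).im = s.1 * τ.im := by
    simp [zpt]
  rw [sub_im, neg_im, him, hz]
  push_cast
  field_simp
  ring

lemma isPolarPart_appellA (hm : m ≠ 0) (hτ : 0 < τ.im) (s : ℚ × ℚ) :
    IsPolarPart m τ (zpt s τ) (AppellA m s τ) 0 (ee (-(m : ℂ) * s.1 * zpt s τ)) fun _ => 0 := by
  have hpos : 0 < τ.im / (2 * m) := by positivity
  have hpolar := (isPolarPart_polarRational hm hτ (zpt s τ) fun r => by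
    rw [im_neg_div_sub_zpt hm]
    exact midCoeff_Rc hpos _ r).const_mul (ee (-(m : ℂ) * s.1 * zpt s τ))
  convert hpolar using 1
  · ext z
    simp only [AppellA, Av, ellipticAverage, ellipticAverageTerm, ee_sub, Rc_eq_polarRational]
  all_goals simp

lemma isPolarPart_appellB (hm : m ≠ 0) (hτ : 0 < τ.im) (s : ℚ × ℚ) :
    IsPolarPart m τ (zpt s τ) (AppellB m s τ) (ee (-(m : ℂ) * s.1 * zpt s τ))
      (-(2 * m * s.1) * ee (-(m : ℂ) * s.1 * zpt s τ)) fun _ => 0 := by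
  have hpos : 0 < τ.im / (2 * m) := by positivity
  have hpolar := (isPolarPart_polarRational hm hτ (zpt s τ) fun r => by
    rw [im_neg_div_sub_zpt hm]
    exact midCoeff_Rc2 hpos _ r).const_mul (ee (-(m : ℂ) * s.1 * zpt s τ))
  convert hpolar using 1
  · ext z
    simp only [AppellB, Av, ellipticAverage, ellipticAverageTerm, ee_sub, Rc2_eq_polarRational]
  · simp
  · push_cast
    ring
  · simp

end AppellLerch

/-! ### Gaussian kernels -/

/-- The principal part `1/(2πiv)^j` damped by a Gaussian and twisted by the frequency `-b`. -/
def gaussianPole (t b : ℝ) (j : ℕ) (v : ℂ) : ℂ :=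
  cexp (-(Real.pi * t) * v ^ 2) * ee (-(b * v)) / (2 * Real.pi * I * v) ^ j

/-- The `k`-th moment over the half-line `s > 0` of the normal density of mean `b` and
variance `t/2π`. -/
def gaussianMoment (t b : ℝ) (k : ℕ) : ℝ :=
  ∫ s in Set.Ioi (0 : ℝ), s ^ k * ((√t)⁻¹ * Real.exp (-(Real.pi * (b - s) ^ 2 / t)))

section GaussianMoment

variable {t b : ℝ} {w v : ℂ}

lemma gaussian_mul_ee_eq_cexp (t b : ℝ) (w : ℂ) (x : ℝ) :
    cexp (-(Real.pi * t) * (x + w) ^ 2) * ee (-(b * (x + w))) =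
      cexp (-(Real.pi * t) * x ^ 2 + (-(2 * Real.pi * t) * w - 2 * Real.pi * I * b) * x +
        (-(Real.pi * t) * w ^ 2 - 2 * Real.pi * I * b * w)) := by
  rw [ee, ← Complex.exp_add]
  ring_nf

lemma integrable_gaussian_mul_ee (ht : 0 < t) (b : ℝ) (w : ℂ) :
    Integrable fun x : ℝ => cexp (-(Real.pi * t) * (x + w) ^ 2) * ee (-(b * (x + w))) := by
  simp only [gaussian_mul_ee_eq_cexp]
  exact integrable_cexp_quadratic' (by simpa using mul_pos Real.pi_pos ht) _ _

lemma integral_gaussian_mul_ee (ht : 0 < t) (b : ℝ) (w : ℂ) :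
    ∫ x : ℝ, cexp (-(Real.pi * t) * (x + w) ^ 2) * ee (-(b * (x + w))) =
      ((√t)⁻¹ * Real.exp (-(Real.pi * b ^ 2 / t)) : ℝ) := by
  have ht' : (t : ℂ) ≠ 0 := ofReal_ne_zero.2 ht.ne'
  have hpi : (Real.pi : ℂ) ≠ 0 := ofReal_ne_zero.2 Real.pi_ne_zero
  have hroot : ((Real.pi : ℂ) / -(-(Real.pi * t))) ^ (1 / 2 : ℂ) = ((√t)⁻¹ : ℝ) := by
    rw [neg_neg, div_mul_cancel_left₀ hpi, ← ofReal_inv,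
      show (1 / 2 : ℂ) = ((1 / 2 : ℝ) : ℂ) by push_cast; ring, ← ofReal_cpow (by positivity),
      ← Real.sqrt_eq_rpow, Real.sqrt_inv]
  simp only [gaussian_mul_ee_eq_cexp]
  rw [integral_cexp_quadratic (by simpa using mul_pos Real.pi_pos ht), hroot]
  push_cast
  congr 2
  field_simp
  ring_nf
  rw [I_sq]
  ring

lemma integrableOn_pow_mul_exp_neg_mul (k : ℕ) {c : ℝ} (hc : 0 < c) :
    IntegrableOn (fun s : ℝ => s ^ k * Real.exp (-(c * s))) (Set.Ioi 0) := by
  have h := integrableOn_rpow_mul_exp_neg_mul_rpow (p := 1) (s := k)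
    (neg_one_lt_zero.trans_le k.cast_nonneg) one_pos hc
  simpa only [Real.rpow_natCast, Real.rpow_one, neg_mul] using h

lemma integrableOn_pow_mul_ee (k : ℕ) (hv : 0 < v.im) :
    IntegrableOn (fun s : ℝ => (s : ℂ) ^ k * ee (s * v)) (Set.Ioi 0) := by
  refine (integrableOn_pow_mul_exp_neg_mul k (mul_pos Real.two_pi_pos hv)).mono'
    (Continuous.aestronglyMeasurable ?_) ?_
  · have := differentiable_ee.continuous
    fun_prop
  · filter_upwards [ae_restrict_mem measurableSet_Ioi] with s hs
    rw [norm_mul, norm_pow, norm_ee, norm_real, Real.norm_of_nonneg (le_of_lt hs), im_ofReal_mul,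
      mul_left_comm, mul_comm s]

lemma hasDerivAt_pow_mul_ee (k : ℕ) (v : ℂ) (s : ℝ) :
    HasDerivAt (fun s : ℝ => (s : ℂ) ^ (k + 1) * ee (s * v))
      ((k + 1) * ((s : ℂ) ^ k * ee (s * v)) +
        2 * Real.pi * I * v * ((s : ℂ) ^ (k + 1) * ee (s * v))) s := by
  have hee : HasDerivAt (fun s : ℂ => ee (s * v)) (2 * Real.pi * I * ee (s * v) * v) s :=
    HasDerivAt.comp (h₂ := ee) (s : ℂ) (hasDerivAt_ee (s * v)) (hasDerivAt_mul_const v)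
  refine ((hasDerivAt_pow (k + 1) (s : ℂ)).mul hee).comp_ofReal.congr_deriv ?_
  push_cast [add_tsub_cancel_right]
  ring

lemma integral_pow_mul_ee (k : ℕ) (hv : 0 < v.im) :
    ∫ s in Set.Ioi (0 : ℝ), (s : ℂ) ^ k * ee (s * v) =
      (-1) ^ (k + 1) * k.factorial / (2 * Real.pi * I * v) ^ (k + 1) := by
  have hp : 2 * Real.pi * I * v ≠ 0 := mul_ne_zero two_pi_I_ne_zero fun h => by simp [h] at hv
  induction k with
  | zero =>
    have hexp : ∀ s : ℝ, ee (s * v) = cexp (2 * Real.pi * I * v * s) := fun s => by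
      rw [ee]
      ring_nf
    simp only [pow_zero, one_mul, zero_add, pow_one, Nat.factorial_zero, Nat.cast_one, mul_one,
      hexp]
    rw [integral_exp_mul_complex_Ioi (by simpa using mul_pos Real.two_pi_pos hv)]
    simp
  | succ k ih =>
    have hlow := (integrableOn_pow_mul_ee k hv).const_mul (k + 1 : ℂ)
    have hhigh := (integrableOn_pow_mul_ee (k + 1) hv).const_mul (2 * Real.pi * I * v)
    have hparts := integral_Ioi_of_hasDerivAt_of_tendsto'
      (fun s _ => hasDerivAt_pow_mul_ee k v s) (hlow.add hhigh)
      (tendsto_zero_of_hasDerivAt_of_integrableOn_Ioi (fun s _ => hasDerivAt_pow_mul_ee k v s)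
        (hlow.add hhigh) (integrableOn_pow_mul_ee (k + 1) hv))
    rw [integral_add hlow hhigh, integral_const_mul, integral_const_mul, ih, ofReal_zero,
      zero_pow k.succ_ne_zero, zero_mul, sub_zero] at hparts
    refine mul_left_cancel₀ hp ((eq_neg_of_add_eq_zero_right hparts).trans ?_)
    rw [Nat.factorial_succ]
    push_cast
    field_simp
    ring

/-- Fubini, after writing `1/(2πiv)^(k+1)` as a Laplace transform. -/
lemma integral_gaussianPole_of_im_pos (ht : 0 < t) (b : ℝ) (k : ℕ) (hw : 0 < w.im) :
    ∫ x : ℝ, gaussianPole t b (k + 1) (x + w) =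
      (-1) ^ (k + 1) / k.factorial * gaussianMoment t b k := by
  have hlaplace : ∀ x : ℝ, gaussianPole t b (k + 1) (x + w) = (-1) ^ (k + 1) / k.factorial *
      ∫ s in Set.Ioi (0 : ℝ), cexp (-(Real.pi * t) * (x + w) ^ 2) * ee (-(b * (x + w))) *
        (s ^ k * ee (s * (x + w))) := fun x => by
    have hfac : (k.factorial : ℂ) ≠ 0 := Nat.cast_ne_zero.2 k.factorial_ne_zero
    rw [integral_const_mul, integral_pow_mul_ee k (by simpa using hw), gaussianPole]
    have hsign : ((-1 : ℂ) ^ (k + 1)) * (-1) ^ (k + 1) = 1 := by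
      rw [← mul_pow, neg_one_mul, neg_neg, one_pow]
    generalize cexp _ * ee _ = G, (2 * Real.pi * I * (x + w)) ^ (k + 1) = P
    field_simp
    linear_combination -(G / P) * hsign
  have hmean : ∀ s : ℝ, ∫ x : ℝ, cexp (-(Real.pi * t) * (x + w) ^ 2) * ee (-(b * (x + w))) *
      (s ^ k * ee (s * (x + w))) =
        (s ^ k * ((√t)⁻¹ * Real.exp (-(Real.pi * (b - s) ^ 2 / t))) : ℝ) := fun s => by
    rw [ofReal_mul, ← integral_gaussian_mul_ee ht (b - s) w, ← integral_const_mul]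
    refine integral_congr_ae (.of_forall fun x => ?_)
    simp only [ofReal_pow, ofReal_sub,
      show -((b - s : ℂ) * (x + w)) = -(b * (x + w)) + s * (x + w) by ring, ee_add]
    ring
  simp only [hlaplace]
  rw [integral_const_mul, integral_integral_swap, gaussianMoment, ← integral_complex_ofReal]
  · simp only [hmean]
  have hprod := (integrable_gaussian_mul_ee ht b w).norm.mul_prod
    (integrableOn_pow_mul_exp_neg_mul k (mul_pos Real.two_pi_pos hw))
  refine hprod.mono' (Continuous.aestronglyMeasurable ?_) ?_
  · have := differentiable_ee.continuous
    unfold Function.uncurry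
    fun_prop
  · filter_upwards [Measure.quasiMeasurePreserving_snd.ae (ae_restrict_mem measurableSet_Ioi)]
      with p hp
    have him : -(2 * Real.pi * (p.2 * (p.1 + w)).im) = -(2 * Real.pi * w.im * p.2) := by
      simp
      ring
    rw [Function.uncurry, norm_mul, norm_mul (_ ^ k), norm_pow, norm_ee (_ * (_ + _)), norm_real,
      Real.norm_of_nonneg (le_of_lt hp), him]

lemma gaussianPole_neg_arg (t b : ℝ) (j : ℕ) (v : ℂ) :
    gaussianPole t b j (-v) = (-1) ^ j * gaussianPole t (-b) j v := by
  have hpow : (2 * Real.pi * I * -v) ^ j = (-1) ^ j * (2 * Real.pi * I * v) ^ j := by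
    rw [← mul_pow]
    ring
  have hsign : ((-1 : ℂ) ^ j)⁻¹ = (-1) ^ j := by rw [← inv_pow, inv_neg_one]
  have htwist : -((b : ℂ) * -v) = -((-b : ℝ) * v) := by push_cast; ring
  rw [gaussianPole, gaussianPole, hpow, neg_sq, htwist, div_eq_mul_inv, mul_inv, hsign]
  ring

lemma integral_gaussianPole_of_im_neg (ht : 0 < t) (b : ℝ) (k : ℕ) (hw : w.im < 0) :
    ∫ x : ℝ, gaussianPole t b (k + 1) (x + w) =
      (gaussianMoment t (-b) k / k.factorial : ℝ) := by
  have hflip : ∀ x : ℝ, gaussianPole t b (k + 1) ((-x : ℝ) + w) =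
      (-1) ^ (k + 1) * gaussianPole t (-b) (k + 1) (x + -w) := fun x => by
    rw [← gaussianPole_neg_arg]
    congr 1
    push_cast
    ring
  rw [← integral_neg_eq_self]
  simp only [hflip]
  rw [integral_const_mul, integral_gaussianPole_of_im_pos ht _ k (by simpa using hw), ← mul_assoc,
    mul_div_assoc', ← mul_pow, neg_one_mul, neg_neg, one_pow]
  push_cast
  ring

lemma setIntegral_Ioi_comp_add (f : ℝ → ℝ) (a c : ℝ) :
    ∫ y in Set.Ioi a, f (y + c) = ∫ y in Set.Ioi (a + c), f y := by
  rw [← (measurePreserving_add_right volume c).setIntegral_preimage_emb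
    (measurableEmbedding_addRight c) f, Set.preimage_add_const_Ioi, add_sub_cancel_right]

lemma gaussianMoment_zero (ht : 0 < t) (b : ℝ) :
    gaussianMoment t b 0 = erfc (-(√(Real.pi / t) * b)) / 2 := by
  set c := √(Real.pi / t) with hc
  have hpt : 0 < Real.pi / t := div_pos Real.pi_pos ht
  have hexp : ∀ s : ℝ, -(Real.pi * (b - s) ^ 2 / t) = -(c * s + -(c * b)) ^ 2 := fun s => by
    rw [show (c * s + -(c * b)) ^ 2 = c ^ 2 * (b - s) ^ 2 by ring, Real.sq_sqrt hpt.le]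
    ring
  have hnorm : (√t)⁻¹ * c⁻¹ = (√Real.pi)⁻¹ := by
    have := (Real.sqrt_pos.2 ht).ne'
    rw [hc, Real.sqrt_div Real.pi_pos.le]
    field_simp
  simp only [gaussianMoment, pow_zero, one_mul, hexp]
  rw [integral_const_mul, integral_comp_mul_left_Ioi (fun y => Real.exp (-(y + -(c * b)) ^ 2)) _
    (Real.sqrt_pos.2 hpt), setIntegral_Ioi_comp_add (fun y => Real.exp (-y ^ 2)), mul_zero,
    zero_add, erfc, smul_eq_mul, ← mul_assoc, hnorm]
  ring

lemma hasDerivAt_exp_neg_pi_mul_sq (ht : t ≠ 0) (b s : ℝ) :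
    HasDerivAt (fun s : ℝ => -(t / (2 * Real.pi)) * Real.exp (-(Real.pi * (b - s) ^ 2 / t)))
      ((s - b) * Real.exp (-(Real.pi * (b - s) ^ 2 / t))) s := by
  have hpi := Real.pi_ne_zero
  have hexponent : HasDerivAt (fun s : ℝ => -(Real.pi * (b - s) ^ 2 / t))
      (2 * Real.pi / t * (b - s)) s :=
    ((((hasDerivAt_id s).const_sub b).pow 2).const_mul Real.pi |>.div_const t).neg.congr_deriv <| by
      simp only [id_eq]
      push_cast
      ring
  refine (hexponent.exp.const_mul _).congr_deriv ?_
  field_simp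
  ring

lemma gaussianMoment_one (ht : 0 < t) (b : ℝ) :
    gaussianMoment t b 1 =
      √t / (2 * Real.pi) * Real.exp (-(Real.pi * b ^ 2 / t)) + b * gaussianMoment t b 0 := by
  have hint : ∀ s : ℝ, -(Real.pi * (b - s) ^ 2 / t) = -(Real.pi / t) * (s - b) ^ 2 := fun s => by
    ring
  have hi0 : IntegrableOn (fun s : ℝ => Real.exp (-(Real.pi * (b - s) ^ 2 / t))) (Set.Ioi 0) := by
    simp only [hint]
    exact ((integrable_exp_neg_mul_sq (div_pos Real.pi_pos ht)).comp_sub_right b).integrableOn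
  have hi1 : IntegrableOn (fun s : ℝ => (s - b) * Real.exp (-(Real.pi * (b - s) ^ 2 / t)))
      (Set.Ioi 0) := by
    simp only [hint]
    exact ((integrable_mul_exp_neg_mul_sq (div_pos Real.pi_pos ht)).comp_sub_right b).integrableOn
  have hderiv := fun s (_ : s ∈ Set.Ici (0 : ℝ)) => hasDerivAt_exp_neg_pi_mul_sq ht.ne' b s
  have hcentred := integral_Ioi_of_hasDerivAt_of_tendsto' hderiv hi1
    (tendsto_zero_of_hasDerivAt_of_integrableOn_Ioi
      (fun s hs => hderiv s (Set.Ioi_subset_Ici_self hs)) hi1 (hi0.const_mul _))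
  have hsplit : ∀ s : ℝ, s ^ 1 * ((√t)⁻¹ * Real.exp (-(Real.pi * (b - s) ^ 2 / t))) =
      (√t)⁻¹ * ((s - b) * Real.exp (-(Real.pi * (b - s) ^ 2 / t))) +
        b * (s ^ 0 * ((√t)⁻¹ * Real.exp (-(Real.pi * (b - s) ^ 2 / t)))) := fun s => by ring
  have hroot : (√t)⁻¹ * t = √t := by rw [inv_mul_eq_div, Real.div_sqrt]
  rw [gaussianMoment, gaussianMoment]
  simp only [hsplit]
  rw [integral_add (hi1.const_mul _) (by simpa using (hi0.const_mul _).const_mul _),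
    integral_const_mul, integral_const_mul, hcentred, sub_zero]
  linear_combination (Real.exp (-(Real.pi * b ^ 2 / t)) / (2 * Real.pi)) * hroot

end GaussianMoment

/-- The `ℤ`-periodization of `gaussianPole`. -/
def gaussianPeriodization (t b : ℝ) (j : ℕ) (v : ℂ) : ℂ := ∑' n : ℤ, gaussianPole t b j (v + n)

section GaussianPeriodization

variable {t δ : ℝ} {v w : ℂ}

lemma norm_gaussianPole (t b : ℝ) (j : ℕ) (v : ℂ) :
    ‖gaussianPole t b j v‖ = Real.exp (Real.pi * t * (v.im ^ 2 - v.re ^ 2) +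
      2 * Real.pi * (b * v.im)) / (2 * Real.pi * ‖v‖) ^ j := by
  have hexp : (-(Real.pi * t : ℂ) * v ^ 2).re + -(2 * Real.pi * (-(b * v)).im) =
      Real.pi * t * (v.im ^ 2 - v.re ^ 2) + 2 * Real.pi * (b * v.im) := by
    simp [sq]
    ring
  rw [gaussianPole, norm_div, norm_mul, Complex.norm_exp, norm_ee, ← Real.exp_add, hexp, norm_pow,
    norm_mul, norm_mul, norm_mul, norm_I, norm_real, Real.norm_of_nonneg Real.pi_nonneg, mul_one,
    Complex.norm_two]

lemma differentiableAt_gaussianPole (t b : ℝ) (j : ℕ) (hv : v ≠ 0) :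
    DifferentiableAt ℂ (gaussianPole t b j) v := by
  refine DifferentiableAt.div (DifferentiableAt.mul (by fun_prop)
    (differentiable_ee.differentiableAt.comp v (by fun_prop))) (by fun_prop) ?_
  exact pow_ne_zero j (mul_ne_zero two_pi_I_ne_zero hv)

lemma hasDerivAt_gaussian_mul_ee (t b : ℝ) :
    HasDerivAt (fun v => cexp (-(Real.pi * t) * v ^ 2) * ee (-(b * v))) (-(2 * Real.pi * I * b))
      0 := by
  have hexp : HasDerivAt (fun v : ℂ => cexp (-(Real.pi * t) * v ^ 2)) 0 0 := by
    simpa using ((hasDerivAt_pow 2 (0 : ℂ)).const_mul (-(Real.pi * t : ℂ))).cexp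
  have hee : HasDerivAt (fun v : ℂ => ee (-(b * v)))
      (2 * Real.pi * I * ee (-(b * 0)) * -(b * 1)) 0 :=
    HasDerivAt.comp (h₂ := ee) (0 : ℂ) (hasDerivAt_ee _) ((hasDerivAt_id 0).const_mul _).neg
  refine (hexp.mul hee).congr_deriv ?_
  simp [ee_zero]

lemma hasPrincipalPart_gaussianPole_one (t b : ℝ) :
    HasPrincipalPart (gaussianPole t b 1) 0 0 1 := by
  have hpole : HasPrincipalPart (fun v => (2 * Real.pi * I * v)⁻¹) 0 0 1 := by
    refine tendsto_const_nhds.congr' ?_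
    filter_upwards [self_mem_nhdsWithin] with v (hv : v ≠ 0)
    rw [sub_zero, zero_div, sub_zero, mul_inv_cancel₀ (mul_ne_zero two_pi_I_ne_zero hv)]
  have h := (hpole.mul_hasDerivAt (hasDerivAt_gaussian_mul_ee t b)).congr'
    (g := gaussianPole t b 1) (.of_forall fun v => by rw [gaussianPole, pow_one, div_eq_mul_inv])
  simpa [ee_zero] using h

lemma hasPrincipalPart_gaussianPole_two (t b : ℝ) :
    HasPrincipalPart (gaussianPole t b 2) 0 1 (-b) := by
  have hpole : HasPrincipalPart (fun v => ((2 * Real.pi * I * v) ^ 2)⁻¹) 0 1 0 := by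
    refine tendsto_const_nhds.congr fun v => ?_
    rw [sub_zero, one_div, sub_self, mul_zero]
  have hd : 1 * -(2 * Real.pi * I * b) / (2 * Real.pi * I) = -(b : ℂ) := by
    have := two_pi_I_ne_zero
    field_simp
  have h := (hpole.mul_hasDerivAt (hasDerivAt_gaussian_mul_ee t b)).congr'
    (g := gaussianPole t b 2) (.of_forall fun v => by rw [gaussianPole, div_eq_mul_inv])
  rw [hd] at h
  simpa [ee_zero] using h

lemma differentiableAt_gaussianPole_add (t b : ℝ) (j : ℕ) (hv : v + w ≠ 0) :
    DifferentiableAt ℂ (fun z => gaussianPole t b j (z + w)) v :=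
  differentiableAt_comp_add_const.2 (differentiableAt_gaussianPole t b j hv)

lemma exists_summable_bound_gaussianPole (ht : 0 < t) (b : ℝ) (j : ℕ) (R : ℝ) (hδ : 0 < δ) :
    ∃ β : ℤ → ℝ, Summable β ∧ ∀ v : ℂ, |v.re| ≤ R → ∀ n : ℤ, δ ≤ ‖v + n‖ →
      ‖gaussianPole t b j (v + n)‖ ≤
        Real.exp (Real.pi * t * v.im ^ 2 + 2 * Real.pi * |b| * |v.im|) * β n := by
  have hpt : 0 < Real.pi * t := mul_pos Real.pi_pos ht
  refine ⟨fun n => Real.exp (-(Real.pi * t / 2) * n ^ 2 + 0 * |(n : ℝ)|) *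
    (Real.exp (Real.pi * t * R ^ 2) / (2 * Real.pi * δ) ^ j),
    (summable_exp_neg_mul_sq_add_abs (half_pos hpt) 0).mul_right _, fun v hv n hn => ?_⟩
  have hsq : (n : ℝ) ^ 2 / 2 - R ^ 2 ≤ (v.re + n) ^ 2 := by
    nlinarith [sq_nonneg (2 * v.re + n), sq_le_sq.2 (hv.trans (le_abs_self R))]
  have hby : b * v.im ≤ |b| * |v.im| := (le_abs_self _).trans (abs_mul _ _).le
  beta_reduce
  rw [norm_gaussianPole, ← mul_div_assoc, ← mul_div_assoc, ← Real.exp_add, ← Real.exp_add, add_re,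
    add_im, intCast_re, intCast_im, add_zero]
  refine div_le_div₀ (Real.exp_nonneg _) (Real.exp_le_exp.2 ?_) (by positivity) (by gcongr)
  nlinarith [mul_le_mul_of_nonneg_left hsq hpt.le, mul_le_mul_of_nonneg_left hby Real.pi_pos.le]

lemma exists_summable_bound_gaussianPole_ball (ht : 0 < t) (b : ℝ) (j : ℕ) (v₀ : ℂ) :
    ∃ δ > 0, ∃ β : ℤ → ℝ, Summable β ∧ ∀ n : ℤ, v₀ + n ≠ 0 → ∀ v ∈ Metric.ball v₀ δ,
      v + n ≠ 0 ∧ ‖gaussianPole t b j (v + n)‖ ≤ β n := by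
  obtain ⟨δ, hδ, hgap⟩ := exists_forall_le_norm_of_ne_zero (τ := I) (by simp) v₀
  set R := ‖v₀‖ + δ / 2
  obtain ⟨β, hβ, hbound⟩ := exists_summable_bound_gaussianPole ht b j R (half_pos hδ)
  refine ⟨δ / 2, half_pos hδ,
    fun n => Real.exp (Real.pi * t * R ^ 2 + 2 * Real.pi * |b| * R) * β n, hβ.mul_left _,
    fun n hn v hv => ?_⟩
  have hdist : ‖v - v₀‖ < δ / 2 := mem_ball_iff_norm.1 hv
  have hfar : δ / 2 ≤ ‖v + n‖ := by
    have hn₀ : δ ≤ ‖v₀ + n‖ := by simpa using hgap 0 (-n) (by simpa using hn)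
    have : v₀ + n = v + n - (v - v₀) := by ring
    linarith [congrArg norm this, norm_sub_le (v + n) (v - v₀)]
  have hnorm : ‖v‖ ≤ ‖v₀‖ + δ / 2 := by linarith [norm_sub_norm_le v v₀]
  have hβn : 0 ≤ β n := nonneg_of_mul_nonneg_right ((norm_nonneg _).trans
    (hbound v ((abs_re_le_norm v).trans hnorm) n hfar)) (Real.exp_pos _)
  refine ⟨norm_pos_iff.1 ((half_pos hδ).trans_le hfar),
    (hbound v ((abs_re_le_norm v).trans hnorm) n hfar).trans ?_⟩
  have him : |v.im| ≤ R := (abs_im_le_norm v).trans hnorm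
  beta_reduce
  rw [← sq_abs v.im]
  gcongr

lemma differentiableAt_gaussianPeriodization (ht : 0 < t) (b : ℝ) (j : ℕ)
    (hv : ∀ n : ℤ, v + n ≠ 0) : DifferentiableAt ℂ (gaussianPeriodization t b j) v := by
  obtain ⟨δ, hδ, β, hβ, hball⟩ := exists_summable_bound_gaussianPole_ball ht b j v
  refine (differentiableOn_tsum_of_summable_norm hβ (fun n z hz => ?_) Metric.isOpen_ball
    fun n z hz => (hball n (hv n) z hz).2).differentiableAt (Metric.ball_mem_nhds v hδ)
  exact (differentiableAt_gaussianPole_add t b j (hball n (hv n) z hz).1).differentiableWithinAt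

lemma hasPrincipalPart_gaussianPeriodization (ht : 0 < t) {b : ℝ} {j : ℕ} {e d : ℂ}
    (h : HasPrincipalPart (gaussianPole t b j) 0 e d) :
    HasPrincipalPart (gaussianPeriodization t b j) 0 e d := by
  obtain ⟨δ, hδ, β, hβ, hball⟩ := exists_summable_bound_gaussianPole_ball ht b j 0
  have hne : ∀ n : ℤ, n ≠ 0 → (0 : ℂ) + n ≠ 0 := fun n hn => by simpa using hn
  refine HasPrincipalPart.tsum (Metric.ball_mem_nhds 0 hδ) 0 (by simpa using h)
    (fun n hn z hz => ?_) hβ fun n hn z hz => (hball n (hne n hn) z hz).2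
  exact (differentiableAt_gaussianPole_add t b j
    (hball n (hne n hn) z hz).1).continuousAt.continuousWithinAt

lemma periodic_gaussianPeriodization (t b : ℝ) (j : ℕ) :
    Function.Periodic (gaussianPeriodization t b j) 1 := fun v => by
  rw [gaussianPeriodization, gaussianPeriodization, ← (Equiv.addRight (1 : ℤ)).tsum_eq
    fun n : ℤ => gaussianPole t b j (v + n)]
  refine tsum_congr fun n => ?_
  rw [Equiv.coe_addRight]
  push_cast
  ring_nf

lemma exists_norm_gaussianPeriodization_le (ht : 0 < t) (b : ℝ) (j : ℕ) (hδ : 0 < δ) :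
    ∃ C : ℝ, ∀ v : ℂ, (∀ n : ℤ, δ ≤ ‖v - n‖) → ‖gaussianPeriodization t b j v‖ ≤
      C * Real.exp (Real.pi * t * v.im ^ 2 + 2 * Real.pi * |b| * |v.im|) := by
  obtain ⟨β, hβ, hbound⟩ := exists_summable_bound_gaussianPole ht b j 1 hδ
  refine ⟨∑' n, β n, fun v hv => ?_⟩
  have hre : |(v - ⌊v.re⌋).re| ≤ 1 := by
    rw [sub_re, intCast_re, ← Int.fract, Int.abs_fract]
    exact (Int.fract_lt_one _).le
  have hper : gaussianPeriodization t b j (v - ⌊v.re⌋) = gaussianPeriodization t b j v := by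
    simpa using (periodic_gaussianPeriodization t b j).sub_int_mul_eq ⌊v.re⌋
  rw [← hper, mul_comm]
  refine tsum_of_norm_bounded (hβ.hasSum.mul_left _) fun n => ?_
  have hfar : δ ≤ ‖v - ⌊v.re⌋ + n‖ := by
    simpa [sub_add] using hv (⌊v.re⌋ - n)
  simpa using hbound _ hre n hfar

lemma gaussianPole_mul_ee (t b r : ℝ) (j : ℕ) (v : ℂ) :
    gaussianPole t b j v * ee (-(r * v)) = gaussianPole t (b + r) j v := by
  have hfreq : -(((b + r : ℝ) : ℂ) * v) = -(b * v) + -(r * v) := by push_cast; ring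
  rw [gaussianPole, gaussianPole, hfreq, ee_add]
  ring

lemma integrable_gaussianPole (ht : 0 < t) (b : ℝ) (j : ℕ) (hw : w.im ≠ 0) :
    Integrable fun x : ℝ => gaussianPole t b j (x + w) := by
  have hne : ∀ x : ℝ, (x : ℂ) + w ≠ 0 := fun x h => hw (by simpa using congrArg im h)
  refine ((integrable_gaussian_mul_ee ht b w).norm.mul_const
    ((2 * Real.pi * |w.im|) ^ j)⁻¹).mono' (Continuous.aestronglyMeasurable ?_)
    (.of_forall fun x => ?_)
  · exact continuous_iff_continuousAt.2 fun x => ContinuousAt.comp' (f := fun x : ℝ => (x : ℂ) + w)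
      (differentiableAt_gaussianPole t b j (hne x)).continuousAt (by fun_prop)
  · have him : |w.im| ≤ ‖(x : ℂ) + w‖ := by simpa using abs_im_le_norm ((x : ℂ) + w)
    rw [gaussianPole, norm_div, div_eq_mul_inv, norm_pow, norm_mul (2 * Real.pi * I : ℂ)]
    have hnorm : ‖(2 * Real.pi * I : ℂ)‖ = 2 * Real.pi := by simp [Real.pi_nonneg]
    rw [hnorm]
    have := abs_pos.2 hw
    gcongr

lemma lineCoeff_gaussianPeriodization (ht : 0 < t) (b : ℝ) (j : ℕ) (r : ℤ) (hw : w.im ≠ 0) :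
    lineCoeff (gaussianPeriodization t b j) r w =
      ∫ x : ℝ, gaussianPole t (b + r) j (x + w) := by
  have hpos := abs_pos.2 hw
  obtain ⟨β, hβ, hbound⟩ := exists_summable_bound_gaussianPole ht b j (1 + |w.re|) hpos
  have hfar : ∀ (n : ℤ) (x : ℝ), |w.im| ≤ ‖(x : ℂ) + w + n‖ := fun n x => by
    simpa using abs_im_le_norm ((x : ℂ) + w + n)
  have hterm : ∀ n : ℤ, lineCoeff (fun v => gaussianPole t b j (v + n)) r w =
      ∫ x in (0 : ℝ)..1, gaussianPole t (b + r) j ((x + n : ℝ) + w) := fun n => by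
    refine intervalIntegral.integral_congr fun x _ => ?_
    have hee : ee (-r * (x + w)) = ee (-((r : ℝ) * (x + w + n))) := by
      rw [← ee_add_int (-((r : ℝ) * (x + w + n))) (r * n)]
      push_cast
      ring_nf
    beta_reduce
    rw [hee, gaussianPole_mul_ee, ofReal_add, ofReal_intCast, add_right_comm]
  have hsum := hasSum_lineCoeff_tsum (F := fun n : ℤ => fun v => gaussianPole t b j (v + n))
    (fun n x => (differentiableAt_gaussianPole_add t b j
      (norm_pos_iff.1 (hpos.trans_le (hfar n x)))).continuousAt)
    (hβ.mul_left (Real.exp (Real.pi * t * w.im ^ 2 + 2 * Real.pi * |b| * |w.im|)))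
    (fun n x hx => ?_) r
  · simp only [hterm] at hsum
    exact hsum.unique (integrable_gaussianPole ht (b + r) j hw).hasSum_intervalIntegral_comp_add_int
  · have hx₁ : |x| ≤ 1 := by
      rw [Set.uIoc_of_le zero_le_one] at hx
      exact abs_le.2 ⟨by linarith [hx.1], hx.2⟩
    have hre : |((x : ℂ) + w).re| ≤ 1 + |w.re| := by
      simpa using (abs_add_le x w.re).trans (add_le_add_left hx₁ _)
    simpa using hbound _ hre n (hfar n x)

lemma lineCoeff_comp_sub (f : ℂ → ℂ) (u : ℂ) (r : ℤ) (w : ℂ) :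
    lineCoeff (fun z => f (z - u)) r w = lineCoeff f r (w - u) * ee (-(r * u)) := by
  rw [lineCoeff, lineCoeff, ← intervalIntegral.integral_mul_const]
  refine intervalIntegral.integral_congr fun x _ => ?_
  rw [mul_assoc, ← ee_add, add_sub_assoc]
  ring_nf

/-- The growth `πm y²/τ₂` allowed in a polar kernel is exactly that of the Gaussian of parameter
`t = m/τ₂`. -/
lemma isPolarKernel_gaussianPeriodization {m : ℕ} (hm : m ≠ 0) {τ : ℂ} (hτ : 0 < τ.im) (u : ℂ)
    (b : ℝ) (k : ℕ) :
    IsPolarKernel m τ u (fun z => gaussianPeriodization (m / τ.im) b (k + 1) (z - u))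
      (fun r => (-1) ^ (k + 1) / k.factorial * gaussianMoment (m / τ.im) (b + r) k *
        ee (-(r * u)))
      (fun r => (gaussianMoment (m / τ.im) (-(b + r)) k / k.factorial : ℝ) * ee (-(r * u))) := by
  have ht : 0 < m / τ.im := div_pos (Nat.cast_pos.2 (Nat.pos_of_ne_zero hm)) hτ
  refine ⟨fun z => ?_, fun z hz => ?_, fun δ hδ => ?_, fun r w hw => ?_, fun r w hw => ?_⟩
  · rw [add_sub_right_comm, periodic_gaussianPeriodization]
  · refine differentiableAt_comp_sub_const.2 (differentiableAt_gaussianPeriodization ht b _ ?_)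
    exact fun n hn => hz (-n) (by simpa using eq_neg_of_add_eq_zero_left hn)
  · obtain ⟨C, hC⟩ := exists_norm_gaussianPeriodization_le ht b (k + 1) hδ
    refine ⟨C, 2 * Real.pi * |b|, fun z hz => (hC _ hz).trans_eq ?_⟩
    ring_nf
  · have him : 0 < (w - u).im := by rw [sub_im]; exact sub_pos.2 hw
    rw [lineCoeff_comp_sub, lineCoeff_gaussianPeriodization ht _ _ _ him.ne',
      integral_gaussianPole_of_im_pos ht _ _ him]
  · have him : (w - u).im < 0 := by rw [sub_im]; exact sub_neg.2 hw
    rw [lineCoeff_comp_sub, lineCoeff_gaussianPeriodization ht _ _ _ him.ne,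
      integral_gaussianPole_of_im_neg ht _ _ him]

end GaussianPeriodization

/-! ### Eichler integrals as canonical coefficients -/

lemma sign_mul_of_pos {a : ℝ} (ha : 0 < a) (b : ℝ) : Real.sign (a * b) = Real.sign b := by
  simp [Real.sign, mul_pos_iff_of_pos_left ha, mul_neg_iff, ha, ha.not_gt]

lemma midCoeff_gaussianMoment_zero {t c : ℝ} (ht : 0 < t) (hc : 0 < c) (b : ℝ) :
    midCoeff (-(c * b)) (-(gaussianMoment t b 0 : ℝ)) (gaussianMoment t (-b) 0 : ℝ) =
      (Real.sign b * erfc (√(Real.pi / t) * |b|) / 2 : ℝ) := by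
  simp only [gaussianMoment_zero ht]
  rcases lt_trichotomy b 0 with hb | rfl | hb
  · rw [midCoeff, if_pos (by nlinarith), Real.sign_of_neg hb, abs_of_neg hb, mul_neg]
    push_cast
    ring
  · simp [midCoeff]
  · rw [midCoeff, if_neg (by nlinarith), if_pos (by nlinarith), Real.sign_of_pos hb, abs_of_pos hb,
      mul_neg, neg_neg, one_mul]

lemma midCoeff_gaussianMoment_one {t c : ℝ} (ht : 0 < t) (hc : 0 < c) (b : ℝ) :
    midCoeff (-(c * b)) (gaussianMoment t b 1 : ℝ) (gaussianMoment t (-b) 1 : ℝ) =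
      (√t / (2 * Real.pi) * Real.exp (-(Real.pi * b ^ 2 / t)) -
        |b| * erfc (√(Real.pi / t) * |b|) / 2 : ℝ) := by
  simp only [gaussianMoment_one ht, gaussianMoment_zero ht, neg_sq]
  rcases lt_trichotomy b 0 with hb | rfl | hb
  · rw [midCoeff, if_pos (by nlinarith), abs_of_neg hb, mul_neg]
    push_cast
    ring
  · simp [midCoeff]
  · rw [midCoeff, if_neg (by nlinarith), if_pos (by nlinarith), abs_of_pos hb, mul_neg, neg_neg]
    push_cast
    ring

lemma conj_ee (x : ℂ) : (starRingEnd ℂ) (ee x) = ee (-(starRingEnd ℂ) x) := by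
  rw [ee, ee, ← exp_conj]
  congr 1
  simp only [map_mul, conj_I, conj_ofReal, map_ofNat]
  ring

variable {m : ℕ} {τ : ℂ}

lemma sqrt_pi_div_mul_abs (hm : m ≠ 0) (hτ : 0 < τ.im) (η : ℝ) :
    √(Real.pi / (m / τ.im)) * |2 * m * η| = 2 * |η| * √(Real.pi * m * τ.im) := by
  have hm₀ : (0 : ℝ) < m := Nat.cast_pos.2 (Nat.pos_of_ne_zero hm)
  have hsq : Real.pi * m * τ.im = Real.pi / (m / τ.im) * (m : ℝ) ^ 2 := by field_simp
  rw [hsq, Real.sqrt_mul (by positivity), Real.sqrt_sq hm₀.le, abs_mul, abs_mul, Nat.abs_cast,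
    abs_two]
  ring

lemma sqrt_div_im (hm : m ≠ 0) (hτ : 0 < τ.im) : √(m / τ.im) = m / √(m * τ.im) := by
  have hm₀ : (0 : ℝ) < m := Nat.cast_pos.2 (Nat.pos_of_ne_zero hm)
  rw [eq_div_iff (Real.sqrt_pos.2 (by positivity)).ne', ← Real.sqrt_mul (by positivity),
    show (m : ℝ) / τ.im * (m * τ.im) = (m : ℝ) ^ 2 by field_simp, Real.sqrt_sq hm₀.le]

lemma ee_mul_canonTerm (hm : m ≠ 0) (s : ℚ × ℚ) (a b : ℤ → ℂ) (l n : ℤ) :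
    ee (-(m : ℂ) * s.1 * zpt s τ) * canonTerm m τ (zpt s τ) (fun r => a r * ee (-(r * zpt s τ)))
        (fun r => b r * ee (-(r * zpt s τ))) (l + 2 * m * n) =
      ee (m * s.1 * s.2) * ee (-(2 * m * s.2 * lamVal m s l n)) * ee (-m * lamVal m s l n ^ 2 * τ) *
        midCoeff (-(τ.im / (2 * m) * (2 * m * lamVal m s l n)))
          (a (l + 2 * m * n)) (b (l + 2 * m * n)) := by
  have hm₀ : (m : ℝ) ≠ 0 := Nat.cast_ne_zero.2 hm
  have hm₁ : (m : ℂ) ≠ 0 := Nat.cast_ne_zero.2 hm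
  have hexp : ee (-(m : ℂ) * s.1 * zpt s τ) * ee (-((l + 2 * m * n : ℤ) ^ 2 * τ / (4 * m))) *
      ee (-((l + 2 * m * n : ℤ) * zpt s τ)) =
      ee (m * s.1 * s.2) * ee (-(2 * m * s.2 * lamVal m s l n)) *
        ee (-m * lamVal m s l n ^ 2 * τ) := by
    simp only [← ee_add]
    congr 1
    unfold zpt lamVal
    push_cast
    field_simp
    ring
  have him : (-((l + 2 * m * n : ℤ) * τ / (2 * m)) - zpt s τ).im =
      -(τ.im / (2 * m) * (2 * m * lamVal m s l n)) := by
    rw [im_neg_div_sub_zpt hm, lamVal]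
    push_cast
    field_simp
    ring
  rw [canonTerm, midCoeff_mul_right, him, ← hexp]
  ring

lemma two_mul_add_eq_lamVal (hm : m ≠ 0) (s : ℚ × ℚ) (l n : ℤ) :
    2 * m * (s.1 : ℝ) + (l + 2 * m * n : ℤ) = 2 * m * lamVal m s l n := by
  have hm₀ : (m : ℝ) ≠ 0 := Nat.cast_ne_zero.2 hm
  rw [lamVal]
  push_cast
  field_simp
  ring

lemma ee_mul_canonTerm_gaussianMoment_zero (hm : m ≠ 0) (hτ : 0 < τ.im) (s : ℚ × ℚ) (l n : ℤ) :
    ee (-(m : ℂ) * s.1 * zpt s τ) * canonTerm m τ (zpt s τ)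
        (fun r => -(gaussianMoment (m / τ.im) (2 * m * s.1 + r) 0 : ℝ) * ee (-(r * zpt s τ)))
        (fun r => (gaussianMoment (m / τ.im) (-(2 * m * s.1 + r)) 0 : ℝ) * ee (-(r * zpt s τ)))
        (l + 2 * m * n) =
      ee (m * s.1 * s.2) / 2 * (Real.sign (lamVal m s l n) * ee (-(2 * m * s.2 * lamVal m s l n)) *
        erfc (2 * |lamVal m s l n| * √(Real.pi * m * τ.im)) *
          ee (-m * lamVal m s l n ^ 2 * τ)) := by
  have : (0 : ℝ) < m := Nat.cast_pos.2 (Nat.pos_of_ne_zero hm)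
  rw [ee_mul_canonTerm hm, two_mul_add_eq_lamVal hm, midCoeff_gaussianMoment_zero (by positivity)
    (by positivity), sign_mul_of_pos (by positivity), sqrt_pi_div_mul_abs hm hτ]
  push_cast
  ring

lemma ee_mul_canonTerm_gaussianMoment_one (hm : m ≠ 0) (hτ : 0 < τ.im) (s : ℚ × ℚ) (l n : ℤ) :
    ee (-(m : ℂ) * s.1 * zpt s τ) * canonTerm m τ (zpt s τ)
        (fun r => (gaussianMoment (m / τ.im) (2 * m * s.1 + r) 1 : ℝ) * ee (-(r * zpt s τ)))
        (fun r => (gaussianMoment (m / τ.im) (-(2 * m * s.1 + r)) 1 : ℝ) * ee (-(r * zpt s τ)))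
        (l + 2 * m * n) =
      m * ee (m * s.1 * s.2) *
        (ee (-(2 * m * s.2 * lamVal m s l n)) *
            ee (-m * lamVal m s l n ^ 2 * (starRingEnd ℂ) τ) /
            (2 * Real.pi * √(m * τ.im) : ℝ) -
          |lamVal m s l n| * ee (-(2 * m * s.2 * lamVal m s l n)) *
            erfc (2 * |lamVal m s l n| * √(Real.pi * m * τ.im)) *
              ee (-m * lamVal m s l n ^ 2 * τ)) := by
  have : (0 : ℝ) < m := Nat.cast_pos.2 (Nat.pos_of_ne_zero hm)
  have hconj : ee (-m * lamVal m s l n ^ 2 * (starRingEnd ℂ) τ) =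
      ee (-m * lamVal m s l n ^ 2 * τ) *
        (Real.exp (-(Real.pi * (2 * m * lamVal m s l n) ^ 2 / (m / τ.im))) : ℝ) := by
    have hτ' : (starRingEnd ℂ) τ = τ - 2 * I * τ.im := by apply Complex.ext <;> simp; ring
    rw [show Real.pi * (2 * m * lamVal m s l n) ^ 2 / (m / τ.im) =
      4 * Real.pi * m * lamVal m s l n ^ 2 * τ.im by field_simp; ring, ofReal_exp, ee, ee,
      ← Complex.exp_add, hτ']
    congr 1
    push_cast
    linear_combination (4 * (Real.pi : ℂ) * m * lamVal m s l n ^ 2 * τ.im) * I_sq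
  rw [ee_mul_canonTerm hm, two_mul_add_eq_lamVal hm, midCoeff_gaussianMoment_one (by positivity)
    (by positivity), sqrt_pi_div_mul_abs hm hτ, hconj, sqrt_div_im hm hτ, abs_mul, abs_mul,
    Nat.abs_cast, abs_two]
  push_cast
  ring

lemma summable_conj_thS_terms (hm : m ≠ 0) (hτ : 0 < τ.im) (s : ℚ × ℚ) (l : ℤ) :
    Summable fun n : ℤ => ee (-(2 * m * s.2 * lamVal m s l n)) *
      ee (-m * lamVal m s l n ^ 2 * (starRingEnd ℂ) τ) := by
  have : (0 : ℝ) < m := Nat.cast_pos.2 (Nat.pos_of_ne_zero hm)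
  set a : ℝ := s.1 + l / (2 * m) with ha
  refine Summable.of_norm_bounded (g := fun n : ℤ => Real.exp (2 * Real.pi * m * τ.im * a ^ 2) *
    Real.exp (-(Real.pi * m * τ.im) * n ^ 2 + 0 * |(n : ℝ)|))
    ((summable_exp_neg_mul_sq_add_abs (by positivity) 0).mul_left _) fun n => ?_
  have hre : (-(2 * m * s.2 * lamVal m s l n) : ℂ) =
      (-(2 * m * s.2 * lamVal m s l n) : ℝ) := by push_cast; ring
  have hconj : (-m * lamVal m s l n ^ 2 * (starRingEnd ℂ) τ : ℂ) =
      (-m * lamVal m s l n ^ 2 : ℝ) * (starRingEnd ℂ) τ := by push_cast; ring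
  have hη : lamVal m s l n = n + a := by rw [lamVal, ha]; ring
  rw [norm_mul, norm_ee, norm_ee, hre, hconj, ofReal_im, im_ofReal_mul, conj_im, ← Real.exp_add,
    ← Real.exp_add, hη]
  refine Real.exp_le_exp.2 ?_
  have hpos : 0 ≤ Real.pi * m * τ.im * (n + 2 * a) ^ 2 := by positivity
  linarith

lemma conj_thS (m : ℕ) (s : ℚ × ℚ) (l : ℤ) (τ : ℂ) :
    (starRingEnd ℂ) (thS m s l τ) = ee (m * s.1 * s.2) *
      ∑' n : ℤ, ee (-(2 * m * s.2 * lamVal m s l n)) *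
        ee (-m * lamVal m s l n ^ 2 * (starRingEnd ℂ) τ) := by
  rw [thS, map_mul, conj_ee, conj_tsum]
  simp only [map_mul, map_neg, map_pow, conj_ee, map_natCast, map_ratCast, conj_ofReal, map_ofNat,
    neg_mul, neg_neg]

/-- The sum of Gaussian-damped poles of order `j` at the points of `zpt s τ + ℤτ + ℤ`. It is
written as the elliptic average of the sum over `zpt s τ + ℤ`. -/
def gaussianPolarPart (m : ℕ) (s : ℚ × ℚ) (j : ℕ) (τ z : ℂ) : ℂ :=
  ee (-(m : ℂ) * s.1 * zpt s τ) * ellipticAverage m τ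
    (fun z => gaussianPeriodization (m / τ.im) (2 * m * s.1) j (z - zpt s τ)) z

lemma isPolarPart_gaussianPolarPart_one (hm : m ≠ 0) (hτ : 0 < τ.im) (s : ℚ × ℚ) :
    IsPolarPart m τ (zpt s τ) (gaussianPolarPart m s 1 τ) 0
      (ee (-(m : ℂ) * s.1 * zpt s τ)) (fun l => ThStar m s l τ) := by
  have hker := isPolarKernel_gaussianPeriodization hm hτ (zpt s τ) (2 * m * s.1) 0
  simp only [zero_add, pow_one, Nat.factorial_zero, Nat.cast_one, div_one, neg_one_mul] at hker
  have ht : 0 < m / τ.im := div_pos (Nat.cast_pos.2 (Nat.pos_of_ne_zero hm)) hτ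
  have hpp := (hasPrincipalPart_gaussianPeriodization ht
    (hasPrincipalPart_gaussianPole_one (m / τ.im) (2 * m * s.1))).comp_sub (zpt s τ)
  convert (hker.isPolarPart hm hτ hpp).const_mul (ee (-(m : ℂ) * s.1 * zpt s τ)) using 1
  · rfl
  · rw [mul_zero]
  · rw [mul_one]
  · funext l
    rw [← tsum_mul_left, ThStar, ← tsum_mul_left]
    exact tsum_congr fun n => (ee_mul_canonTerm_gaussianMoment_zero hm hτ s l n).symm

lemma isPolarPart_gaussianPolarPart_two (hm : m ≠ 0) (hτ : 0 < τ.im) (s : ℚ × ℚ) :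
    IsPolarPart m τ (zpt s τ) (gaussianPolarPart m s 2 τ)
      (ee (-(m : ℂ) * s.1 * zpt s τ)) (-(2 * m * s.1) * ee (-(m : ℂ) * s.1 * zpt s τ))
      (fun l => m * thSstar m s l τ) := by
  have hker := isPolarKernel_gaussianPeriodization hm hτ (zpt s τ) (2 * m * s.1) 1
  simp only [one_add_one_eq_two, even_two, Even.neg_pow, one_pow, Nat.factorial_one, Nat.cast_one,
    div_one, one_mul] at hker
  have ht : 0 < m / τ.im := div_pos (Nat.cast_pos.2 (Nat.pos_of_ne_zero hm)) hτ
  have hpp := (hasPrincipalPart_gaussianPeriodization ht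
    (hasPrincipalPart_gaussianPole_two (m / τ.im) (2 * m * s.1))).comp_sub (zpt s τ)
  convert (hker.isPolarPart hm hτ hpp).const_mul (ee (-(m : ℂ) * s.1 * zpt s τ)) using 1
  · rfl
  · rw [mul_one]
  · push_cast
    ring
  · funext l
    have hsum := (hker.summable_canonTerm hm hτ l).mul_left (ee (-(m : ℂ) * s.1 * zpt s τ))
    rw [← tsum_mul_left]
    simp only [ee_mul_canonTerm_gaussianMoment_one hm hτ] at hsum ⊢
    have hmul : m * ee (m * s.1 * s.2) ≠ 0 := mul_ne_zero (Nat.cast_ne_zero.2 hm) (ee_ne_zero _)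
    have hF := (summable_conj_thS_terms hm hτ s l).div_const
      ((2 * Real.pi * √(m * τ.im) : ℝ) : ℂ)
    have hG := hF.sub ((summable_mul_left_iff hmul).1 hsum)
    simp only [sub_sub_cancel] at hG
    rw [tsum_mul_left, hF.tsum_sub hG, tsum_div_const, thSstar, conj_thS]
    ring

/-! ### The canonical decomposition -/

/-- The set of the points `z_s`, `s ∈ S`, at which a meromorphic Jacobi form may have poles. -/
def polarPoints (S : Set (ℚ × ℚ)) (τ : ℂ) : Set ℂ := (fun s => zpt s τ) '' S

lemma notMem_polarPoints {S : Set (ℚ × ℚ)} {τ z : ℂ} :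
    z ∉ polarPoints S τ ↔ ∀ s ∈ S, z ≠ zpt s τ := by
  simp only [polarPoints, Set.mem_image, not_exists, not_and, ne_eq, eq_comm]

lemma zpt_add_int (s : ℚ × ℚ) (lam mu : ℤ) (τ : ℂ) :
    zpt (s.1 + lam, s.2 + mu) τ = zpt s τ + lam * τ + mu := by
  simp only [zpt]; push_cast; ring

lemma zpt_injective {τ : ℂ} (hτ : 0 < τ.im) : Function.Injective (zpt · τ) := by
  intro s s' (h : (s.1 : ℂ) * τ + s.2 = s'.1 * τ + s'.2)
  have him := congrArg Complex.im h
  simp only [add_im, mul_im, ratCast_re, ratCast_im, zero_mul, add_zero, mul_eq_mul_right_iff,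
    Rat.cast_inj, hτ.ne', or_false] at him
  rw [him, add_right_inj, Rat.cast_inj] at h
  exact Prod.ext him h

/-- The coset `s + ℤ²`. -/
def intCoset (s : ℚ × ℚ) : Set (ℚ × ℚ) := Set.range fun n : ℤ × ℤ => (s.1 + n.1, s.2 + n.2)

lemma self_mem_intCoset (s : ℚ × ℚ) : s ∈ intCoset s := ⟨0, by simp⟩

lemma image_zpt_intCoset (s : ℚ × ℚ) (τ : ℂ) :
    (zpt · τ) '' intCoset s = latticeCoset τ (zpt s τ) := by
  ext z
  simp only [intCoset, latticeCoset, Set.mem_image, Set.exists_range_iff, zpt_add_int,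
    Prod.exists, Set.mem_ofPred_eq, eq_comm]

namespace IsRepSet

variable {S : Set (ℚ × ℚ)} {T : Finset (ℚ × ℚ)} (hT : IsRepSet S T)
include hT

lemma eq_iUnion_intCoset {k : ℤ} {m : ℕ} (Φ : MeroJacobiForm k m S) :
    S = ⋃ t ∈ T, intCoset t := by
  refine Set.Subset.antisymm (fun s hs => ?_) (Set.iUnion₂_subset fun t ht => ?_)
  · obtain ⟨t, ⟨ht, lam, mu, h1, h2⟩, -⟩ := hT.2 s hs
    exact Set.mem_iUnion₂.2 ⟨t, ht, (lam, mu), Prod.ext h1.symm h2.symm⟩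
  · rintro _ ⟨n, rfl⟩
    exact Φ.lattice_inv t (hT.1 ht) n.1 n.2

lemma pairwise_disjoint_intCoset :
    (T : Set (ℚ × ℚ)).Pairwise (Function.onFun Disjoint intCoset) := by
  intro t ht t' ht' hne
  refine Set.disjoint_left.2 ?_
  rintro _ ⟨n, rfl⟩ ⟨n', heq⟩
  simp only [Prod.mk.injEq] at heq
  refine hne ((hT.2 t (hT.1 ht)).unique ⟨ht, 0, 0, by simp, by simp⟩
    ⟨ht', n'.1 - n.1, n'.2 - n.2, ?_, ?_⟩) <;> push_cast <;> linarith

lemma polarPoints_eq {k : ℤ} {m : ℕ} (Φ : MeroJacobiForm k m S) (τ : ℂ) :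
    polarPoints S τ = ⋃ t ∈ T, latticeCoset τ (zpt t τ) := by
  rw [polarPoints, hT.eq_iUnion_intCoset Φ, Set.image_iUnion₂]
  simp only [image_zpt_intCoset]

lemma zpt_notMem_latticeCoset {τ : ℂ} (hτ : 0 < τ.im) {t t' : ℚ × ℚ} (ht : t ∈ T) (ht' : t' ∈ T)
    (hne : t ≠ t') : zpt t τ ∉ latticeCoset τ (zpt t' τ) := by
  rw [← image_zpt_intCoset, (zpt_injective hτ).mem_set_image]
  exact Set.disjoint_left.1 (hT.pairwise_disjoint_intCoset ht ht' hne) (self_mem_intCoset t)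

end IsRepSet

section

variable {ι : Type*} {τ : ℂ} (hτ : 0 < τ.im) (T : Finset ι) (u : ι → ℂ)
include hτ

lemma eventually_notMem_iUnion_latticeCoset (z : ℂ) :
    ∀ᶠ z' in 𝓝[≠] z, z' ∉ ⋃ i ∈ T, latticeCoset τ (u i) := by
  have h (i : ι) : ∀ᶠ z' in 𝓝[≠] z, z' ∉ latticeCoset τ (u i) := by
    have hclosed : IsClosed (latticeCoset τ (u i) \ {z}) :=
      isClosed_of_subset_latticeCoset hτ Set.sdiff_subset
    have hev := hclosed.isOpen_compl.mem_nhds (x := z) fun hz => hz.2 rfl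
    filter_upwards [nhdsWithin_le_nhds hev, self_mem_nhdsWithin] with z' hz' hne hmem
    exact hz' ⟨hmem, hne⟩
  filter_upwards [(eventually_all_finset T).2 fun i _ => h i] with z' hz'
  simpa only [Set.mem_iUnion₂, not_exists] using hz'

lemma eventually_line_notMem_iUnion_latticeCoset (w : ℂ) :
    ∀ᶠ ε : ℝ in 𝓝[≠] 0, ∀ x : ℝ, (x : ℂ) + (w + ε * I) ∉ ⋃ i ∈ T, latticeCoset τ (u i) := by
  have h (i : ι) : ∀ᶠ ε : ℝ in 𝓝[≠] 0, ∀ lam : ℤ, ε ≠ (lam * τ + (u i - w)).im := by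
    obtain ⟨δ, hδ, hle⟩ := exists_forall_le_abs_im hτ (u i - w)
    have hlt : ∀ᶠ ε : ℝ in 𝓝[≠] 0, |ε| < δ :=
      nhdsWithin_le_nhds ((continuous_abs.tendsto' 0 0 abs_zero).eventually_lt_const hδ)
    filter_upwards [hlt, self_mem_nhdsWithin] with ε hε hne lam heq
    exact absurd (hle lam (heq ▸ hne)) (by rw [← heq]; exact not_le.2 hε)
  filter_upwards [(eventually_all_finset T).2 fun i _ => h i] with ε hε x hmem
  obtain ⟨i, hi, lam, mu, heq⟩ := Set.mem_iUnion₂.1 hmem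
  refine hε i hi lam ?_
  have him := congrArg Complex.im heq
  simp only [add_im, sub_im, ofReal_im, im_ofReal_mul, I_im, intCast_im] at him ⊢
  linarith

/-- Subtracting from `F` the polar parts at representatives of its poles leaves an elliptic
function with removable singularities, that is, a combination of theta functions. -/
lemma eq_sum_mul_jTheta_add_sum {m : ℕ} (hm : m ≠ 0) {T : Finset ι} {u : ι → ℂ}
    (hu : ∀ i ∈ T, ∀ j ∈ T, i ≠ j → u i ∉ latticeCoset τ (u j)) {F : ℂ → ℂ} {h : ℤ → ℂ}
    (hF : IsElliptic m τ F) (hFh : HasCanonCoeff m τ F h)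
    (hFd : ∀ z ∉ ⋃ i ∈ T, latticeCoset τ (u i), DifferentiableAt ℂ F z) {e d : ι → ℂ}
    (hFu : ∀ i ∈ T, HasPrincipalPart F (u i) (e i) (d i)) {X : ι → ℂ → ℂ} {c : ι → ℤ → ℂ}
    (hX : ∀ i ∈ T, IsPolarPart m τ (u i) (X i) (e i) (d i) (c i)) {z : ℂ}
    (hz : z ∉ ⋃ i ∈ T, latticeCoset τ (u i)) :
    F z = ∑ l ∈ Finset.range (2 * m), (h l - ∑ i ∈ T, c i l) * jTheta m l τ z +
      ∑ i ∈ T, X i z := by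
  let G : ℂ → ℂ := fun z => F z + (-1) * ∑ i ∈ T, X i z
  have hG : IsElliptic m τ G :=
    hF.add ((IsElliptic.sum T fun i hi => (hX i hi).isElliptic).const_mul (-1))
  have hGh : HasCanonCoeff m τ G fun l => h l + (-1) * ∑ i ∈ T, c i l :=
    hFh.add ((HasCanonCoeff.sum T fun i hi => (hX i hi).hasCanonCoeff).const_mul (-1))
  have hGd : ∀ z ∉ ⋃ i ∈ T, latticeCoset τ (u i), DifferentiableAt ℂ G z := fun z hz =>
    (hFd z hz).add ((DifferentiableAt.fun_sum fun i hi => (hX i hi).differentiableAt z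
      fun hmem => hz (Set.mem_biUnion hi hmem)).const_mul (-1))
  have hXu (i) (hi : i ∈ T) (j) (hj : j ∈ T) : HasPrincipalPart (X j) (u i)
      (if j = i then e i else 0) (if j = i then d i else 0) := by
    split_ifs with hji
    · exact hji ▸ (hX j hj).hasPrincipalPart
    · exact .of_continuousAt
        ((hX j hj).differentiableAt _ (hu i hi j hj (Ne.symm hji))).continuousAt
  have hGu (i) (hi : i ∈ T) : HasPrincipalPart G (u i) 0 0 := by
    convert (hFu i hi).add ((HasPrincipalPart.sum T (hXu i hi)).const_mul (-1)) using 1 <;>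
      simp [hi]
  have hGz := eq_sum_mul_jTheta hm hτ hG hGh
    (T.countable_toSet.biUnion fun i _ => countable_latticeCoset τ (u i))
    (eventually_notMem_iUnion_latticeCoset hτ T u) hGd (fun p hp => ?_) hz
  · simp only [G, neg_one_mul, ← sub_eq_add_neg] at hGz
    exact sub_eq_iff_eq_add.1 hGz
  · obtain ⟨i, hi, lam, mu, rfl⟩ := Set.mem_iUnion₂.1 hp
    exact (hG.hasPrincipalPart_zero_add (hGu i hi) lam mu).tendsto_sub_mul

end

namespace MeroJacobiForm

variable {k : ℤ} {m : ℕ} {S : Set (ℚ × ℚ)} (Φ : MeroJacobiForm k m S) {τ : ℂ} (hτ : 0 < τ.im)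
include hτ

lemma differentiableAt_toFun {z : ℂ} (hz : z ∉ polarPoints S τ) :
    DifferentiableAt ℂ (Φ.toFun τ) z :=
  DifferentiableAt.comp (f := fun z : ℂ => (τ, z)) z (Φ.holo τ hτ z (notMem_polarPoints.1 hz))
    ((differentiableAt_const τ).prodMk differentiableAt_id)

lemma lineIntegrable_toFun {w : ℂ} (hw : ∀ x : ℝ, (x : ℂ) + w ∉ polarPoints S τ) :
    LineIntegrable (Φ.toFun τ) w := by
  refine Continuous.intervalIntegrable (continuous_iff_continuousAt.2 fun x => ?_) 0 1
  exact ContinuousAt.comp (f := fun x : ℝ => (x : ℂ) + w)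
    (Φ.differentiableAt_toFun hτ (hw x)).continuousAt (by fun_prop)

end MeroJacobiForm

lemma IsCanonCoeff.tendsto_lineCoeff {m : ℕ} {φ : ℂ → ℂ → ℂ} {h : ℤ → ℂ → ℂ}
    (hh : IsCanonCoeff m φ h) {τ : ℂ} (hτ : 0 < τ.im) (l : ℤ) :
    Tendsto (fun ε : ℝ => (1 / 2 : ℂ) * (lineCoeff (φ τ) l (-(l * τ / (2 * m)) + ε * I) +
      lineCoeff (φ τ) l (-(l * τ / (2 * m)) - ε * I))) (𝓝[>] 0)
      (𝓝 (ee (l ^ 2 * τ / (4 * m)) * h l τ)) := by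
  have hline (v : ℂ) : lineCoeff (φ τ) l (-(l * τ / (2 * m)) + v) = ee (l ^ 2 * τ / (2 * m)) *
      ∫ x in (0 : ℝ)..1, φ τ (x + v - l * τ / (2 * m)) * ee (-l * (x + v)) := by
    rw [lineCoeff, ← intervalIntegral.integral_const_mul]
    refine intervalIntegral.integral_congr fun x _ => ?_
    rw [mul_left_comm, ← ee_add]
    ring_nf
  convert (hh l τ hτ).const_mul (ee (l ^ 2 * τ / (2 * m))) using 1
  · funext ε
    rw [sub_eq_add_neg (-(l * τ / (2 * m)) : ℂ), hline, hline]
    simp only [sub_eq_add_neg]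
    ring
  · rw [← mul_assoc, ← ee_add]
    ring_nf

lemma hasCanonCoeff_toFun {k : ℤ} {m : ℕ} {S : Set (ℚ × ℚ)} (Φ : MeroJacobiForm k m S)
    {T : Finset (ℚ × ℚ)} (hT : IsRepSet S T) {h : ℤ → ℂ → ℂ} (hh : IsCanonCoeff m Φ.toFun h)
    {τ : ℂ} (hτ : 0 < τ.im) : HasCanonCoeff m τ (Φ.toFun τ) fun l => h l τ := by
  refine fun l => ⟨?_, hh.tendsto_lineCoeff hτ l⟩
  have hline := eventually_line_notMem_iUnion_latticeCoset hτ T (zpt · τ) (-(l * τ / (2 * m)))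
  rw [← hT.polarPoints_eq Φ] at hline
  have hneg : Tendsto (fun ε : ℝ => -ε) (𝓝[>] 0) (𝓝[≠] 0) :=
    tendsto_nhdsWithin_iff.2 ⟨(continuous_neg.tendsto' 0 0 neg_zero).mono_left nhdsWithin_le_nhds,
      eventually_nhdsWithin_of_forall fun ε hε => neg_ne_zero.2 (ne_of_gt hε)⟩
  filter_upwards [hline.filter_mono (nhdsGT_le_nhdsNE 0), hneg.eventually hline] with ε hpos hneg
  refine ⟨Φ.lineIntegrable_toFun hτ hpos, Φ.lineIntegrable_toFun hτ fun x => ?_⟩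
  simpa only [ofReal_neg, neg_mul, ← sub_eq_add_neg] using hneg x

lemma IsLaurentData.hasPrincipalPart {m : ℕ} {S : Set (ℚ × ℚ)} {φ : ℂ → ℂ → ℂ}
    {E D : ℚ × ℚ → ℂ → ℂ} (hED : IsLaurentData m S φ E D) {s : ℚ × ℚ} (hs : s ∈ S) {τ : ℂ}
    (hτ : 0 < τ.im) :
    HasPrincipalPart (φ τ) (zpt s τ) (ee (-(m : ℂ) * s.1 * zpt s τ) * E s τ)
      (ee (-(m : ℂ) * s.1 * zpt s τ) * (D s τ - 2 * m * s.1 * E s τ)) := by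
  have hshift : HasPrincipalPart (fun z => ee (m * s.1 * zpt s τ) * φ τ (zpt s τ + z)) 0
      (E s τ) (D s τ - 2 * m * s.1 * E s τ) := by
    simpa only [HasPrincipalPart, sub_zero] using (hED s hs τ hτ).2
  refine (((hshift.const_mul (ee (-(m : ℂ) * s.1 * zpt s τ))).comp_sub (zpt s τ))).congr'
    (Eventually.of_forall fun z => ?_)
  simp only
  rw [← mul_assoc, ← ee_add, add_sub_cancel]
  ring_nf
  rw [ee_zero, one_mul]

lemma toFun_eq_sum_mul_jTheta_add_sum {k : ℤ} {m : ℕ} (hm : m ≠ 0) {S : Set (ℚ × ℚ)}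
    (Φ : MeroJacobiForm k m S) {T : Finset (ℚ × ℚ)} (hT : IsRepSet S T) {h : ℤ → ℂ → ℂ}
    (hh : IsCanonCoeff m Φ.toFun h) {E D : ℚ × ℚ → ℂ → ℂ} (hED : IsLaurentData m S Φ.toFun E D)
    {τ : ℂ} (hτ : 0 < τ.im) {A B : ℚ × ℚ → ℂ → ℂ} {a b : ℚ × ℚ → ℤ → ℂ}
    (hA : ∀ s, IsPolarPart m τ (zpt s τ) (A s) 0 (ee (-(m : ℂ) * s.1 * zpt s τ)) (a s))
    (hB : ∀ s, IsPolarPart m τ (zpt s τ) (B s) (ee (-(m : ℂ) * s.1 * zpt s τ))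
      (-(2 * m * s.1) * ee (-(m : ℂ) * s.1 * zpt s τ)) (b s))
    {z : ℂ} (hz : z ∉ polarPoints S τ) :
    Φ.toFun τ z =
      ∑ l ∈ Finset.range (2 * m), (h l τ - ∑ t ∈ T, (D t τ * a t l + E t τ * b t l)) *
        jTheta m l τ z + ∑ t ∈ T, (D t τ * A t z + E t τ * B t z) := by
  have hZ := hT.polarPoints_eq Φ τ
  have hX (t : ℚ × ℚ) : IsPolarPart m τ (zpt t τ) (fun z => D t τ * A t z + E t τ * B t z)
      (ee (-(m : ℂ) * t.1 * zpt t τ) * E t τ)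
      (ee (-(m : ℂ) * t.1 * zpt t τ) * (D t τ - 2 * m * t.1 * E t τ))
      (fun l => D t τ * a t l + E t τ * b t l) := by
    convert ((hA t).const_mul (D t τ)).add ((hB t).const_mul (E t τ)) using 1 <;> ring
  exact eq_sum_mul_jTheta_add_sum hτ hm (h := fun l => h l τ)
    (fun t ht t' ht' => hT.zpt_notMem_latticeCoset hτ ht ht') (Φ.elliptic τ hτ)
    (hasCanonCoeff_toFun Φ hT hh hτ) (fun z hz => Φ.differentiableAt_toFun hτ (hZ ▸ hz))
    (fun t ht => hED.hasPrincipalPart (hT.1 ht) hτ) (fun t _ => hX t) (hZ ▸ hz)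

lemma toFun_eq_finitePart_add_appell {k : ℤ} {m : ℕ} (hm : m ≠ 0) {S : Set (ℚ × ℚ)}
    (Φ : MeroJacobiForm k m S) {T : Finset (ℚ × ℚ)} (hT : IsRepSet S T) {h : ℤ → ℂ → ℂ}
    (hh : IsCanonCoeff m Φ.toFun h) {E D : ℚ × ℚ → ℂ → ℂ} (hED : IsLaurentData m S Φ.toFun E D)
    {τ : ℂ} (hτ : 0 < τ.im) {z : ℂ} (hz : z ∉ polarPoints S τ) :
    Φ.toFun τ z = finitePart m h τ z +
      ∑ t ∈ T, (D t τ * AppellA m t τ z + E t τ * AppellB m t τ z) := by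
  simpa only [finitePart, mul_zero, add_zero, Finset.sum_const_zero, sub_zero] using
    toFun_eq_sum_mul_jTheta_add_sum hm Φ hT hh hED hτ (isPolarPart_appellA hm hτ)
      (isPolarPart_appellB hm hτ) hz

/-! ### Gaussian principal parts -/

/-- A Gaussian in `z` centred at `u`: its absolute value is
`exp(2πm(Im z)²/τ₂ - πm|z-u|²/τ₂)`. -/
def gaussianWeight (m : ℕ) (τ u z : ℂ) : ℂ :=
  ee (m * I / (2 * τ.im) * (z ^ 2 - 2 * z * starRingEnd ℂ u + u * starRingEnd ℂ u))

/-- The principal part at `u` of a function `f`, damped by `gaussianWeight`; here `e`, `d` are the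
polar coefficients at `u` of the quotient of `f` by the weight. -/
def gaussianPart (m : ℕ) (τ u e d z : ℂ) : ℂ :=
  gaussianWeight m τ u z * (e / (2 * Real.pi * I * (z - u)) ^ 2 + d / (2 * Real.pi * I * (z - u)))

section GaussianWeight

variable {m : ℕ} {τ u : ℂ}

lemma gaussianWeight_ne_zero (z : ℂ) : gaussianWeight m τ u z ≠ 0 := ee_ne_zero _

lemma norm_gaussianWeight (z : ℂ) : ‖gaussianWeight m τ u z‖ =
    Real.exp (2 * Real.pi * m * z.im ^ 2 / τ.im) *
      Real.exp (-(Real.pi * m / τ.im) * ‖z - u‖ ^ 2) := by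
  have him : (m * I / (2 * τ.im) * (z ^ 2 - 2 * z * starRingEnd ℂ u + u * starRingEnd ℂ u)).im =
      m / (2 * τ.im) * (‖z - u‖ ^ 2 - 2 * z.im ^ 2) := by
    rw [show (m * I / (2 * τ.im) : ℂ) = ((m / (2 * τ.im) : ℝ) : ℂ) * I by push_cast; ring,
      mul_assoc, im_ofReal_mul, I_mul_im, ← normSq_eq_norm_sq]
    simp only [normSq_apply, sq, sub_re, sub_im, add_re, mul_re, mul_im, conj_re, conj_im,
      re_ofNat, im_ofNat]
    ring
  rw [gaussianWeight, norm_ee, him, ← Real.exp_add]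
  congr 1
  ring

lemma hasDerivAt_gaussianWeight (z : ℂ) : HasDerivAt (gaussianWeight m τ u)
    (gaussianWeight m τ u z * (2 * Real.pi * I * (m * I / τ.im * (z - starRingEnd ℂ u)))) z := by
  have hquad : HasDerivAt (fun z : ℂ => m * I / (2 * τ.im) *
      (z ^ 2 - 2 * z * starRingEnd ℂ u + u * starRingEnd ℂ u))
      (m * I / (2 * τ.im) * (2 * z - 2 * starRingEnd ℂ u)) z := by
    simpa using ((((hasDerivAt_id z).pow 2).sub (((hasDerivAt_id z).const_mul 2).mul_const
      (starRingEnd ℂ u))).add_const (u * starRingEnd ℂ u)).const_mul (m * I / (2 * τ.im) : ℂ)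
  refine (HasDerivAt.comp (h₂ := ee) z (hasDerivAt_ee _) hquad).congr_deriv ?_
  simp only [gaussianWeight]
  ring

lemma zpt_sub_conj (s : ℚ × ℚ) (τ : ℂ) :
    zpt s τ - starRingEnd ℂ (zpt s τ) = 2 * I * (s.1 * τ.im) := by
  have hτ : τ - starRingEnd ℂ τ = 2 * I * τ.im := by rw [sub_conj]; push_cast; ring
  simp only [zpt, map_add, map_mul, map_ratCast]
  linear_combination (s.1 : ℂ) * hτ

lemma gaussianWeight_zpt (hτ : 0 < τ.im) (s : ℚ × ℚ) (z : ℂ) :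
    gaussianWeight m τ (zpt s τ) z = ee (-(m : ℂ) * s.1 * zpt s τ) *
      (cexp (-(Real.pi * (m / τ.im : ℝ)) * (z - zpt s τ) ^ 2) *
        ee (-((2 * m * s.1 : ℝ) * (z - zpt s τ)))) := by
  have hne : (τ.im : ℂ) ≠ 0 := ofReal_ne_zero.2 hτ.ne'
  have hconj : starRingEnd ℂ (zpt s τ) = zpt s τ - 2 * I * (s.1 * τ.im) := by
    rw [← zpt_sub_conj, sub_sub_cancel]
  simp only [gaussianWeight, hconj, ee, ← Complex.exp_add]
  congr 1
  push_cast
  field_simp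
  linear_combination m * ((z - zpt s τ) ^ 2 + 2 * I * τ.im * s.1 * (2 * z - zpt s τ)) * I_sq

end GaussianWeight

lemma IsLaurentData.hasPrincipalPart_div_gaussianWeight {m : ℕ} {S : Set (ℚ × ℚ)}
    {φ : ℂ → ℂ → ℂ} {E D : ℚ × ℚ → ℂ → ℂ} (hED : IsLaurentData m S φ E D) {s : ℚ × ℚ}
    (hs : s ∈ S) {τ : ℂ} (hτ : 0 < τ.im) :
    HasPrincipalPart (fun z => φ τ z / gaussianWeight m τ (zpt s τ) z) (zpt s τ)
      (E s τ) (D s τ) := by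
  have hne : (τ.im : ℂ) ≠ 0 := ofReal_ne_zero.2 hτ.ne'
  have hW : gaussianWeight m τ (zpt s τ) (zpt s τ) = ee (-(m : ℂ) * s.1 * zpt s τ) := by
    simp [gaussianWeight_zpt hτ, ee_zero]
  have hinv := (hasDerivAt_gaussianWeight (m := m) (τ := τ) (u := zpt s τ) (zpt s τ)).inv
    (gaussianWeight_ne_zero _)
  have hpp := (hED.hasPrincipalPart hs hτ).mul_hasDerivAt hinv
  simp only [Pi.inv_apply, hW, zpt_sub_conj] at hpp
  have hc := ee_ne_zero (-(m : ℂ) * s.1 * zpt s τ)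
  generalize ee (-(m : ℂ) * s.1 * zpt s τ) = c at hpp hc
  have := two_pi_I_ne_zero
  convert hpp using 1
  · funext z
    rw [div_eq_inv_mul]
  · field_simp
  · field_simp
    linear_combination (2 * E s τ * m * s.1) * I_sq

lemma gaussianPart_comp_add_div {m : ℕ} {τ τ' u u' e d e' d' : ℂ} {f f' C : ℂ → ℂ} {j κ w : ℂ}
    (hf : HasPrincipalPart (fun z => f z / gaussianWeight m τ u z) u e d)
    (hf' : HasPrincipalPart (fun z => f' z / gaussianWeight m τ' u' z) u' e' d')
    (hj : j ≠ 0) (hu : (u + w) / j = u') (hκ : κ ≠ 0) (hC : ∀ z, C z ≠ 0)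
    (hff' : ∀ z, f' ((z + w) / j) = C z * f z)
    (hW : ∀ z, gaussianWeight m τ' u' ((z + w) / j) = κ * C z * gaussianWeight m τ u z) (z : ℂ) :
    gaussianPart m τ' u' e' d' ((z + w) / j) = C z * gaussianPart m τ u e d z := by
  have hscale : HasPrincipalPart (fun z => κ⁻¹ * (f z / gaussianWeight m τ u z)) u
      (j ^ 2 * e') (j * d') := by
    refine (hf'.comp_add_div hj hu).congr' (Eventually.of_forall fun z => ?_)
    have := hC z
    have := gaussianWeight_ne_zero (m := m) (τ := τ) (u := u) z
    simp only [hff', hW]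
    field_simp
  obtain ⟨he, hd⟩ := hscale.unique (hf.const_mul κ⁻¹)
  have hsub : (z + w) / j - u' = (z - u) / j := by rw [← hu]; ring
  have he' : e = κ * j ^ 2 * e' := by rw [mul_assoc, he, mul_inv_cancel_left₀ hκ]
  have hd' : d = κ * j * d' := by rw [mul_assoc, hd, mul_inv_cancel_left₀ hκ]
  rw [gaussianPart, gaussianPart, hW, hsub, he', hd']
  field_simp

lemma exists_forall_mul_le_norm_mul_add {τ : ℂ} (hτ : 0 < τ.im) :
    ∃ c > 0, ∀ lam n : ℤ, c * ((lam : ℝ) ^ 2 + n ^ 2) ≤ ‖lam * τ + n‖ ^ 2 := by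
  let z : UpperHalfPlane := ⟨τ, hτ⟩
  have hr := EisensteinSeries.r_pos z
  refine ⟨EisensteinSeries.r z ^ 2 / 2, by positivity, fun lam n => ?_⟩
  have hle : EisensteinSeries.r z * ‖![lam, n]‖ ≤ ‖lam * τ + n‖ := by
    rcases eq_or_ne ![lam, n] 0 with hzero | hne
    · rw [hzero, norm_zero, mul_zero]
      exact norm_nonneg _
    · exact EisensteinSeries.r_mul_max_le z hne
  have hlam : |(lam : ℝ)| ≤ ‖![lam, n]‖ := norm_le_pi_norm ![lam, n] 0
  have hn : |(n : ℝ)| ≤ ‖![lam, n]‖ := norm_le_pi_norm ![lam, n] 1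
  calc EisensteinSeries.r z ^ 2 / 2 * ((lam : ℝ) ^ 2 + n ^ 2)
      ≤ EisensteinSeries.r z ^ 2 / 2 * (‖![lam, n]‖ ^ 2 + ‖![lam, n]‖ ^ 2) := by
        rw [← sq_abs (lam : ℝ), ← sq_abs (n : ℝ)]
        gcongr
    _ = (EisensteinSeries.r z * ‖![lam, n]‖) ^ 2 := by ring
    _ ≤ _ := by gcongr

lemma summable_exp_neg_mul_norm_sq {τ : ℂ} (hτ : 0 < τ.im) {a : ℝ} (ha : 0 < a) (w : ℂ) :
    Summable fun n : ℤ × ℤ => Real.exp (-a * ‖w + n.1 * τ + n.2‖ ^ 2) := by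
  obtain ⟨c, hc, hle⟩ := exists_forall_mul_le_norm_mul_add hτ
  have hsum : Summable fun n : ℤ => Real.exp (-(a * c / 2) * n ^ 2) := by
    simpa using summable_exp_neg_mul_sq_add_abs (half_pos (mul_pos ha hc)) 0
  refine .of_nonneg_of_le (fun _ => (Real.exp_pos _).le) (fun n => ?_)
    ((hsum.mul_of_nonneg hsum (fun _ => (Real.exp_pos _).le)
      fun _ => (Real.exp_pos _).le).mul_left (Real.exp (a * ‖w‖ ^ 2)))
  rw [← Real.exp_add, ← Real.exp_add, Real.exp_le_exp]
  have htri : ‖n.1 * τ + n.2‖ ≤ ‖w + n.1 * τ + n.2‖ + ‖w‖ := by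
    simpa [add_assoc] using norm_sub_le (w + n.1 * τ + n.2) w
  have hsq : ‖n.1 * τ + n.2‖ ^ 2 ≤ 2 * (‖w + n.1 * τ + n.2‖ ^ 2 + ‖w‖ ^ 2) :=
    (pow_le_pow_left₀ (norm_nonneg _) htri 2).trans add_sq_le
  nlinarith [hle n.1 n.2]

section GaussianSum

variable {m : ℕ} {τ : ℂ} (hm : m ≠ 0) (hτ : 0 < τ.im)

include hτ in
lemma norm_ee_mul_gaussianWeight (u z : ℂ) (n : ℤ × ℤ) :
    ‖ee (m * n.1 ^ 2 * τ + 2 * m * n.1 * z) * gaussianWeight m τ u (z + n.1 * τ + n.2)‖ =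
      Real.exp (2 * Real.pi * m * z.im ^ 2 / τ.im) *
        Real.exp (-(Real.pi * m / τ.im) * ‖z - u + n.1 * τ + n.2‖ ^ 2) := by
  have him : (m * n.1 ^ 2 * τ + 2 * m * n.1 * z : ℂ).im =
      m * n.1 ^ 2 * τ.im + 2 * m * n.1 * z.im := by
    simp [← ofReal_natCast, ← ofReal_intCast, ← ofReal_pow, mul_assoc]
  rw [norm_mul, norm_ee, norm_gaussianWeight, ← mul_assoc, ← Real.exp_add, him]
  rw [show z + n.1 * τ + n.2 - u = z - u + n.1 * τ + n.2 by ring]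
  congr 2
  simp only [add_im, mul_im, intCast_re, intCast_im, zero_mul, add_zero]
  field_simp
  ring

include hm hτ

lemma summable_gaussianWeight_div {u z : ℂ} (hz : z ∉ latticeCoset τ u) (j : ℕ) :
    Summable fun n : ℤ × ℤ => ee (m * n.1 ^ 2 * τ + 2 * m * n.1 * z) *
      (gaussianWeight m τ u (z + n.1 * τ + n.2) /
        (2 * Real.pi * I * (z + n.1 * τ + n.2 - u)) ^ j) := by
  obtain ⟨δ, hδ, hgap⟩ := exists_forall_le_norm_of_ne_zero hτ (z - u)
  have : (0 : ℝ) < m := Nat.cast_pos.2 (Nat.pos_of_ne_zero hm)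
  have ha : 0 < Real.pi * m / τ.im := by have := Real.pi_pos; positivity
  refine .of_norm_bounded (((summable_exp_neg_mul_norm_sq hτ ha (z - u)).mul_left
    (Real.exp (2 * Real.pi * m * z.im ^ 2 / τ.im))).div_const ((2 * Real.pi * δ) ^ j)) fun n => ?_
  have hne : n.1 * τ + (z - u) - (-n.2 : ℤ) ≠ 0 := fun h0 =>
    hz ⟨-n.1, -n.2, by push_cast at h0 ⊢; linear_combination h0⟩
  have hle := hgap n.1 (-n.2) hne
  rw [show n.1 * τ + (z - u) - (-n.2 : ℤ) = z + n.1 * τ + n.2 - u by push_cast; ring] at hle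
  rw [← mul_div_assoc, norm_div, norm_ee_mul_gaussianWeight hτ, norm_pow, norm_mul,
    norm_mul, norm_mul, norm_I, mul_one, Complex.norm_ofNat, norm_real,
    Real.norm_of_nonneg Real.pi_pos.le]
  have := Real.pi_pos
  gcongr

lemma hasSum_gaussianWeight_div {s : ℚ × ℚ} {z : ℂ} (hz : z ∉ latticeCoset τ (zpt s τ)) (j : ℕ) :
    HasSum (fun n : ℤ × ℤ => ee (m * n.1 ^ 2 * τ + 2 * m * n.1 * z) *
      (gaussianWeight m τ (zpt s τ) (z + n.1 * τ + n.2) /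
        (2 * Real.pi * I * (z + n.1 * τ + n.2 - zpt s τ)) ^ j))
      (gaussianPolarPart m s j τ z) := by
  have hsum := summable_gaussianWeight_div hm hτ hz j
  convert hsum.hasSum using 1
  rw [hsum.tsum_prod, gaussianPolarPart, ellipticAverage, ← tsum_mul_left]
  refine tsum_congr fun lam => ?_
  rw [ellipticAverageTerm, gaussianPeriodization, mul_left_comm, ← tsum_mul_left, ← tsum_mul_left]
  refine tsum_congr fun n => ?_
  rw [gaussianWeight_zpt hτ, gaussianPole,
    show z + lam * τ + n - zpt s τ = lam * τ + z - zpt s τ + n by ring]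
  ring

end GaussianSum

section LatticeSum

variable {k : ℤ} {m : ℕ} {S : Set (ℚ × ℚ)} (Φ : MeroJacobiForm k m S) {E D : ℚ × ℚ → ℂ → ℂ}
  (hED : IsLaurentData m S Φ.toFun E D) {τ : ℂ} (hτ : 0 < τ.im)

lemma gaussianWeight_add_int (hτ : 0 < τ.im) (u : ℂ) (lam mu : ℤ) :
    ∃ κ ≠ 0, ∀ z, gaussianWeight m τ (u + (lam * τ + mu)) (z + (lam * τ + mu)) =
      κ * ee (-(m : ℂ) * (lam ^ 2 * τ + 2 * lam * z)) * gaussianWeight m τ u z := by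
  have hne : (τ.im : ℂ) ≠ 0 := ofReal_ne_zero.2 hτ.ne'
  have hconj : starRingEnd ℂ τ = τ - 2 * I * τ.im := by
    rw [show (2 * I * τ.im : ℂ) = (2 * τ.im : ℝ) * I by push_cast; ring, ← sub_conj,
      sub_sub_cancel]
  refine ⟨ee (-(m : ℂ) * lam * mu + m * I / (2 * τ.im) * (u * (lam * starRingEnd ℂ τ + mu) -
    starRingEnd ℂ u * (lam * τ + mu))), ee_ne_zero _, fun z => ?_⟩
  simp only [gaussianWeight, ← ee_add, map_add, map_mul, map_intCast, hconj]
  congr 1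
  field_simp
  linear_combination (lam * (2 * z + lam * τ + mu) * m * τ.im * 2) * I_sq

include hED hτ

lemma gaussianPart_zpt_add_int {s : ℚ × ℚ} (hs : s ∈ S) (lam mu : ℤ) (z : ℂ) :
    gaussianPart m τ (zpt (s.1 + lam, s.2 + mu) τ) (E (s.1 + lam, s.2 + mu) τ)
        (D (s.1 + lam, s.2 + mu) τ) (z + lam * τ + mu) =
      ee (-(m : ℂ) * (lam ^ 2 * τ + 2 * lam * z)) *
        gaussianPart m τ (zpt s τ) (E s τ) (D s τ) z := by
  obtain ⟨κ, hκ, hW⟩ := gaussianWeight_add_int (m := m) hτ (zpt s τ) lam mu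
  have hs' := Φ.lattice_inv s hs lam mu
  rw [← div_one (z + lam * τ + mu), add_assoc z]
  refine gaussianPart_comp_add_div
    (C := fun z => ee (-(m : ℂ) * (lam ^ 2 * τ + 2 * lam * z)))
    (hED.hasPrincipalPart_div_gaussianWeight hs hτ)
    (hED.hasPrincipalPart_div_gaussianWeight hs' hτ) one_ne_zero ?_ hκ (fun _ => ee_ne_zero _)
    (fun z => ?_) (fun z => ?_) z
  · rw [zpt_add_int, div_one, add_assoc]
  · rw [div_one, ← add_assoc]
    exact Φ.elliptic τ hτ z lam mu
  · rw [zpt_add_int, div_one, add_assoc (zpt s τ), hW]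

lemma gaussianPart_zpt_sub_int {s : ℚ × ℚ} (hs : s ∈ S) (lam mu : ℤ) (z : ℂ) :
    gaussianPart m τ (zpt (s.1 - lam, s.2 - mu) τ) (E (s.1 - lam, s.2 - mu) τ)
        (D (s.1 - lam, s.2 - mu) τ) z =
      ee (m * lam ^ 2 * τ + 2 * m * lam * z) *
        gaussianPart m τ (zpt s τ) (E s τ) (D s τ) (z + lam * τ + mu) := by
  have h := gaussianPart_zpt_add_int Φ hED hτ hs (-lam) (-mu) (z + lam * τ + mu)
  rw [show z + lam * τ + mu + (-lam : ℤ) * τ + (-mu : ℤ) = z by push_cast; ring] at h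
  simp only [Int.cast_neg, ← sub_eq_add_neg] at h
  rw [h, ← ee_add_int (m * lam ^ 2 * τ + 2 * m * lam * z) (2 * m * lam * mu)]
  congr 2
  push_cast
  ring

end LatticeSum

/-- The sum over all poles `z_s`, `s ∈ S`, of the Gaussian-damped principal parts of a meromorphic
Jacobi form with Laurent data `E`, `D`. -/
def gaussianSum (m : ℕ) (S : Set (ℚ × ℚ)) (E D : ℚ × ℚ → ℂ → ℂ) (τ z : ℂ) : ℂ :=
  ∑' s : S, gaussianPart m τ (zpt s τ) (E s τ) (D s τ) z

section GaussianSum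

variable {k : ℤ} {m : ℕ} (hm : m ≠ 0) {S : Set (ℚ × ℚ)} (Φ : MeroJacobiForm k m S)
  {E D : ℚ × ℚ → ℂ → ℂ} (hED : IsLaurentData m S Φ.toFun E D) {τ : ℂ} (hτ : 0 < τ.im)
include hm hED hτ

lemma hasSum_gaussianPart_intCoset {s : ℚ × ℚ} (hs : s ∈ S) {z : ℂ}
    (hz : z ∉ latticeCoset τ (zpt s τ)) :
    HasSum (fun s' : intCoset s => gaussianPart m τ (zpt s' τ) (E s' τ) (D s' τ) z)
      (D s τ * gaussianPolarPart m s 1 τ z + E s τ * gaussianPolarPart m s 2 τ z) := by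
  have hinj : Function.Injective fun n : ℤ × ℤ => (s.1 - n.1, s.2 - n.2) := fun n n' h => by
    simpa [Prod.ext_iff] using h
  have hrange : intCoset s = Set.range fun n : ℤ × ℤ => (s.1 - n.1, s.2 - n.2) := by
    rw [intCoset, ← (Equiv.neg (ℤ × ℤ)).surjective.range_comp]
    simp [Function.comp_def, sub_eq_add_neg]
  rw [hrange]
  refine (hinj.hasSum_range_iff
    (f := fun s' => gaussianPart m τ (zpt s' τ) (E s' τ) (D s' τ) z)).2 ?_
  refine (((hasSum_gaussianWeight_div hm hτ hz 1).mul_left (D s τ)).add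
    ((hasSum_gaussianWeight_div hm hτ hz 2).mul_left (E s τ))).congr_fun fun n => ?_
  simp only [Function.comp_apply]
  rw [gaussianPart_zpt_sub_int Φ hED hτ hs, gaussianPart]
  ring

lemma gaussianSum_eq {T : Finset (ℚ × ℚ)} (hT : IsRepSet S T) {z : ℂ} (hz : z ∉ polarPoints S τ) :
    gaussianSum m S E D τ z =
      ∑ t ∈ T, (D t τ * gaussianPolarPart m t 1 τ z + E t τ * gaussianPolarPart m t 2 τ z) := by
  rw [hT.polarPoints_eq Φ] at hz
  have hsum := hasSum_sum_disjoint
    (f := fun s => gaussianPart m τ (zpt s τ) (E s τ) (D s τ) z) T hT.pairwise_disjoint_intCoset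
    fun t ht => hasSum_gaussianPart_intCoset hm Φ hED hτ (hT.1 ht)
      fun hmem => hz (Set.mem_biUnion ht hmem)
  rw [← hT.eq_iUnion_intCoset Φ] at hsum
  exact hsum.tsum_eq

end GaussianSum

/-! ### Modularity of the completion -/

/-- The right action of the matrix `(a, b; c, d)` on row vectors. -/
def slAct (a b c d : ℤ) (s : ℚ × ℚ) : ℚ × ℚ := (s.1 * a + s.2 * c, s.1 * b + s.2 * d)

lemma slAct_slAct_inv {a b c d : ℤ} (hdet : a * d - b * c = 1) (s : ℚ × ℚ) :
    slAct d (-b) (-c) a (slAct a b c d s) = s := by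
  have hdet' : (a : ℚ) * d - b * c = 1 := by exact_mod_cast hdet
  refine Prod.ext ?_ ?_ <;> simp only [slAct] <;> push_cast
  · linear_combination s.1 * hdet'
  · linear_combination s.2 * hdet'

/-- The permutation of `S` induced by an element of `SL(2,ℤ)`. -/
def slEquiv {k : ℤ} {m : ℕ} {S : Set (ℚ × ℚ)} (Φ : MeroJacobiForm k m S) {a b c d : ℤ}
    (hdet : a * d - b * c = 1) : S ≃ S where
  toFun s := ⟨slAct a b c d s, Φ.sl_inv s s.2 a b c d hdet⟩
  invFun s := ⟨slAct d (-b) (-c) a s, Φ.sl_inv s s.2 d (-b) (-c) a (by linear_combination hdet)⟩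
  left_inv s := Subtype.ext (slAct_slAct_inv hdet s)
  right_inv s := Subtype.ext <| by
    simpa only [neg_neg] using slAct_slAct_inv (a := d) (b := -b) (c := -c) (d := a)
      (by linear_combination hdet) s

section Modular

variable {τ : ℂ} (hτ : 0 < τ.im) {a b c d : ℤ} (hdet : a * d - b * c = 1)
include hτ hdet

lemma intCast_mul_add_ne_zero : (c : ℂ) * τ + d ≠ 0 := by
  have hcd : ![(c : ℝ), d] ≠ 0 := by
    intro h0
    have hc : c = 0 := by simpa using congrFun h0 0
    have hd : d = 0 := by simpa using congrFun h0 1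
    simp [hc, hd] at hdet
  simpa using UpperHalfPlane.linear_ne_zero ⟨τ, hτ⟩ hcd

lemma im_moebius : ((a * τ + b) / (c * τ + d) : ℂ).im = τ.im / normSq (c * τ + d) := by
  have hdet' : (a : ℝ) * d - b * c = 1 := by exact_mod_cast hdet
  have := normSq_pos.2 (intCast_mul_add_ne_zero hτ hdet)
  rw [div_im]
  simp only [add_im, add_re, mul_im, mul_re, intCast_re, intCast_im]
  field_simp
  linear_combination τ.im * hdet'

lemma im_moebius_pos : 0 < ((a * τ + b) / (c * τ + d) : ℂ).im := by
  rw [im_moebius hτ hdet]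
  exact div_pos hτ (normSq_pos.2 (intCast_mul_add_ne_zero hτ hdet))

lemma zpt_moebius (s : ℚ × ℚ) :
    zpt s ((a * τ + b) / (c * τ + d)) = zpt (slAct a b c d s) τ / (c * τ + d) := by
  have hj := intCast_mul_add_ne_zero hτ hdet
  simp only [zpt, slAct]
  rw [eq_div_iff hj, add_mul, mul_assoc, div_mul_cancel₀ _ hj]
  push_cast
  ring

lemma gaussianWeight_moebius (m : ℕ) (u z : ℂ) :
    gaussianWeight m ((a * τ + b) / (c * τ + d)) (u / (c * τ + d)) (z / (c * τ + d)) =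
      ee (m * c * z ^ 2 / (c * τ + d)) * gaussianWeight m τ u z := by
  have hne : (τ.im : ℂ) ≠ 0 := ofReal_ne_zero.2 hτ.ne'
  have hj := intCast_mul_add_ne_zero hτ hdet
  have hconj : starRingEnd ℂ (c * τ + d) = c * τ + d - 2 * I * (c * τ.im) := by
    apply Complex.ext <;> simp; ring
  have hj' : starRingEnd ℂ (c * τ + d) ≠ 0 := (map_ne_zero _).2 hj
  rw [gaussianWeight, gaussianWeight, im_moebius hτ hdet, ← ee_add, map_div₀, ofReal_div,
    ← mul_conj]
  generalize starRingEnd ℂ (c * τ + d) = j' at hconj hj'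
  generalize (c * τ + d : ℂ) = j at hconj hj
  congr 1
  field_simp
  linear_combination (m * I * z ^ 2) * hconj - 2 * m * z ^ 2 * c * τ.im * I_sq

end Modular

/-- The completed finite part `φ̂^F` of a meromorphic Jacobi form with canonical coefficients `h`
and Laurent data `E`, `D`, for representatives `T` of the classes of poles. -/
def completedFinitePart (m : ℕ) (T : Finset (ℚ × ℚ)) (h : ℤ → ℂ → ℂ) (E D : ℚ × ℚ → ℂ → ℂ)
    (τ z : ℂ) : ℂ :=
  ∑ l ∈ Finset.range (2 * m),
    (h l τ - ∑ t ∈ T, (D t τ * ThStar m t l τ + m * E t τ * thSstar m t l τ)) * jTheta m l τ z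

lemma differentiable_completedFinitePart {m : ℕ} (hm : m ≠ 0) (T : Finset (ℚ × ℚ))
    (h : ℤ → ℂ → ℂ) (E D : ℚ × ℚ → ℂ → ℂ) {τ : ℂ} (hτ : 0 < τ.im) :
    Differentiable ℂ (completedFinitePart m T h E D τ) :=
  Differentiable.fun_sum fun l _ => (differentiable_jTheta hm hτ l).const_mul _

section Completion

variable {k : ℤ} {m : ℕ} {S : Set (ℚ × ℚ)} (Φ : MeroJacobiForm k m S) {E D : ℚ × ℚ → ℂ → ℂ}
  (hED : IsLaurentData m S Φ.toFun E D)
include hED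

lemma gaussianPart_moebius {τ : ℂ} (hτ : 0 < τ.im) {a b c d : ℤ} (hdet : a * d - b * c = 1)
    {s : ℚ × ℚ} (hs : s ∈ S) (z : ℂ) :
    gaussianPart m ((a * τ + b) / (c * τ + d)) (zpt s ((a * τ + b) / (c * τ + d)))
        (E s ((a * τ + b) / (c * τ + d))) (D s ((a * τ + b) / (c * τ + d))) (z / (c * τ + d)) =
      (c * τ + d) ^ k * ee (m * c * z ^ 2 / (c * τ + d)) * gaussianPart m τ
        (zpt (slAct a b c d s) τ) (E (slAct a b c d s) τ) (D (slAct a b c d s) τ) z := by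
  have hj := intCast_mul_add_ne_zero hτ hdet
  have hτ' := im_moebius_pos hτ hdet
  have hs' : slAct a b c d s ∈ S := Φ.sl_inv s hs a b c d hdet
  have hW (z : ℂ) : gaussianWeight m ((a * τ + b) / (c * τ + d))
      (zpt s ((a * τ + b) / (c * τ + d))) (z / (c * τ + d)) =
      (c * τ + d) ^ (-k) * ((c * τ + d) ^ k * ee (m * c * z ^ 2 / (c * τ + d))) *
        gaussianWeight m τ (zpt (slAct a b c d s) τ) z := by
    rw [zpt_moebius hτ hdet, gaussianWeight_moebius hτ hdet, ← mul_assoc, ← zpow_add₀ hj,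
      neg_add_cancel, zpow_zero, one_mul]
  simpa only [add_zero] using gaussianPart_comp_add_div (w := 0)
    (C := fun z => (c * τ + d) ^ k * ee (m * c * z ^ 2 / (c * τ + d)))
    (hED.hasPrincipalPart_div_gaussianWeight hs' hτ)
    (hED.hasPrincipalPart_div_gaussianWeight hs hτ') hj
    (by rw [add_zero, zpt_moebius hτ hdet]) (zpow_ne_zero (-k) hj)
    (fun _ => mul_ne_zero (zpow_ne_zero k hj) (ee_ne_zero _))
    (by simpa only [add_zero] using fun z => Φ.modular τ hτ z a b c d hdet)
    (by simpa only [add_zero] using hW) z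

lemma modularLaw_gaussianSum : ModularLaw k m (gaussianSum m S E D) := by
  intro τ hτ z a b c d hdet
  rw [gaussianSum, gaussianSum, ← tsum_mul_left,
    ← (slEquiv Φ hdet).tsum_eq fun s : S => (c * τ + d) ^ k * ee (m * c * z ^ 2 / (c * τ + d)) *
      gaussianPart m τ (zpt s τ) (E s τ) (D s τ) z]
  exact tsum_congr fun s => gaussianPart_moebius Φ hED hτ hdet s.2 z

variable (hm : m ≠ 0) {T : Finset (ℚ × ℚ)} (hT : IsRepSet S T) {h : ℤ → ℂ → ℂ}
  (hh : IsCanonCoeff m Φ.toFun h)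
include hm hT hh

lemma completedFinitePart_eq_sub {τ z : ℂ} (hτ : 0 < τ.im) (hz : z ∉ polarPoints S τ) :
    completedFinitePart m T h E D τ z = Φ.toFun τ z - gaussianSum m S E D τ z := by
  rw [toFun_eq_sum_mul_jTheta_add_sum hm Φ hT hh hED hτ
    (isPolarPart_gaussianPolarPart_one hm hτ) (isPolarPart_gaussianPolarPart_two hm hτ) hz,
    gaussianSum_eq hm Φ hED hτ hT hz, add_sub_cancel_right]
  simp only [completedFinitePart, mul_left_comm _ (m : ℂ), mul_assoc]

lemma modularLaw_completedFinitePart : ModularLaw k m (completedFinitePart m T h E D) := by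
  intro τ hτ z a b c d hdet
  have hτ' := im_moebius_pos hτ hdet
  have hj := intCast_mul_add_ne_zero hτ hdet
  have hcont := (differentiable_completedFinitePart hm T h E D hτ).continuous
  have hcont' := (differentiable_completedFinitePart hm T h E D hτ').continuous
  have hee : Continuous fun z : ℂ => ee (m * c * z ^ 2 / (c * τ + d)) :=
    differentiable_ee.continuous.comp (by fun_prop)
  have hdense : Dense (polarPoints S τ)ᶜ := (S.to_countable.image _).dense_compl ℝ
  refine congrFun ((hcont'.comp (continuous_id.div_const _)).ext_on hdense
    ((continuous_const.mul hee).mul hcont) fun z hz => ?_) z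
  have hz' : z / (c * τ + d) ∉ polarPoints S ((a * τ + b) / (c * τ + d)) := by
    rintro ⟨s, hs, heq⟩
    simp only [zpt_moebius hτ hdet, div_left_inj' hj] at heq
    exact hz ⟨_, Φ.sl_inv s hs a b c d hdet, heq⟩
  simp only [Function.comp_apply, id_eq, Pi.mul_apply]
  rw [completedFinitePart_eq_sub Φ hED hm hT hh hτ' hz',
    completedFinitePart_eq_sub Φ hED hm hT hh hτ hz, Φ.modular τ hτ z a b c d hdet,
    modularLaw_gaussianSum Φ hED τ hτ z a b c d hdet, mul_sub]

end Completion

lemma MeroJacobiForm.exists_isRepSet {k : ℤ} {m : ℕ} {S : Set (ℚ × ℚ)}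
    (Φ : MeroJacobiForm k m S) : ∃ T : Finset (ℚ × ℚ), IsRepSet S T := by
  refine ⟨Φ.finite_classes.toFinset, fun s hs => ((Set.Finite.mem_toFinset _).1 hs).1,
    fun s hs => ⟨(Int.fract s.1, Int.fract s.2), ⟨?_, ⌊s.1⌋, ⌊s.2⌋, ?_, ?_⟩, ?_⟩⟩
  · refine (Set.Finite.mem_toFinset _).2 ⟨?_, Int.fract_nonneg _, Int.fract_lt_one _,
      Int.fract_nonneg _, Int.fract_lt_one _⟩
    simpa [Int.fract, sub_eq_add_neg] using Φ.lattice_inv s hs (-⌊s.1⌋) (-⌊s.2⌋)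
  · exact (Int.fract_add_floor _).symm
  · exact (Int.fract_add_floor _).symm
  · rintro t ⟨ht, lam, mu, h1, h2⟩
    obtain ⟨-, h3, h4, h5, h6⟩ := (Set.Finite.mem_toFinset _).1 ht
    exact Prod.ext (Int.fract_eq_iff.2 ⟨h3, h4, lam, by rw [h1]; ring⟩).symm
      (Int.fract_eq_iff.2 ⟨h5, h6, mu, by rw [h2]; ring⟩).symm

lemma IsCanonCoeff.add_two_mul {k : ℤ} {m : ℕ} (hm : m ≠ 0) {S : Set (ℚ × ℚ)}
    {Φ : MeroJacobiForm k m S} {h : ℤ → ℂ → ℂ} (hh : IsCanonCoeff m Φ.toFun h) (l : ℤ) {τ : ℂ}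
    (hτ : 0 < τ.im) : h (l + 2 * m) τ = h l τ := by
  obtain ⟨T, hT⟩ := Φ.exists_isRepSet
  exact (hasCanonCoeff_toFun Φ hT hh hτ).add_two_mul hm (Φ.elliptic τ hτ) l

/-- Theorem (canonical decomposition and mock modularity, double poles): for a meromorphic
Jacobi form of weight `k` and index `m` with poles of order at most 2 supported on `S`:
(1) the canonical Fourier coefficients are `2m`-periodic and `φ` equals its finite part plus
`∑_{s ∈ S/ℤ²} (D_s·A^s_m + E_s·B^s_m)` away from the poles; (2) the completed finite part
`φ̂^F = ∑_ℓ ĥ_ℓ·θ_{m,ℓ}` with `ĥ_ℓ = h_ℓ - ∑_s (D_s·Θ^{s,*}_{m,ℓ} + m·E_s·ϑ^{s,*}_{m,ℓ})`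
transforms like a Jacobi form of weight `k` and index `m` as well as satisfying the
index-`m` elliptic law. -/
theorem meromorphic_jacobi_decomposition_double_poles (k : ℤ) (m : ℕ) (hm : 0 < m)
    (S : Set (ℚ × ℚ)) (Φ : MeroJacobiForm k m S) (hpoles : HasAtMostDoublePoles Φ)
    (h : ℤ → ℂ → ℂ) (hh : IsCanonCoeff m Φ.toFun h)
    (E D : ℚ × ℚ → ℂ → ℂ) (hED : IsLaurentData m S Φ.toFun E D) :
    ((∀ l : ℤ, ∀ τ : ℂ, 0 < τ.im → h (l + 2 * (m : ℤ)) τ = h l τ) ∧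
     (∀ T : Finset (ℚ × ℚ), IsRepSet S T → ∀ τ : ℂ, 0 < τ.im → ∀ z : ℂ,
        (∀ s ∈ S, z ≠ zpt s τ) →
        Φ.toFun τ z = finitePart m h τ z +
          ∑ t ∈ T, (D t τ * AppellA m t τ z + E t τ * AppellB m t τ z))) ∧
    (∀ T : Finset (ℚ × ℚ), IsRepSet S T →
      ModularLaw k m (fun τ z =>
        ∑ l ∈ Finset.range (2 * m),
          (h (l : ℤ) τ -
              ∑ t ∈ T, (D t τ * ThStar m t (l : ℤ) τ + (m : ℂ) * E t τ * thSstar m t (l : ℤ) τ)) *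
            jTheta m (l : ℤ) τ z)) :=
  ⟨⟨fun l _ hτ => hh.add_two_mul hm.ne' l hτ, fun _ hT _ hτ _ hz =>
    toFun_eq_finitePart_add_appell hm.ne' Φ hT hh hED hτ (notMem_polarPoints.2 hz)⟩,
    fun _ hT => modularLaw_completedFinitePart Φ hED hm.ne' hT hh⟩
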